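/- arXiv:1010.4613 — 4 statements merged into one kernel-verified Lean document; each statement's English description precedes it below -/
import Mathlib

section
/- Let n ≥ 3 and let N be a natural number with the Ramsey property N → (n, n)³, i.e., for every function from the 3-element subsets of a set of N elements to Bool there is an n-element subset all of whose 3-element subsets receive the same value. Then every family of N pairwise distinct, pairwise noncrossing nonempty compact convex subsets of ℝ² in general position, with no two members tangent and no line tangent to three members, contains a subfamily of n sets in convex position. -/
open Set

noncomputable section

/-- The Euclidean plane. -/
abbrev Plane : Type := EuclideanSpace ℝ (Fin 2)

/-- The 2×2 determinant of two plane vectors. -/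
def det2 (u v : Plane) : ℝ := u 0 * v 1 - u 1 * v 0

/-- A convex body in the plane: nonempty, compact and convex. -/
def ConvexBody2 (A : Set Plane) : Prop := A.Nonempty ∧ IsCompact A ∧ Convex ℝ A

/-- A family of sets is in convex position if removing any member changes the
convex hull of the union of the family. -/
def ConvexPos (F : Set (Set Plane)) : Prop :=
  ∀ A ∈ F, convexHull ℝ (⋃₀ F) ≠ convexHull ℝ (⋃₀ (F \ {A}))

/-- A family is in general position if every 3-element subfamily is in convex position. -/
def GenPos (F : Set (Set Plane)) : Prop :=
  ∀ G ⊆ F, G.ncard = 3 → ConvexPos G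

/-- Two sets are noncrossing if both set differences are connected. -/
def NoncrossingPair (A B : Set Plane) : Prop := IsConnected (A \ B) ∧ IsConnected (B \ A)

/-- Two convex bodies are tangent if they intersect but their interiors are disjoint. -/
def TangentBodies (A B : Set Plane) : Prop :=
  (A ∩ B).Nonempty ∧ interior A ∩ interior B = ∅

/-- The line `{x | f x = c}` (for `f ≠ 0`) is tangent to `A`:
it meets `A` and `A` lies in one of the two closed half-planes it bounds. -/
def TangentLineTo (f : Plane →ₗ[ℝ] ℝ) (c : ℝ) (A : Set Plane) : Prop :=
  (∃ x ∈ A, f x = c) ∧ ((∀ x ∈ A, f x ≤ c) ∨ (∀ x ∈ A, c ≤ f x))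

/-- No line is tangent to three distinct members of the family. -/
def NoTripleTangentLine (F : Set (Set Plane)) : Prop :=
  ∀ f : Plane →ₗ[ℝ] ℝ, f ≠ 0 → ∀ c : ℝ, ∀ A ∈ F, ∀ B ∈ F, ∀ C ∈ F,
    A ≠ B → B ≠ C → A ≠ C →
    ¬ (TangentLineTo f c A ∧ TangentLineTo f c B ∧ TangentLineTo f c C)

/-- The ordered triple `(A₁, A₂, A₃)` is counterclockwise oriented. -/
def CCWOriented (A₁ A₂ A₃ : Set Plane) : Prop :=
  ∃ a₁ ∈ A₁ ∩ frontier (convexHull ℝ (A₁ ∪ A₂ ∪ A₃)),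
  ∃ a₂ ∈ A₂ ∩ frontier (convexHull ℝ (A₁ ∪ A₂ ∪ A₃)),
  ∃ a₃ ∈ A₃ ∩ frontier (convexHull ℝ (A₁ ∪ A₂ ∪ A₃)),
    0 < det2 (a₂ - a₁) (a₃ - a₁)

/-- The ordered triple `(A₁, A₂, A₃)` is clockwise oriented. -/
def CWOriented (A₁ A₂ A₃ : Set Plane) : Prop :=
  ∃ a₁ ∈ A₁ ∩ frontier (convexHull ℝ (A₁ ∪ A₂ ∪ A₃)),
  ∃ a₂ ∈ A₂ ∩ frontier (convexHull ℝ (A₁ ∪ A₂ ∪ A₃)),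
  ∃ a₃ ∈ A₃ ∩ frontier (convexHull ℝ (A₁ ∪ A₂ ∪ A₃)),
    det2 (a₂ - a₁) (a₃ - a₁) < 0

/-- An affine line in the plane: an affine subspace with 1-dimensional direction. -/
def IsLine (L : AffineSubspace ℝ Plane) : Prop := Module.finrank ℝ L.direction = 1

/-- `L` is a transversal line of the family `F`. -/
def TransversalLine (L : AffineSubspace ℝ Plane) (F : Set (Set Plane)) : Prop :=
  IsLine L ∧ ∀ A ∈ F, ((L : Set Plane) ∩ A).Nonempty

/-- Linear functional in direction `t`. -/
def lin (t : ℝ) (x : Plane) : ℝ := Real.cos t * x 0 + Real.sin t * x 1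

/-- Support function. -/
def supp (A : Set Plane) (t : ℝ) : ℝ := sSup (lin t '' A)

theorem lin_continuous (t : ℝ) : Continuous (lin t) := by
  unfold lin; fun_prop

theorem lin_comb (t : ℝ) (a b : ℝ) (x y : Plane) :
    lin t (a • x + b • y) = a * lin t x + b * lin t y := by
  simp [lin]; ring

theorem lin_le_supp {A : Set Plane} (hA : ConvexBody2 A) (t : ℝ) {x : Plane} (hx : x ∈ A) :
    lin t x ≤ supp A t := by
  obtain ⟨y, hy, h1, h2⟩ :=
    hA.2.1.exists_sSup_image_eq_and_ge hA.1 (lin_continuous t).continuousOn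
  unfold supp
  rw [h1]; exact h2 x hx

theorem exists_supp {A : Set Plane} (hA : ConvexBody2 A) (t : ℝ) :
    ∃ x ∈ A, lin t x = supp A t := by
  obtain ⟨y, hy, h1⟩ :=
    hA.2.1.exists_sSup_image_eq hA.1 (lin_continuous t).continuousOn
  exact ⟨y, hy, h1.symm⟩

theorem lin_add_int (t : ℝ) (n : ℤ) : lin (t + n * (2 * Real.pi)) = lin t := by
  funext x; simp [lin, Real.cos_add_int_mul_two_pi, Real.sin_add_int_mul_two_pi]

theorem supp_add_int (A : Set Plane) (t : ℝ) (n : ℤ) :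
    supp A (t + n * (2 * Real.pi)) = supp A t := by
  simp [supp, lin_add_int]

theorem exists_dir {K : Set Plane} (hne : K.Nonempty) (hc : IsClosed K) (hK : Convex ℝ K)
    {x : Plane} (hx : x ∉ K) : ∃ t, ∀ y ∈ K, lin t y < lin t x := by
  obtain ⟨f, u, h1, h2⟩ := geometric_hahn_banach_closed_point hK hc hx
  have hf : ∀ y : Plane, f y = f (EuclideanSpace.single 0 1) * y 0
      + f (EuclideanSpace.single 1 1) * y 1 := by
    intro y
    have : y = y 0 • EuclideanSpace.single 0 (1:ℝ) + y 1 • EuclideanSpace.single 1 (1:ℝ) := by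
      ext i; fin_cases i <;> simp
    conv_lhs => rw [this]
    simp only [map_add, map_smul, smul_eq_mul]; ring
  set z : ℂ := ⟨f (EuclideanSpace.single 0 1), f (EuclideanSpace.single 1 1)⟩ with hz
  have hre : ‖z‖ * Real.cos z.arg = f (EuclideanSpace.single 0 1) := Complex.norm_mul_cos_arg z
  have him : ‖z‖ * Real.sin z.arg = f (EuclideanSpace.single 1 1) := Complex.norm_mul_sin_arg z
  have hl : ∀ y, f y = ‖z‖ * lin z.arg y := by
    intro y; rw [hf y, ← hre, ← him]; unfold lin; ring
  refine ⟨z.arg, fun y hy => ?_⟩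
  have := (h1 y hy).trans h2
  rw [hl, hl] at this
  exact lt_of_mul_lt_mul_left this (norm_nonneg _)

theorem shift_mem (p t : ℝ) : ∃ n : ℤ, p < t + n * (2 * Real.pi) ∧
    t + n * (2 * Real.pi) ≤ p + 2 * Real.pi := by
  obtain ⟨n, hn, -⟩ := existsUnique_add_zsmul_mem_Ioc Real.two_pi_pos t p
  refine ⟨n, ?_⟩
  simpa [zsmul_eq_mul] using hn

theorem arc_conv {B : Set Plane} (hB : ConvexBody2 B) {x : Plane} {u v t : ℝ}
    (hut : u < t) (htv : t < v) (huv : v - u < Real.pi)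
    (hu : supp B u < lin u x) (hv : supp B v < lin v x) : supp B t < lin t x := by
  obtain ⟨b, hb, hbt⟩ := exists_supp hB t
  have h1 : 0 < Real.sin (v - t) := Real.sin_pos_of_pos_of_lt_pi (by linarith) (by linarith)
  have h2 : 0 < Real.sin (t - u) := Real.sin_pos_of_pos_of_lt_pi (by linarith) (by linarith)
  have h3 : 0 < Real.sin (v - u) := Real.sin_pos_of_pos_of_lt_pi (by linarith) (by linarith)
  have key : ∀ y, Real.sin (v - u) * lin t y
      = Real.sin (v - t) * lin u y + Real.sin (t - u) * lin v y := by
    intro y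
    have e1 : Real.sin (v - u) * Real.cos t
        = Real.sin (v - t) * Real.cos u + Real.sin (t - u) * Real.cos v := by
      simp only [Real.sin_sub]; ring
    have e2 : Real.sin (v - u) * Real.sin t
        = Real.sin (v - t) * Real.sin u + Real.sin (t - u) * Real.sin v := by
      simp only [Real.sin_sub]; ring
    unfold lin
    linear_combination (y 0) * e1 + (y 1) * e2
  rw [← hbt]
  have a1 := (lin_le_supp hB u hb).trans_lt hu
  have a2 := (lin_le_supp hB v hb).trans_lt hv
  have := add_lt_add (mul_lt_mul_of_pos_left a1 h1) (mul_lt_mul_of_pos_left a2 h2)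
  rw [← key, ← key] at this
  exact lt_of_mul_lt_mul_left this h3.le

theorem noninterleave {A B : Set Plane} (hA : ConvexBody2 A) (hB : ConvexBody2 B)
    (hc : IsPreconnected (A \ B)) {t1 t2 t3 t4 : ℝ} (h12 : t1 < t2) (h23 : t2 < t3)
    (h34 : t3 < t4) (h41 : t4 < t1 + 2 * Real.pi)
    (h1 : supp B t1 < supp A t1) (h2 : supp A t2 ≤ supp B t2)
    (h3 : supp B t3 < supp A t3) (h4 : supp A t4 ≤ supp B t4) : False := by
  let V : ℝ → ℝ → Set Plane := fun r s => {x | ∃ t, r < t ∧ t < s ∧ supp B t < lin t x}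
  have hV : ∀ r s, IsOpen (V r s) := by
    intro r s
    have : V r s = ⋃ t ∈ Set.Ioo r s, {x | supp B t < lin t x} := by
      ext x; simp [V, and_assoc]
    rw [this]
    exact isOpen_biUnion fun t _ => isOpen_lt continuous_const (lin_continuous t)
  have per : ∀ (C : Set Plane) t, supp C (t + 2 * Real.pi) = supp C t := fun C t => by
    simpa using supp_add_int C t 1
  have perl : ∀ t, lin (t + 2 * Real.pi) = lin t := fun t => by
    simpa using lin_add_int t 1
  have no2 : ∀ x ∈ A, ¬ supp B t2 < lin t2 x := fun x hx =>
    not_lt.2 ((lin_le_supp hA t2 hx).trans h2)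
  have no4 : ∀ x ∈ A, ¬ supp B t4 < lin t4 x := fun x hx =>
    not_lt.2 ((lin_le_supp hA t4 hx).trans h4)
  have hcover : A \ B ⊆ V t2 t4 ∪ V t4 (t2 + 2 * Real.pi) := by
    rintro x ⟨hxA, hxB⟩
    obtain ⟨t, ht⟩ := exists_dir hB.1 hB.2.1.isClosed hB.2.2 hxB
    obtain ⟨b, hb, hbt⟩ := exists_supp hB t
    have ht' := ht b hb
    rw [hbt] at ht'
    obtain ⟨n, hn1, hn2⟩ := shift_mem t2 t
    rw [← supp_add_int B t n, ← lin_add_int t n] at ht'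
    generalize t + n * (2 * Real.pi) = s at *
    rcases lt_trichotomy s t4 with h | h | h
    · exact Or.inl ⟨s, hn1, h, ht'⟩
    · subst h; exact absurd ht' (no4 x hxA)
    · rcases hn2.lt_or_eq with h' | h'
      · exact Or.inr ⟨s, h, h', ht'⟩
      · rw [h', per, perl] at ht'; exact absurd ht' (no2 x hxA)
  have outB : ∀ {x t}, supp B t < lin t x → x ∉ B := fun h hx =>
    absurd (lin_le_supp hB _ hx) (not_le.2 h)
  obtain ⟨a1, ha1, e1⟩ := exists_supp hA t1
  obtain ⟨a3, ha3, e3⟩ := exists_supp hA t3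
  rw [← e1] at h1
  rw [← e3] at h3
  obtain ⟨x, ⟨hxA, hxB⟩, ⟨u, hu1, hu2, hu⟩, ⟨v, hv1, hv2, hv⟩⟩ :=
    hc (V t2 t4) (V t4 (t2 + 2 * Real.pi)) (hV _ _) (hV _ _) hcover
    ⟨a3, ⟨ha3, outB h3⟩, ⟨t3, h23, h34, h3⟩⟩
    ⟨a1, ⟨ha1, outB h1⟩, ⟨t1 + 2 * Real.pi, h41, by linarith, by rw [per, perl]; exact h1⟩⟩
  rcases lt_trichotomy (v - u) Real.pi with h | h | h
  · exact no4 x hxA (arc_conv hB hu2 hv1 h hu hv)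
  · obtain ⟨b, hb⟩ := hB.1
    have b1 := lin_le_supp hB u hb
    have b2 := lin_le_supp hB v hb
    have hneg : ∀ y, lin v y = - lin u y := by
      intro y
      have : v = u + Real.pi := by linarith
      rw [this]; simp [lin]; ring
    rw [hneg] at b2 hv
    linarith
  · have : supp B (t2 + 2 * Real.pi) < lin (t2 + 2 * Real.pi) x :=
      arc_conv hB (u := v) (v := u + 2 * Real.pi) hv2 (by linarith) (by linarith) hv
        (by rw [per, perl]; exact hu)
    rw [per, perl] at this
    exact no2 x hxA this

/-- `H i` strictly dominates `H j` and `H k` at `t`. -/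
def Peak {ι : Type*} (H : ι → ℝ → ℝ) (i j k : ι) (t : ℝ) : Prop := H j t < H i t ∧ H k t < H i t

/-- There are strict peaks in counterclockwise order. -/
def Ccw {ι : Type*} (H : ι → ℝ → ℝ) (i j k : ι) : Prop :=
  ∃ x y z, x < y ∧ y < z ∧ z < x + 2 * Real.pi ∧ Peak H i j k x ∧ Peak H j i k y ∧ Peak H k i j z

theorem Ccw.rot {ι : Type*} {H : ι → ℝ → ℝ} (hper : ∀ i t (n : ℤ), H i (t + n * (2 * Real.pi)) = H i t)
    {i j k : ι} (h : Ccw H i j k) : Ccw H j k i := by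
  obtain ⟨x, y, z, h1, h2, h3, p1, p2, p3⟩ := h
  have per : ∀ i t, H i (t + 2 * Real.pi) = H i t := fun i t => by simpa using hper i t 1
  refine ⟨y, z, x + 2 * Real.pi, h2, h3, by linarith, p2.symm, p3.symm, ?_⟩
  unfold Peak at *
  simpa only [per] using p1

theorem ccw_or {ι : Type*} {H : ι → ℝ → ℝ} (hper : ∀ i t (n : ℤ), H i (t + n * (2 * Real.pi)) = H i t)
    {i j k : ι} {x y z : ℝ} (hx : Peak H i j k x) (hy : Peak H j i k y) (hz : Peak H k i j z) :
    Ccw H i j k ∨ Ccw H i k j := by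
  have per : ∀ i t, H i (t + 2 * Real.pi) = H i t := fun i t => by simpa using hper i t 1
  obtain ⟨n, hn1, hn2⟩ := shift_mem x y
  obtain ⟨m, hm1, hm2⟩ := shift_mem x z
  have hy' : Peak H j i k (y + n * (2 * Real.pi)) := by
    unfold Peak at *; simpa only [hper] using hy
  have hz' : Peak H k i j (z + m * (2 * Real.pi)) := by
    unfold Peak at *; simpa only [hper] using hz
  generalize y + n * (2 * Real.pi) = y' at *
  generalize z + m * (2 * Real.pi) = z' at *
  have hy2 : y' < x + 2 * Real.pi := by
    refine lt_of_le_of_ne hn2 fun h => ?_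
    unfold Peak at *
    simp only [h, per] at hy'
    linarith [hx.1, hy'.1]
  have hz2 : z' < x + 2 * Real.pi := by
    refine lt_of_le_of_ne hm2 fun h => ?_
    unfold Peak at *
    simp only [h, per] at hz'
    linarith [hx.2, hz'.1]
  rcases lt_trichotomy y' z' with h | h | h
  · exact Or.inl ⟨x, y', z', hn1, h, hz2, hx, hy', hz'⟩
  · subst h
    unfold Peak at *
    linarith [hy'.2, hz'.2]
  · exact Or.inr ⟨x, z', y', hm1, h, hy2, hx.symm, hz', hy'⟩

theorem peak_list {ι : Type*} {H : ι → ℝ → ℝ} (hper : ∀ i t (n : ℤ), H i (t + n * (2 * Real.pi)) = H i t)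
    (hW : ∀ a b, a ≠ b → ∀ t1 t2 t3 t4 : ℝ, t1 < t2 → t2 < t3 → t3 < t4 →
      t4 < t1 + 2 * Real.pi → H b t1 < H a t1 → H a t2 ≤ H b t2 → H b t3 < H a t3 →
      H a t4 ≤ H b t4 → False)
    (hne : ∀ a b, a ≠ b → ∃ t, H b t < H a t) (i : ι) (l : List ι) (hi : ∀ b ∈ l, i ≠ b)
    (hl : l.Pairwise (fun b a => Ccw H i b a)) : ∃ t, ∀ b ∈ l, H b t < H i t := by
  have per : ∀ i t, H i (t + 2 * Real.pi) = H i t := fun i t => by simpa using hper i t 1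
  induction l using List.reverseRecOn with
  | nil => exact ⟨0, by simp⟩
  | append_singleton l a ih =>
    rw [List.pairwise_append] at hl
    obtain ⟨hl1, -, hl2⟩ := hl
    have hl3 : ∀ b ∈ l, Ccw H i b a := fun b hb => hl2 b hb a (by simp)
    have hia : i ≠ a := hi a (by simp)
    obtain ⟨p, hp⟩ := ih (fun b hb => hi b (by simp [hb])) hl1
    by_cases hpa : H a p < H i p
    · exact ⟨p, by simpa [or_imp, forall_and] using ⟨hp, hpa⟩⟩
    rw [not_lt] at hpa
    rcases l.eq_nil_or_concat' with rfl | ⟨l', b', hl'⟩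
    · obtain ⟨t, ht⟩ := hne i a hia
      exact ⟨t, by simpa using ht⟩
    have hlne : l ≠ [] := by rw [hl']; simp
    have key : ∀ b : ι, ∃ q, b ∈ l → p < q ∧ q < p + 2 * Real.pi ∧ H a q < H i q ∧ H b q < H i q ∧
        ∀ t, p < t → t < q → H i t ≤ H b t → H i t ≤ H a t := by
      intro b
      by_cases hb : b ∈ l
      swap
      · exact ⟨0, fun h => absurd h hb⟩
      obtain ⟨x, y, z, h1, h2, h3, p1, p2, p3⟩ := hl3 b hb
      obtain ⟨n, hn1, hn2⟩ := shift_mem p x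
      have hib : i ≠ b := hi b (by simp [hb])
      have hab : a ≠ b := by
        rintro rfl; exact absurd p2.2 (lt_irrefl _)
      have q1 : Peak H i b a (x + n * (2 * Real.pi)) := by
        unfold Peak at *; simpa only [hper] using p1
      have q2 : Peak H b i a (y + (n - 1 : ℤ) * (2 * Real.pi)) := by
        unfold Peak at *; simpa only [hper] using p2
      have q3 : Peak H a i b (z + (n - 1 : ℤ) * (2 * Real.pi)) := by
        unfold Peak at *; simpa only [hper] using p3
      have q0 : Peak H i b a (x + (n - 1 : ℤ) * (2 * Real.pi)) := by
        unfold Peak at *; simpa only [hper] using p1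
      have hq : x + n * (2 * Real.pi) = x + (n - 1 : ℤ) * (2 * Real.pi) + 2 * Real.pi := by
        push_cast; ring
      have h1' : x + (n - 1 : ℤ) * (2 * Real.pi) < y + (n - 1 : ℤ) * (2 * Real.pi) := by linarith
      have h2' : y + (n - 1 : ℤ) * (2 * Real.pi) < z + (n - 1 : ℤ) * (2 * Real.pi) := by linarith
      have h3' : z + (n - 1 : ℤ) * (2 * Real.pi) < x + n * (2 * Real.pi) := by linarith
      generalize x + (n - 1 : ℤ) * (2 * Real.pi) = q' at *
      generalize x + n * (2 * Real.pi) = q at *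
      generalize y + (n - 1 : ℤ) * (2 * Real.pi) = y' at *
      generalize z + (n - 1 : ℤ) * (2 * Real.pi) = z' at *
      unfold Peak at *
      have hq2 : q < p + 2 * Real.pi := by
        refine lt_of_le_of_ne hn2 fun h => ?_
        simp only [h, per] at q1
        linarith [q1.2]
      refine ⟨q, fun _ => ⟨hn1, hq2, q1.2, q1.1, fun t hpt htq hbt => ?_⟩⟩
      by_contra hat
      rw [not_le] at hat
      have hpb := hp b hb
      have hpy : p < y' := by
        rcases lt_trichotomy p y' with h | h | h
        · exact h
        · subst h; linarith [q2.1]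
        · exact (hW i b hib q' y' p t h1' h hpt (by linarith) q0.1 q2.1.le hpb hbt).elim
      have hzt : z' < t := by
        rcases lt_trichotomy z' t with h | h | h
        · exact h
        · subst h; linarith [q3.1]
        · exact (hW i a hia q' p t z' (by linarith) hpt h (by linarith) q0.2 hpa hat q3.1.le).elim
      exact hW a b hab p y' z' t hpy h2' hzt (by linarith) (by linarith) q2.2.le q3.2 (by linarith)
    classical
    choose q hq using key
    obtain ⟨b0, hb0, hmin⟩ := l.toFinset.exists_min_image q (by simpa using hlne)
    rw [List.mem_toFinset] at hb0
    obtain ⟨c1, c2, c3, c4, -⟩ := hq b0 hb0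
    refine ⟨q b0, ?_⟩
    intro b hb
    rw [List.mem_append, List.mem_singleton] at hb
    rcases hb with hb | rfl
    · obtain ⟨d1, d2, d3, d4, d5⟩ := hq b hb
      rcases (hmin b (by simpa using hb)).lt_or_eq with h | h
      · by_contra hcon
        exact absurd (d5 _ c1 h (not_lt.1 hcon)) (not_le.2 c3)
      · rw [h]; exact d4
    · exact c3

theorem compact_join {A B : Set Plane} (hA : ConvexBody2 A) (hB : ConvexBody2 B) :
    IsClosed (convexHull ℝ (A ∪ B)) := by
  rw [hA.2.2.convexHull_union hB.2.2 hA.1 hB.1]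
  have : convexJoin ℝ A B = (fun p : Plane × Plane × ℝ => AffineMap.lineMap p.1 p.2.1 p.2.2) ''
      (A ×ˢ B ×ˢ Set.Icc (0:ℝ) 1) := by
    ext x
    simp only [mem_convexJoin, segment_eq_image_lineMap, Set.mem_image, Set.mem_prod, Prod.exists]
    constructor
    · rintro ⟨a, ha, b, hb, t, ht, rfl⟩
      exact ⟨a, b, t, ⟨ha, hb, ht⟩, rfl⟩
    · rintro ⟨a, b, t, ⟨ha, hb, ht⟩, rfl⟩
      exact ⟨a, ha, b, hb, t, ht, rfl⟩
  rw [this]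
  refine ((hA.2.1.prod (hB.2.1.prod isCompact_Icc)).image ?_).isClosed
  simp only [AffineMap.lineMap_apply_module]
  fun_prop

theorem triple_peak {A B C : Set Plane} (hA : ConvexBody2 A) (hB : ConvexBody2 B)
    (hC : ConvexBody2 C) (hAB : A ≠ B) (hAC : A ≠ C) (h : ConvexPos {A, B, C}) :
    ∃ t, supp B t < supp A t ∧ supp C t < supp A t := by
  by_contra hcon
  push Not at hcon
  apply h A (by simp)
  have e1 : ⋃₀ ({A, B, C} : Set (Set Plane)) = A ∪ (B ∪ C) := by simp
  have e2 : ({A, B, C} : Set (Set Plane)) \ {A} = {B, C} := by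
    ext X; simp only [Set.mem_diff, Set.mem_insert_iff, Set.mem_singleton_iff]
    constructor
    · tauto
    · rintro (rfl | rfl)
      · exact ⟨Or.inr (Or.inl rfl), hAB.symm⟩
      · exact ⟨Or.inr (Or.inr rfl), hAC.symm⟩
  have e3 : ⋃₀ ({B, C} : Set (Set Plane)) = B ∪ C := by simp
  rw [e1, e2, e3]
  apply subset_antisymm
  · apply convexHull_min _ (convex_convexHull ℝ _)
    apply Set.union_subset _ (subset_convexHull ℝ _)
    intro x hx
    by_contra hxK
    obtain ⟨t, ht⟩ := exists_dir
      ((hB.1.mono Set.subset_union_left).mono (subset_convexHull ℝ _))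
      (compact_join hB hC) (convex_convexHull ℝ _) hxK
    have hxs := lin_le_supp hA t hx
    obtain ⟨b, hb, hbe⟩ := exists_supp hB t
    obtain ⟨c, hc, hce⟩ := exists_supp hC t
    have t1 := ht b (subset_convexHull ℝ _ (Or.inl hb))
    have t2 := ht c (subset_convexHull ℝ _ (Or.inr hc))
    have := hcon t (by linarith)
    linarith
  · exact convexHull_mono Set.subset_union_right

theorem convexPos_of_peaks {F : Set (Set Plane)} (hF : ∀ A ∈ F, ConvexBody2 A)
    (h : ∀ A ∈ F, ∃ t, ∀ B ∈ F, B ≠ A → supp B t < supp A t) : ConvexPos F := by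
  intro A hAF heq
  obtain ⟨t, ht⟩ := h A hAF
  obtain ⟨x, hx, hxt⟩ := exists_supp (hF A hAF) t
  have hx1 : x ∈ convexHull ℝ (⋃₀ F) := subset_convexHull ℝ _ ⟨A, hAF, hx⟩
  rw [heq] at hx1
  have hcv : Convex ℝ {y : Plane | lin t y < supp A t} := by
    intro y hy z hz a b ha hb hab
    simp only [Set.mem_setOf_eq] at *
    rw [lin_comb]
    have : supp A t = a * supp A t + b * supp A t := by rw [← add_mul, hab, one_mul]
    rw [this]
    rcases ha.lt_or_eq with h | h
    · exact add_lt_add_of_lt_of_le (mul_lt_mul_of_pos_left hy h) (mul_le_mul_of_nonneg_left hz.le hb)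
    · have hb1 : b = 1 := by linarith
      rw [← h, hb1]; simpa using hz
  have hsub : ⋃₀ (F \ {A}) ⊆ {y : Plane | lin t y < supp A t} := by
    rintro y ⟨B, ⟨hBF, hBA⟩, hy⟩
    exact (lin_le_supp (hF B hBF) t hy).trans_lt (ht B hBF hBA)
  have := convexHull_min hsub hcv hx1
  simp only [Set.mem_setOf_eq] at this
  linarith

theorem triple_unique {N : ℕ} {i j k i' j' k' : Fin N} (h1 : i < j) (h2 : j < k) (h1' : i' < j')
    (h2' : j' < k') (h : ({i, j, k} : Finset (Fin N)) = {i', j', k'}) :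
    i = i' ∧ j = j' ∧ k = k' := by
  have a1 : i ∈ ({i', j', k'} : Finset (Fin N)) := by rw [← h]; simp
  have a2 : j ∈ ({i', j', k'} : Finset (Fin N)) := by rw [← h]; simp
  have a3 : k ∈ ({i', j', k'} : Finset (Fin N)) := by rw [← h]; simp
  simp only [Finset.mem_insert, Finset.mem_singleton] at a1 a2 a3
  omega

/-- If `N` has the Ramsey property `N → (n, n)³`, then any `N` noncrossing convex
bodies in general position (no two tangent, no common tangent line to three)
contain `n` in convex position. -/
theorem convex_position_of_ramsey (n N : ℕ) (hn : 3 ≤ n)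
    (hram : ∀ χ : Finset (Fin N) → Bool, ∃ S : Finset (Fin N), S.card = n ∧
      ∃ b : Bool, ∀ T ⊆ S, T.card = 3 → χ T = b)
    (A : Fin N → Set Plane)
    (hinj : Function.Injective A)
    (hbody : ∀ i, ConvexBody2 (A i))
    (hnc : ∀ i j, i ≠ j → NoncrossingPair (A i) (A j))
    (hgen : GenPos (Set.range A))
    (htan : ∀ i j, i ≠ j → ¬ TangentBodies (A i) (A j))
    (hline : NoTripleTangentLine (Set.range A)) :
    ∃ G ⊆ Set.range A, G.ncard = n ∧ ConvexPos G := by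
  classical
  let H : Fin N → ℝ → ℝ := fun i => supp (A i)
  have hper : ∀ i t (n : ℤ), H i (t + n * (2 * Real.pi)) = H i t := fun i t n =>
    supp_add_int (A i) t n
  have hW : ∀ a b, a ≠ b → ∀ t1 t2 t3 t4 : ℝ, t1 < t2 → t2 < t3 → t3 < t4 →
      t4 < t1 + 2 * Real.pi → H b t1 < H a t1 → H a t2 ≤ H b t2 → H b t3 < H a t3 →
      H a t4 ≤ H b t4 → False := by
    intro a b hab t1 t2 t3 t4 h12 h23 h34 h41 h1 h2 h3 h4
    exact noninterleave (hbody a) (hbody b) (hnc a b hab).1.isPreconnected h12 h23 h34 h41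
      h1 h2 h3 h4
  have hne : ∀ a b, a ≠ b → ∃ t, H b t < H a t := by
    intro a b hab
    obtain ⟨x, hxa, hxb⟩ := (hnc a b hab).1.nonempty
    obtain ⟨t, ht⟩ := exists_dir (hbody b).1 (hbody b).2.1.isClosed (hbody b).2.2 hxb
    obtain ⟨y, hy, hyt⟩ := exists_supp (hbody b) t
    refine ⟨t, ?_⟩
    have h1 := ht y hy
    have h2 := lin_le_supp (hbody a) t hxa
    simp only [H]
    linarith
  have hpk : ∀ i j k, i ≠ j → i ≠ k → j ≠ k → ∃ t, Peak H i j k t := by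
    intro i j k hij hik hjk
    refine triple_peak (hbody i) (hbody j) (hbody k) (hinj.ne hij) (hinj.ne hik) (hgen _ ?_ ?_)
    · rintro X (rfl | rfl | rfl) <;> exact Set.mem_range_self _
    · exact Set.ncard_eq_three.2 ⟨_, _, _, hinj.ne hij, hinj.ne hik, hinj.ne hjk, rfl⟩
  have hor : ∀ i j k, i ≠ j → i ≠ k → j ≠ k → Ccw H i j k ∨ Ccw H i k j := by
    intro i j k hij hik hjk
    obtain ⟨x, hx⟩ := hpk i j k hij hik hjk
    obtain ⟨y, hy⟩ := hpk j i k hij.symm hjk hik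
    obtain ⟨z, hz⟩ := hpk k i j hik.symm hjk.symm hij
    exact ccw_or hper hx hy hz
  obtain ⟨S, hS, b, hb⟩ := hram fun T =>
    decide (∃ i j k, i < j ∧ j < k ∧ T = {i, j, k} ∧ Ccw H i j k)
  have hcard : ∀ i j k : Fin N, i < j → j < k → ({i, j, k} : Finset (Fin N)).card = 3 := by
    intro i j k hij hjk
    exact Finset.card_eq_three.2 ⟨_, _, _, hij.ne, (hij.trans hjk).ne, hjk.ne, rfl⟩
  have hmain : ∀ i ∈ S, ∃ t, ∀ j ∈ S, j ≠ i → H j t < H i t := by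
    intro i hi
    let l : List (Fin N) := (S.filter (i < ·)).sort (· ≤ ·) ++ (S.filter (· < i)).sort (· ≤ ·)
    have hmem : ∀ j, j ∈ l ↔ j ∈ S ∧ j ≠ i := by
      intro j
      simp only [l, List.mem_append, Finset.mem_sort, Finset.mem_filter]
      constructor
      · rintro (⟨h, h'⟩ | ⟨h, h'⟩)
        · exact ⟨h, h'.ne'⟩
        · exact ⟨h, h'.ne⟩
      · rintro ⟨h, h'⟩
        rcases lt_or_gt_of_ne h' with h'' | h''
        · exact Or.inr ⟨h, h''⟩
        · exact Or.inl ⟨h, h''⟩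
    have hpw : ∀ R : Fin N → Fin N → Prop,
        (∀ x ∈ S, ∀ y ∈ S, i < x → x < y → R x y) →
        (∀ x ∈ S, ∀ y ∈ S, y < i → x < y → R x y) →
        (∀ x ∈ S, ∀ y ∈ S, i < x → y < i → R x y) → l.Pairwise R := by
      intro R h1 h2 h3
      rw [List.pairwise_append]
      refine ⟨?_, ?_, ?_⟩
      · refine List.Pairwise.imp_of_mem ?_ (Finset.sortedLT_sort _).pairwise
        intro x y hx hy hxy
        simp only [Finset.mem_sort, Finset.mem_filter] at hx hy
        exact h1 x hx.1 y hy.1 hx.2 hxy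
      · refine List.Pairwise.imp_of_mem ?_ (Finset.sortedLT_sort _).pairwise
        intro x y hx hy hxy
        simp only [Finset.mem_sort, Finset.mem_filter] at hx hy
        exact h2 x hx.1 y hy.1 hy.2 hxy
      · intro x hx y hy
        simp only [Finset.mem_sort, Finset.mem_filter] at hx hy
        exact h3 x hx.1 y hy.1 hx.2 hy.2
    have hfin : ∃ t, ∀ j ∈ l, H j t < H i t := by
      cases b with
      | true =>
        have hc : ∀ x ∈ S, ∀ y ∈ S, ∀ z ∈ S, x < y → y < z → Ccw H x y z := by
          intro x hx y hy z hz hxy hyz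
          have := hb {x, y, z} (by
            intro w hw; simp only [Finset.mem_insert, Finset.mem_singleton] at hw
            rcases hw with rfl | rfl | rfl <;> assumption) (hcard x y z hxy hyz)
          obtain ⟨x', y', z', h1, h2, h3, h4⟩ := of_decide_eq_true this
          obtain ⟨rfl, rfl, rfl⟩ := triple_unique hxy hyz h1 h2 h3
          exact h4
        refine peak_list hper hW hne i l (fun j hj => ((hmem j).1 hj).2.symm) (hpw _ ?_ ?_ ?_)
        · intro x hx y hy h1 h2
          exact hc i hi x hx y hy h1 h2
        · intro x hx y hy h1 h2
          exact ((hc x hx y hy i hi h2 h1).rot hper).rot hper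
        · intro x hx y hy h1 h2
          exact (hc y hy i hi x hx h2 h1).rot hper
      | false =>
        have hc : ∀ x ∈ S, ∀ y ∈ S, ∀ z ∈ S, x < y → y < z → Ccw H x z y := by
          intro x hx y hy z hz hxy hyz
          have := hb {x, y, z} (by
            intro w hw; simp only [Finset.mem_insert, Finset.mem_singleton] at hw
            rcases hw with rfl | rfl | rfl <;> assumption) (hcard x y z hxy hyz)
          have h' := of_decide_eq_false this
          refine (hor x y z hxy.ne (hxy.trans hyz).ne hyz.ne).resolve_left fun h => h' ?_
          exact ⟨x, y, z, hxy, hyz, rfl, h⟩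
        have := peak_list hper hW hne i l.reverse
          (fun j hj => ((hmem j).1 (List.mem_reverse.1 hj)).2.symm)
          (List.pairwise_reverse.2 (hpw _ ?_ ?_ ?_))
        · simpa using this
        · intro x hx y hy h1 h2
          exact hc i hi x hx y hy h1 h2
        · intro x hx y hy h1 h2
          exact (hc x hx y hy i hi h2 h1).rot hper
        · intro x hx y hy h1 h2
          exact ((hc y hy i hi x hx h2 h1).rot hper).rot hper
    obtain ⟨t, ht⟩ := hfin
    exact ⟨t, fun j hj hji => ht j ((hmem j).2 ⟨hj, hji⟩)⟩
  refine ⟨A '' S, Set.image_subset_range _ _, ?_, convexPos_of_peaks ?_ ?_⟩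
  · rw [Set.ncard_image_of_injective _ hinj, Set.ncard_coe_finset, hS]
  · rintro _ ⟨i, -, rfl⟩; exact hbody i
  · rintro _ ⟨i, hi, rfl⟩
    obtain ⟨t, ht⟩ := hmain i hi
    refine ⟨t, ?_⟩
    rintro _ ⟨j, hj, rfl⟩ hji
    exact ht j hj (fun h => hji (h ▸ rfl))
end
end

section
/- For every n ≥ 3, every finite family of at least (C(2n−5, n−2) + 1) · C(2n−4, n−2) + 1 pairwise disjoint nonempty compact convex subsets of ℝ² in general position contains a subfamily of n sets in convex position, where C(a, b) denotes the binomial coefficient a choose b. -/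
open Set

noncomputable section

/-- All increasing triples of `G` satisfy `R`. -/
def Clq {α : Type*} (key : α → ℝ) (R : α → α → α → Prop) (G : Finset α) : Prop :=
  ∀ i ∈ G, ∀ j ∈ G, ∀ k ∈ G, key i < key j → key j < key k → R i j k

/-- Transitivity of a triple relation. -/
def Trn {α : Type*} (key : α → ℝ) (R : α → α → α → Prop) (S : Finset α) : Prop :=
  ∀ x ∈ S, ∀ y ∈ S, ∀ z ∈ S, ∀ w ∈ S, key x < key y → key y < key z → key z < key w →
    R x y z → R y z w → R x y w ∧ R x z w

theorem Clq.extend_top {α : Type*} [DecidableEq α] {key : α → ℝ} {R : α → α → α → Prop}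
    {S Q : Finset α} (hinj : Set.InjOn key S) (hT : Trn key R S) (hQS : Q ⊆ S)
    (hQ : Clq key R Q) {u v w : α} (hu : u ∈ Q) (hv : v ∈ Q) (hw : w ∈ S) (huv : key u < key v)
    (hvw : key v < key w)
    (hmax : ∀ q ∈ Q, q ≠ v → key q ≤ key u) (hR : R u v w) :
    Clq key R (insert w Q) := by
  have hle : ∀ q ∈ Q, key q ≤ key v := by
    intro q hq
    by_cases h : q = v
    · rw [h]
    · exact (hmax q hq h).trans huv.le
  -- key claim
  have key1 : ∀ i ∈ Q, ∀ j ∈ Q, key i < key j → R i j w := by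
    have hu1 : ∀ i ∈ Q, key i < key u → R i u w ∧ R i v w := by
      intro i hi hiu
      exact hT i (hQS hi) u (hQS hu) v (hQS hv) w hw hiu huv hvw (hQ i hi u hu v hv hiu huv) hR
    intro i hi j hj hij
    by_cases hjv : j = v
    · subst hjv
      have hiv : i ≠ j := by rintro rfl; exact lt_irrefl _ hij
      rcases (hmax i hi hiv).lt_or_eq with h | h
      · exact (hu1 i hi h).2
      · have : i = u := hinj (hQS hi) (hQS hu) h
        subst this; exact hR
    · rcases (hmax j hj hjv).lt_or_eq with h | h
      · exact (hT i (hQS hi) j (hQS hj) u (hQS hu) w hw hij h (huv.trans hvw)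
          (hQ i hi j hj u hu hij h) (hu1 j hj h).1).1
      · have : j = u := hinj (hQS hj) (hQS hu) h
        subst this; exact (hu1 i hi hij).1
  intro i hi j hj k hk hij hjk
  rw [Finset.mem_insert] at hi hj hk
  rcases hk with rfl | hk
  · rcases hj with rfl | hj
    · exact absurd hjk (lt_irrefl _)
    rcases hi with rfl | hi
    · exact absurd (hij.trans hjk) (lt_irrefl _)
    exact key1 i hi j hj hij
  · have hkw : key k < key w := (hle k hk).trans_lt hvw
    rcases hj with rfl | hj
    · exact absurd (hjk.trans hkw) (lt_irrefl _)
    rcases hi with rfl | hi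
    · exact absurd ((hij.trans hjk).trans hkw) (lt_irrefl _)
    exact hQ i hi j hj k hk hij hjk

theorem Clq.extend_bot {α : Type*} [DecidableEq α] {key : α → ℝ} {R : α → α → α → Prop}
    {S Q : Finset α} (hinj : Set.InjOn key S) (hT : Trn key R S) (hQS : Q ⊆ S)
    (hQ : Clq key R Q) {u v w : α} (hu : u ∈ Q) (hv : v ∈ Q) (hw : w ∈ S) (huv : key v < key u)
    (hvw : key w < key v)
    (hmin : ∀ q ∈ Q, q ≠ v → key u ≤ key q) (hR : R w v u) :
    Clq key R (insert w Q) := by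
  have h := Clq.extend_top (key := fun x => - key x) (R := fun x y z => R z y x) (S := S) (Q := Q)
    (fun x hx y hy hxy => hinj hx hy (neg_injective hxy))
    (fun x hx y hy z hz t ht h1 h2 h3 r1 r2 => by
      simp only [neg_lt_neg_iff] at h1 h2 h3
      exact (hT t ht z hz y hy x hx h3 h2 h1 r2 r1).symm)
    hQS (fun i hi j hj k hk h1 h2 => hQ k hk j hj i hi (neg_lt_neg_iff.1 h2) (neg_lt_neg_iff.1 h1))
    hu hv hw (neg_lt_neg huv) (neg_lt_neg hvw)
    (fun q hq hqv => neg_le_neg (hmin q hq hqv)) hR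
  intro i hi j hj k hk h1 h2
  exact h k hk j hj i hi (neg_lt_neg h2) (neg_lt_neg h1)

theorem erdos_szekeres_triples {α : Type*} [DecidableEq α] (key : α → ℝ) (R B : α → α → α → Prop) :
    ∀ (N a b : ℕ), a + b = N → ∀ S : Finset α, Set.InjOn key S → Trn key R S → Trn key B S →
    (∀ i ∈ S, ∀ j ∈ S, ∀ k ∈ S, key i < key j → key j < key k → R i j k ∨ B i j k) →
    Nat.choose (a + b) a < S.card →
    (∃ G ⊆ S, G.card = a + 2 ∧ Clq key R G) ∨ (∃ G ⊆ S, G.card = b + 2 ∧ Clq key B G) := by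
  intro N
  induction N using Nat.strong_induction_on with
  | _ N ih =>
  intro a b hab S hinj hTR hTB hcol hcard
  have pair : ∀ (R : α → α → α → Prop), 2 ≤ S.card → ∃ G ⊆ S, G.card = 2 ∧ Clq key R G := by
    intro R h2
    obtain ⟨G, hG, hc⟩ := Finset.exists_subset_card_eq h2
    refine ⟨G, hG, hc, ?_⟩
    obtain ⟨x, y, hxy, rfl⟩ := Finset.card_eq_two.1 hc
    intro i hi j hj k hk h1 h2
    simp only [Finset.mem_insert, Finset.mem_singleton] at hi hj hk
    rcases hi with rfl | rfl <;> rcases hj with rfl | rfl <;> rcases hk with rfl | rfl <;>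
      first | exact absurd h1 (lt_irrefl _) | exact absurd h2 (lt_irrefl _) |
        exact absurd (h1.trans h2) (lt_irrefl _)
  have hpos : 0 < Nat.choose (a + b) a := Nat.choose_pos (Nat.le_add_right a b)
  rcases Nat.eq_zero_or_pos a with rfl | ha
  · left; exact pair R (by omega)
  rcases Nat.eq_zero_or_pos b with rfl | hb
  · right; exact pair B (by omega)
  obtain ⟨a, rfl⟩ := Nat.exists_eq_succ_of_ne_zero ha.ne'
  obtain ⟨b, rfl⟩ := Nat.exists_eq_succ_of_ne_zero hb.ne'
  classical
  set T : Finset α := S.filter fun v => ∃ Q ⊆ S, Q.card = a + 2 ∧ Clq key R Q ∧ v ∈ Q ∧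
    ∀ q ∈ Q, key q ≤ key v with hTdef
  have hTS : T ⊆ S := Finset.filter_subset _ _
  have hsub : ∀ S' ⊆ S, Set.InjOn key S' ∧ Trn key R S' ∧ Trn key B S' ∧
      (∀ i ∈ S', ∀ j ∈ S', ∀ k ∈ S', key i < key j → key j < key k → R i j k ∨ B i j k) := by
    intro S' h
    refine ⟨hinj.mono (by exact_mod_cast h), ?_, ?_, ?_⟩
    · intro x hx y hy z hz w hw
      exact hTR x (h hx) y (h hy) z (h hz) w (h hw)
    · intro x hx y hy z hz w hw
      exact hTB x (h hx) y (h hy) z (h hz) w (h hw)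
    · intro x hx y hy z hz
      exact hcol x (h hx) y (h hy) z (h hz)
  have hchoose : Nat.choose (a + 1 + (b + 1)) (a + 1) =
      Nat.choose (a + (b + 1)) a + Nat.choose (a + 1 + b) (a + 1) := by
    rw [show a + 1 + (b + 1) = (a + (b + 1)) + 1 by ring, Nat.choose_succ_succ]
    congr 2; ring
  have hcc : (S \ T).card + T.card = S.card := Finset.card_sdiff_add_card_eq_card hTS
  by_cases h1 : Nat.choose (a + (b + 1)) a < (S \ T).card
  · obtain ⟨i1, i2, i3, i4⟩ := hsub (S \ T) Finset.sdiff_subset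
    rcases ih (a + (b + 1)) (by omega) a (b + 1) rfl (S \ T) i1 i2 i3 i4 h1 with
      ⟨G, hG, hGc, hGq⟩ | ⟨G, hG, hGc, hGq⟩
    · exfalso
      obtain ⟨v, hv, hvm⟩ := Finset.exists_max_image G key (Finset.card_pos.1 (by omega))
      have := hG hv
      rw [Finset.mem_sdiff] at this
      apply this.2
      rw [hTdef, Finset.mem_filter]
      exact ⟨this.1, G, hG.trans Finset.sdiff_subset, hGc, hGq, hv, hvm⟩
    · right; exact ⟨G, hG.trans Finset.sdiff_subset, hGc, hGq⟩
  · have h2 : Nat.choose (a + 1 + b) (a + 1) < T.card := by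
      simp only [Nat.succ_eq_add_one] at hcard
      omega
    obtain ⟨i1, i2, i3, i4⟩ := hsub T hTS
    rcases ih (a + 1 + b) (by omega) (a + 1) b rfl T i1 i2 i3 i4 h2 with
      ⟨G, hG, hGc, hGq⟩ | ⟨G, hG, hGc, hGq⟩
    · left; exact ⟨G, hG.trans hTS, hGc, hGq⟩
    obtain ⟨v, hv, hvm⟩ := Finset.exists_min_image G key (Finset.card_pos.1 (by omega))
    have hvT := hG hv
    rw [hTdef, Finset.mem_filter] at hvT
    obtain ⟨hvS, Q, hQS, hQc, hQq, hvQ, hQm⟩ := hvT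
    have hGS := hG.trans hTS
    obtain ⟨w, hw, hwm⟩ := Finset.exists_min_image (G.erase v) key
      (Finset.card_pos.1 (by rw [Finset.card_erase_of_mem hv]; omega))
    obtain ⟨u, hu, hum⟩ := Finset.exists_max_image (Q.erase v) key
      (Finset.card_pos.1 (by rw [Finset.card_erase_of_mem hvQ]; omega))
    rw [Finset.mem_erase] at hw hu
    have hvw : key v < key w := lt_of_le_of_ne (hvm w hw.2) fun h =>
      hw.1 (hinj (hGS hw.2) hvS h.symm)
    have huv : key u < key v := lt_of_le_of_ne (hQm u hu.2) fun h =>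
      hu.1 (hinj (hQS hu.2) hvS h)
    rcases hcol u (hQS hu.2) v hvS w (hGS hw.2) huv hvw with h | h
    · left
      refine ⟨insert w Q, Finset.insert_subset (hGS hw.2) hQS, ?_,
        Clq.extend_top hinj hTR hQS hQq hu.2 hvQ (hGS hw.2) huv hvw
          (fun q hq hqv => hum q (Finset.mem_erase.2 ⟨hqv, hq⟩)) h⟩
      rw [Finset.card_insert_of_notMem, hQc]
      intro hwQ
      exact absurd (hQm w hwQ) (not_le.2 hvw)
    · right
      refine ⟨insert u G, Finset.insert_subset (hQS hu.2) hGS, ?_,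
        Clq.extend_bot hinj hTB hGS hGq hw.2 hv (hQS hu.2) hvw huv
          (fun q hq hqv => hwm q (Finset.mem_erase.2 ⟨hqv, hq⟩)) h⟩
      rw [Finset.card_insert_of_notMem, hGc]
      intro huG
      exact absurd (hvm u huG) (not_le.2 huv)

/-- Intervals: many pairwise disjoint or many with a common point. -/
theorem interval_dilworth {α : Type*} [DecidableEq α] (l r : α → ℝ) (L : ℕ) :
    ∀ (K : ℕ) (S : Finset α), (∀ i ∈ S, l i ≤ r i) → K * L < S.card →
    (∃ T ⊆ S, T.card = K + 1 ∧ ∀ i ∈ T, ∀ j ∈ T, i ≠ j → r i < l j ∨ r j < l i) ∨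
    (∃ T ⊆ S, T.card = L + 1 ∧ ∃ c, ∀ i ∈ T, l i ≤ c ∧ c ≤ r i) := by
  intro K
  induction K with
  | zero =>
    intro S _ hc
    left
    obtain ⟨T, hT, hTc⟩ := Finset.exists_subset_card_eq (show 1 ≤ S.card by omega)
    refine ⟨T, hT, by simpa using hTc, ?_⟩
    obtain ⟨x, rfl⟩ := Finset.card_eq_one.1 hTc
    intro i hi j hj hij
    simp only [Finset.mem_singleton] at hi hj
    exact absurd (hi.trans hj.symm) hij
  | succ K ih =>
    intro S hS hc
    obtain ⟨m, hm, hmm⟩ := Finset.exists_min_image S r (Finset.card_pos.1 (by omega))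
    by_cases h : L + 1 ≤ (S.filter fun i => l i ≤ r m).card
    · right
      obtain ⟨T, hT, hTc⟩ := Finset.exists_subset_card_eq h
      refine ⟨T, hT.trans (Finset.filter_subset _ _), hTc, r m, fun i hi => ?_⟩
      have := Finset.mem_filter.1 (hT hi)
      exact ⟨this.2, hmm i this.1⟩
    · have hsum := Finset.card_filter_add_card_filter_not (s := S) (fun i => l i ≤ r m)
      have hc2 : K * L < (S.filter fun i => ¬ l i ≤ r m).card := by
        rw [add_mul] at hc; omega
      rcases ih _ (fun i hi => hS i (Finset.mem_filter.1 hi).1) hc2 with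
        ⟨T, hT, hTc, hd⟩ | ⟨T, hT, hTc, hd⟩
      · left
        have hmem : ∀ i ∈ T, i ∈ S ∧ r m < l i := fun i hi => by
          have := Finset.mem_filter.1 (hT hi)
          exact ⟨this.1, not_le.1 this.2⟩
        refine ⟨insert m T, Finset.insert_subset hm fun i hi => (hmem i hi).1, ?_, ?_⟩
        · rw [Finset.card_insert_of_notMem, hTc]
          intro hmT
          exact absurd (hS m hm) (not_le.2 (hmem m hmT).2)
        · intro i hi j hj hij
          rw [Finset.mem_insert] at hi hj
          rcases hi with rfl | hi
          · rcases hj with rfl | hj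
            · exact absurd rfl hij
            · left; exact (hmem j hj).2
          · rcases hj with rfl | hj
            · right; exact (hmem i hi).2
            · exact hd i hi j hj hij
      · right
        exact ⟨T, hT.trans (Finset.filter_subset _ _), hTc, hd⟩

/-- The pair of functions crosses at `a` and `b` on a period. -/
def Crs (f g : ℝ → ℝ) (a b : ℝ) : Prop :=
  a < b ∧ b < a + 2 * Real.pi ∧ f a = g a ∧ f b = g b ∧
    (∀ θ, a < θ → θ < b → g θ < f θ) ∧ (∀ θ, b < θ → θ < a + 2 * Real.pi → f θ < g θ)

/-- Abstract systems of periodic functions coming from a line transversal. -/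
structure TSys {α : Type*} (key : α → ℝ) (S : Finset α) (H : α → ℝ → ℝ)
    (a b : α → α → ℝ) (m n : α → ℝ) : Prop where
  inj : Set.InjOn key S
  per : ∀ i ∈ S, ∀ θ, H i (θ + 2 * Real.pi) = H i θ
  crs : ∀ i ∈ S, ∀ j ∈ S, key i < key j → Crs (H i) (H j) (a i j) (b i j)
  am : ∀ i ∈ S, ∀ j ∈ S, key i < key j → a i j < m j
  mb : ∀ i ∈ S, ∀ j ∈ S, key i < key j → m j < b i j
  bn : ∀ i ∈ S, ∀ j ∈ S, key i < key j → b i j < n i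
  na : ∀ i ∈ S, ∀ j ∈ S, key i < key j → n i < a i j + 2 * Real.pi
  mn : ∀ i ∈ S, ∀ j ∈ S, m j < n i
  nm : ∀ i ∈ S, ∀ j ∈ S, n i < m j + 2 * Real.pi
  gp : ∀ i ∈ S, ∀ j ∈ S, ∀ k ∈ S, i ≠ j → i ≠ k → j ≠ k → ∃ θ, H j θ < H i θ ∧ H k θ < H i θ

namespace TSys
variable {α : Type*} {key : α → ℝ} {S : Finset α} {H : α → ℝ → ℝ}
    {a b : α → α → ℝ} {m n : α → ℝ}

theorem reflect (h : TSys key S H a b m n) :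
    TSys key S (fun i θ => H i (-θ)) (fun i j => - b i j) (fun i j => - a i j)
      (fun j => - m j) (fun i => 2 * Real.pi - n i) where
  inj := h.inj
  per := by
    intro i hi θ
    have := h.per i hi (-(θ + 2 * Real.pi))
    rw [← this]; congr 1; ring
  crs := by
    intro i hi j hj hij
    obtain ⟨h1, h2, h3, h4, h5, h6⟩ := h.crs i hi j hj hij
    refine ⟨by linarith, by linarith, by simpa using h4, by simpa using h3, ?_, ?_⟩
    · intro θ h7 h8
      exact h5 _ (by linarith) (by linarith)
    · intro θ h7 h8
      have := h6 (-θ + 2 * Real.pi) (by linarith) (by linarith)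
      rwa [h.per i hi, h.per j hj] at this
  am := fun i hi j hj hij => neg_lt_neg (h.mb i hi j hj hij)
  mb := fun i hi j hj hij => neg_lt_neg (h.am i hi j hj hij)
  bn := fun i hi j hj hij => by have := h.na i hi j hj hij; linarith
  na := fun i hi j hj hij => by have := h.bn i hi j hj hij; linarith
  mn := fun i hi j hj => by have := h.nm i hi j hj; linarith
  nm := fun i hi j hj => by have := h.mn i hi j hj; linarith
  gp := by
    intro i hi j hj k hk h1 h2 h3
    obtain ⟨θ, ht⟩ := h.gp i hi j hj k hk h1 h2 h3
    exact ⟨-θ, by simpa using ht⟩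

theorem perZ (h : TSys key S H a b m n) (θ c : ℝ) :
    ∃ θ', c ≤ θ' ∧ θ' < c + 2 * Real.pi ∧ ∀ i ∈ S, H i θ' = H i θ := by
  have hp : (0 : ℝ) < 2 * Real.pi := by positivity
  refine ⟨toIcoMod hp c θ, (toIcoMod_mem_Ico hp c θ).1, (toIcoMod_mem_Ico hp c θ).2, ?_⟩
  intro i hi
  have hper : Function.Periodic (H i) (2 * Real.pi) := h.per i hi
  rw [toIcoMod]
  exact hper.sub_zsmul_eq _

/-- at a parameter in the window of `j`, `j` beats `k > j` only inside `(a,b)`. -/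
theorem up_mem (h : TSys key S H a b m n) {j k : α} (hj : j ∈ S) (hk : k ∈ S)
    (hjk : key j < key k) {θ : ℝ} (h1 : n j - 2 * Real.pi ≤ θ) (h2 : θ < n j)
    (h3 : H k θ < H j θ) : a j k < θ ∧ θ < b j k := by
  obtain ⟨c1, c2, c3, c4, c5, c6⟩ := h.crs j hj k hk hjk
  have hbn := h.bn j hj k hk hjk
  have hna := h.na j hj k hk hjk
  constructor
  · by_contra hc
    rcases (not_lt.1 hc).lt_or_eq with hlt | heq
    · have := c6 (θ + 2 * Real.pi) (by linarith) (by linarith)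
      rw [h.per j hj, h.per k hk] at this
      linarith
    · rw [heq] at h3; linarith
  · by_contra hc
    rcases (not_lt.1 hc).lt_or_eq with hlt | heq
    · have := c6 θ hlt (by linarith)
      linarith
    · rw [← heq] at h3; linarith

theorem dn_mem (h : TSys key S H a b m n) {i j : α} (hi : i ∈ S) (hj : j ∈ S)
    (hij : key i < key j) {θ : ℝ} (h1 : m j ≤ θ) (h2 : θ < m j + 2 * Real.pi)
    (h3 : H i θ < H j θ) : b i j < θ ∧ θ < a i j + 2 * Real.pi := by
  obtain ⟨c1, c2, c3, c4, c5, c6⟩ := h.crs i hi j hj hij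
  have ham := h.am i hi j hj hij
  have hmb := h.mb i hi j hj hij
  constructor
  · by_contra hc
    rcases (not_lt.1 hc).lt_or_eq with hlt | heq
    · have := c5 θ (by linarith) hlt
      linarith
    · rw [heq] at h3; linarith
  · by_contra hc
    have e1 := h.per i hi (θ - 2 * Real.pi)
    have e2 := h.per j hj (θ - 2 * Real.pi)
    rw [sub_add_cancel] at e1 e2
    rw [e1, e2] at h3
    rcases (not_lt.1 hc).lt_or_eq with hlt | heq
    · have := c5 (θ - 2 * Real.pi) (by linarith) (by linarith)
      linarith
    · rw [show θ - 2 * Real.pi = a i j by linarith] at h3; linarith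

theorem dich (h : TSys key S H a b m n) {i j k : α} (hi : i ∈ S) (hj : j ∈ S) (hk : k ∈ S)
    (hij : key i < key j) (hjk : key j < key k) : b i j < b j k ∨ a j k < a i j := by
  have n1 : j ≠ i := by rintro rfl; exact lt_irrefl _ hij
  have n2 : j ≠ k := by rintro rfl; exact lt_irrefl _ hjk
  have n3 : i ≠ k := by rintro rfl; exact lt_irrefl _ (hij.trans hjk)
  obtain ⟨θ0, g1, g2⟩ := h.gp j hj i hi k hk n1 n2 n3
  obtain ⟨θ, t1, t2, t3⟩ := h.perZ θ0 (n j - 2 * Real.pi)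
  rw [← t3 i hi, ← t3 j hj] at g1
  rw [← t3 k hk, ← t3 j hj] at g2
  obtain ⟨u1, u2⟩ := h.up_mem hj hk hjk t1 (by linarith) g2
  by_contra hc
  push Not at hc
  have := (h.crs i hi j hj hij).2.2.2.2.1 θ (by linarith) (by linarith)
  linarith

theorem trn (h : TSys key S H a b m n) : Trn key (fun i j k => b i j < b j k) S := by
  intro x hx y hy z hz w hw hxy hyz hzw r1 r2
  have mw := h.mb y hy w hw (hyz.trans hzw)
  constructor
  · by_contra hc
    push Not at hc
    have m1 := h.mb y hy z hz hyz
    obtain ⟨θ, h1, h2⟩ := exists_between (show max (max (b x y) (m z)) (m w) < b y z by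
      simp only [max_lt_iff]; exact ⟨⟨r1, m1⟩, by linarith⟩)
    simp only [max_lt_iff] at h1
    obtain ⟨⟨h1, h3⟩, h4⟩ := h1
    have e1 := (h.crs y hy z hz hyz).2.2.2.2.1 θ (by have := h.am y hy z hz hyz; linarith) h2
    have e2 := (h.crs z hz w hw hzw).2.2.2.2.1 θ (by have := h.am z hz w hw hzw; linarith)
      (by linarith)
    have e3 := (h.crs y hy w hw (hyz.trans hzw)).2.2.2.2.2 θ (by linarith)
      (by have := h.na y hy w hw (hyz.trans hzw); have := h.bn y hy z hz hyz; linarith)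
    linarith
  · suffices b x z ≤ b y z from this.trans_lt r2
    by_contra hc
    push Not at hc
    obtain ⟨θ, h1, h2⟩ := exists_between (show b y z < min (b x z) (n y) from
      lt_min hc (h.bn y hy z hz hyz))
    rw [lt_min_iff] at h2
    have e1 := (h.crs y hy z hz hyz).2.2.2.2.2 θ h1 (by have := h.na y hy z hz hyz; linarith)
    have e2 := (h.crs x hx y hy hxy).2.2.2.2.2 θ (by linarith)
      (by have := h.na x hx y hy hxy; have := h.bn x hx z hz (hxy.trans hyz); linarith)
    have e3 := (h.crs x hx z hz (hxy.trans hyz)).2.2.2.2.1 θ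
      (by have := h.am x hx z hz (hxy.trans hyz); have := h.mb y hy z hz hyz; linarith) h2.1
    linarith

theorem _root_.exists_between_finset {α : Type*} (T : Finset α) (lo hi : α → ℝ)
    (h : ∀ x ∈ T, ∀ y ∈ T, lo x < hi y) : ∃ θ, ∀ x ∈ T, lo x < θ ∧ θ < hi x := by
  rcases T.eq_empty_or_nonempty with rfl | hne
  · exact ⟨0, by simp⟩
  obtain ⟨x, hx, hxm⟩ := Finset.exists_max_image T lo hne
  obtain ⟨y, hy, hym⟩ := Finset.exists_min_image T hi hne
  obtain ⟨θ, h1, h2⟩ := exists_between (h x hx y hy)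
  exact ⟨θ, fun z hz => ⟨(hxm z hz).trans_lt h1, h2.trans_le (hym z hz)⟩⟩

theorem top_of_clq [DecidableEq α] (h : TSys key S H a b m n) {G : Finset α} (hG : G ⊆ S)
    (hq : Clq key (fun i j k => b i j < b j k) G) {j : α} (hjG : j ∈ G) :
    ∃ θ, ∀ k ∈ G, k ≠ j → H k θ < H j θ := by
  classical
  have hj := hG hjG
  have tri : ∀ x ∈ G, x ≠ j → key x < key j ∨ key j < key x := fun x hx hxj =>
    lt_or_gt_of_ne fun e => hxj (h.inj (hG hx) hj e)
  obtain ⟨θ, hθ⟩ := exists_between_finset (G.erase j)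
    (fun x => if key j < key x then a j x else b x j)
    (fun x => if key j < key x then b j x else a x j + 2 * Real.pi) (by
      intro x hx y hy
      rw [Finset.mem_erase] at hx hy
      have hxS := hG hx.2
      have hyS := hG hy.2
      by_cases hxy : x = y
      · subst hxy
        rcases tri x hx.2 hx.1 with hlt | hlt
        · simp only [not_lt.2 hlt.le, if_false]
          exact (h.crs x hxS j hj hlt).2.1
        · simp only [hlt, if_true]
          exact (h.crs j hj x hxS hlt).1
      obtain ⟨θ0, g1, g2⟩ := h.gp j hj x hxS y hyS (Ne.symm hx.1) (Ne.symm hy.1) hxy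
      rcases tri x hx.2 hx.1 with hlx | hlx <;> rcases tri y hy.2 hy.1 with hly | hly
      · simp only [not_lt.2 hlx.le, not_lt.2 hly.le, if_false]
        obtain ⟨θ, t1, t2, t3⟩ := h.perZ θ0 (m j)
        rw [← t3 x hxS, ← t3 j hj] at g1
        rw [← t3 y hyS, ← t3 j hj] at g2
        have u1 := h.dn_mem hxS hj hlx t1 t2 g1
        have u2 := h.dn_mem hyS hj hly t1 t2 g2
        linarith [u1.1, u2.2]
      · simp only [not_lt.2 hlx.le, hly, if_false, if_true]
        exact hq x hx.2 j hjG y hy.2 hlx hly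
      · simp only [not_lt.2 hly.le, hlx, if_false, if_true]
        linarith [h.am j hj x hxS hlx, h.mn y hyS x hxS, h.na y hyS j hj hly]
      · simp only [hlx, hly, if_true]
        obtain ⟨θ, t1, t2, t3⟩ := h.perZ θ0 (n j - 2 * Real.pi)
        rw [← t3 x hxS, ← t3 j hj] at g1
        rw [← t3 y hyS, ← t3 j hj] at g2
        have u1 := h.up_mem hj hxS hlx t1 (by linarith) g1
        have u2 := h.up_mem hj hyS hly t1 (by linarith) g2
        linarith [u1.1, u2.2])
  refine ⟨θ, fun k hk hkj => ?_⟩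
  have := hθ k (Finset.mem_erase.2 ⟨hkj, hk⟩)
  rcases tri k hk hkj with hlt | hlt
  · simp only [not_lt.2 hlt.le, if_false] at this
    exact (h.crs k (hG hk) j hj hlt).2.2.2.2.2 θ this.1 this.2
  · simp only [hlt, if_true] at this
    exact (h.crs j hj k (hG hk) hlt).2.2.2.2.1 θ this.1 this.2

theorem main [DecidableEq α] (h : TSys key S H a b m n) (p : ℕ)
    (hc : Nat.choose (p + p) p < S.card) :
    ∃ G ⊆ S, G.card = p + 2 ∧ ∀ j ∈ G, ∃ θ, ∀ k ∈ G, k ≠ j → H k θ < H j θ := by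
  rcases erdos_szekeres_triples key (fun i j k => b i j < b j k)
      (fun i j k => - a i j < - a j k) (p + p) p p rfl S h.inj h.trn h.reflect.trn
      (fun i hi j hj k hk h1 h2 => by
        rcases h.dich hi hj hk h1 h2 with h | h
        · exact Or.inl h
        · exact Or.inr (neg_lt_neg h)) hc with ⟨G, hG, hGc, hq⟩ | ⟨G, hG, hGc, hq⟩
  · exact ⟨G, hG, hGc, fun j hj => h.top_of_clq hG hq hj⟩
  · refine ⟨G, hG, hGc, fun j hj => ?_⟩
    obtain ⟨θ, hθ⟩ := h.reflect.top_of_clq hG hq hj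
    exact ⟨-θ, hθ⟩

end TSys

/-- Support function of a planar set. -/
noncomputable def Hs (A : Set (ℝ × ℝ)) (s t : ℝ) : ℝ := sSup ((fun p : ℝ × ℝ => s * p.1 + t * p.2) '' A)

theorem Hs_cont {A : Set (ℝ × ℝ)} (hA : IsCompact A) :
    Continuous (fun q : ℝ × ℝ => Hs A q.1 q.2) := by
  have := IsCompact.continuous_sSup (f := fun (q : ℝ × ℝ) (p : ℝ × ℝ) => q.1 * p.1 + q.2 * p.2)
    hA (by
      simp only [Function.HasUncurry.uncurry, id]
      fun_prop)
  exact this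

theorem Hs_le {A : Set (ℝ × ℝ)} (hA : IsCompact A) (s t : ℝ) {p : ℝ × ℝ} (hp : p ∈ A) :
    s * p.1 + t * p.2 ≤ Hs A s t := by
  have hb : BddAbove ((fun p : ℝ × ℝ => s * p.1 + t * p.2) '' A) :=
    (hA.image (by fun_prop)).bddAbove
  exact le_csSup hb ⟨p, hp, rfl⟩

theorem Hs_att {A : Set (ℝ × ℝ)} (hA : IsCompact A) (hne : A.Nonempty) (s t : ℝ) :
    ∃ p ∈ A, Hs A s t = s * p.1 + t * p.2 := by
  have hc : ContinuousOn (fun p : ℝ × ℝ => s * p.1 + t * p.2) A := by fun_prop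
  obtain ⟨p, hp, h, _⟩ := hA.exists_sSup_image_eq_and_ge hne hc
  exact ⟨p, hp, h⟩

theorem Hs_lt {A : Set (ℝ × ℝ)} (hA : IsCompact A) (hne : A.Nonempty) {s t c : ℝ}
    (h : ∀ p ∈ A, s * p.1 + t * p.2 < c) : Hs A s t < c := by
  obtain ⟨p, hp, e⟩ := Hs_att hA hne s t
  rw [e]; exact h p hp

theorem Hs_star {A A' : Set (ℝ × ℝ)} (hA : IsCompact A) (hne : A.Nonempty) (hA' : IsCompact A')
    (hne' : A'.Nonempty) {u v : ℝ} (hsep : ∀ p ∈ A, ∀ q ∈ A', u * p.1 + v * p.2 < u * q.1 + v * q.2)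
    {s t : ℝ} (h : Hs A s t ≤ Hs A' s t) {l m : ℝ} (hl : 0 ≤ l) (hm : 0 < m) :
    Hs A (l * s + m * u) (l * t + m * v) < Hs A' (l * s + m * u) (l * t + m * v) := by
  obtain ⟨p, hp, e⟩ := Hs_att hA hne (l * s + m * u) (l * t + m * v)
  obtain ⟨q, hq, e'⟩ := Hs_att hA' hne' s t
  have h1 := Hs_le hA s t hp
  have h2 := Hs_le hA' (l * s + m * u) (l * t + m * v) hq
  have h3 := mul_lt_mul_of_pos_left (hsep p hp q hq) hm
  have h4 : l * (s * p.1 + t * p.2) ≤ l * (s * q.1 + t * q.2) :=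
    mul_le_mul_of_nonneg_left (by linarith) hl
  rw [e]
  nlinarith

theorem Hs_sep_lt {A A' : Set (ℝ × ℝ)} (hA : IsCompact A) (hne : A.Nonempty) (hA' : IsCompact A')
    (hne' : A'.Nonempty) {u v : ℝ} (hsep : ∀ p ∈ A, ∀ q ∈ A', u * p.1 + v * p.2 < u * q.1 + v * q.2) :
    Hs A u v < Hs A' u v := by
  obtain ⟨p, hp, e⟩ := Hs_att hA hne u v
  obtain ⟨q, hq, e'⟩ := Hs_att hA' hne' u v
  rw [e, e']; exact hsep p hp q hq

/-- Support function as a function of the angle. -/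
noncomputable def Ha (A : Set (ℝ × ℝ)) (θ : ℝ) : ℝ := Hs A (Real.cos θ) (Real.sin θ)

theorem Ha_per (A : Set (ℝ × ℝ)) (θ : ℝ) : Ha A (θ + 2 * Real.pi) = Ha A θ := by
  simp [Ha]

theorem Ha_cont {A : Set (ℝ × ℝ)} (hA : IsCompact A) : Continuous (Ha A) := by
  have h := Hs_cont hA
  exact h.comp (Real.continuous_cos.prodMk Real.continuous_sin)

theorem Ha_star {A A' : Set (ℝ × ℝ)} (hA : IsCompact A) (hne : A.Nonempty) (hA' : IsCompact A')
    (hne' : A'.Nonempty) {w : ℝ}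
    (hsep : ∀ p ∈ A, ∀ q ∈ A', Real.cos w * p.1 + Real.sin w * p.2 < Real.cos w * q.1 + Real.sin w * q.2)
    {θ x : ℝ} (h : Ha A θ ≤ Ha A' θ)
    (hx : (w - θ < Real.pi ∧ θ < x ∧ x ≤ w) ∨ (θ - w < Real.pi ∧ x < θ ∧ w ≤ x)) :
    Ha A x < Ha A' x := by
  have key : Real.sin (w - θ) ≠ 0 ∧ 0 ≤ Real.sin (w - x) / Real.sin (w - θ) ∧
      0 < Real.sin (x - θ) / Real.sin (w - θ) := by
    rcases hx with ⟨h1, h2, h3⟩ | ⟨h1, h2, h3⟩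
    · have a1 : 0 < Real.sin (w - θ) := Real.sin_pos_of_pos_of_lt_pi (by linarith) (by linarith)
      have a2 : 0 < Real.sin (x - θ) := Real.sin_pos_of_pos_of_lt_pi (by linarith) (by linarith)
      have a3 : 0 ≤ Real.sin (w - x) := Real.sin_nonneg_of_nonneg_of_le_pi (by linarith) (by linarith)
      exact ⟨a1.ne', by positivity, by positivity⟩
    · have a1 : Real.sin (w - θ) < 0 := Real.sin_neg_of_neg_of_neg_pi_lt (by linarith) (by linarith)
      have a2 : Real.sin (x - θ) < 0 := Real.sin_neg_of_neg_of_neg_pi_lt (by linarith) (by linarith)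
      have a3 : Real.sin (w - x) ≤ 0 := Real.sin_nonpos_of_nonpos_of_neg_pi_le (by linarith) (by linarith)
      exact ⟨a1.ne, div_nonneg_of_nonpos a3 a1.le, div_pos_of_neg_of_neg a2 a1⟩
  obtain ⟨k0, k1, k2⟩ := key
  have hh := Hs_star hA hne hA' hne' hsep h k1 k2
  have e1 : Real.sin (w - x) / Real.sin (w - θ) * Real.cos θ + Real.sin (x - θ) / Real.sin (w - θ) * Real.cos w
      = Real.cos x := by
    field_simp
    simp only [Real.sin_sub]; ring
  have e2 : Real.sin (w - x) / Real.sin (w - θ) * Real.sin θ + Real.sin (x - θ) / Real.sin (w - θ) * Real.sin w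
      = Real.sin x := by
    field_simp
    simp only [Real.sin_sub]; ring
  rw [e1, e2] at hh
  exact hh

theorem crs_exists {A A' : Set (ℝ × ℝ)} (hA : IsCompact A) (hne : A.Nonempty) (hA' : IsCompact A')
    (hne' : A'.Nonempty) {w : ℝ}
    (hsep : ∀ p ∈ A, ∀ q ∈ A', Real.cos w * p.1 + Real.sin w * p.2 < Real.cos w * q.1 + Real.sin w * q.2) :
    ∃ a b, w - 2 * Real.pi < a ∧ a < w - Real.pi ∧ w - Real.pi < b ∧ b < w ∧ Crs (Ha A) (Ha A') a b := by
  have pp := Real.pi_pos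
  have hsep' : ∀ p ∈ A', ∀ q ∈ A, Real.cos (w - Real.pi) * p.1 + Real.sin (w - Real.pi) * p.2 <
      Real.cos (w - Real.pi) * q.1 + Real.sin (w - Real.pi) * q.2 := by
    intro p hp q hq
    have := hsep q hq p hp
    rw [Real.cos_sub_pi, Real.sin_sub_pi]; linarith
  have d1 : Ha A w < Ha A' w := Hs_sep_lt hA hne hA' hne' hsep
  have d2 : Ha A' (w - Real.pi) < Ha A (w - Real.pi) := Hs_sep_lt hA' hne' hA hne hsep'
  have d3 : Ha A (w - 2 * Real.pi) < Ha A' (w - 2 * Real.pi) := by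
    rw [← Ha_per A, ← Ha_per A']; simpa using d1
  have hc : Continuous (fun θ => Ha A θ - Ha A' θ) := (Ha_cont hA).sub (Ha_cont hA')
  obtain ⟨b, hb, eb⟩ := intermediate_value_Ioo' (a := w - Real.pi) (b := w) (by linarith)
    hc.continuousOn (show (0:ℝ) ∈ Set.Ioo _ _ from ⟨by linarith, by linarith⟩)
  obtain ⟨a, ha, ea⟩ := intermediate_value_Ioo (a := w - 2 * Real.pi) (b := w - Real.pi) (by linarith)
    hc.continuousOn (show (0:ℝ) ∈ Set.Ioo _ _ from ⟨by linarith, by linarith⟩)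
  simp only at ea eb
  have ea2 : Ha A (a + 2 * Real.pi) = Ha A' (a + 2 * Real.pi) := by
    rw [Ha_per, Ha_per]; linarith
  obtain ⟨b1, b2⟩ := hb
  obtain ⟨a1, a2⟩ := ha
  refine ⟨a, b, a1, a2, b1, b2, by linarith, by linarith, by linarith, by linarith, ?_, ?_⟩
  · intro θ h1 h2
    rcases le_total θ (w - Real.pi) with h | h
    · exact Ha_star hA' hne' hA hne hsep' (θ := a) (by linarith) (Or.inl ⟨by linarith, h1, h⟩)
    · exact Ha_star hA' hne' hA hne hsep' (θ := b) (by linarith) (Or.inr ⟨by linarith, h2, h⟩)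
  · intro θ h1 h2
    rcases le_total θ w with h | h
    · exact Ha_star hA hne hA' hne' hsep (θ := b) (by linarith) (Or.inl ⟨by linarith, h1, h⟩)
    · exact Ha_star hA hne hA' hne' hsep (θ := a + 2 * Real.pi) (by linarith)
        (Or.inr ⟨by linarith, h2, h⟩)

theorem exists_angle (s t : ℝ) (ht : t ≠ 0) : ∃ r > 0, ∃ θ, s = r * Real.cos θ ∧ t = r * Real.sin θ ∧
    (0 < t → 0 < θ ∧ θ < Real.pi) ∧ (t < 0 → -Real.pi < θ ∧ θ < 0) := by
  set z : ℂ := ⟨s, t⟩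
  have hz : z ≠ 0 := fun h => ht (by simpa [z] using congrArg Complex.im h)
  have h1 := Complex.norm_mul_cos_arg z
  have h2 := Complex.norm_mul_sin_arg z
  have hr : 0 < ‖z‖ := norm_pos_iff.2 hz
  have hs : Real.sin z.arg = t / ‖z‖ := by
    rw [eq_div_iff hr.ne', mul_comm]; exact h2
  refine ⟨‖z‖, hr, z.arg, h1.symm, h2.symm, ?_, ?_⟩
  · intro hp
    refine ⟨lt_of_le_of_ne (Complex.arg_nonneg_iff.2 hp.le) ?_, Complex.arg_lt_pi_iff.2 (Or.inr ht)⟩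
    intro e
    rw [← e, Real.sin_zero] at hs
    have : 0 < t / ‖z‖ := by positivity
    linarith
  · intro hp
    exact ⟨Complex.neg_pi_lt_arg z, Complex.arg_neg_iff.2 hp⟩

theorem sep_point {A : Set (ℝ × ℝ)} (hA : IsCompact A) (hne : A.Nonempty) (hcv : Convex ℝ A)
    {q : ℝ × ℝ} (hq : q ∉ A) : ∃ s t : ℝ, Hs A s t < s * q.1 + t * q.2 := by
  obtain ⟨f, u, h1, h2⟩ := geometric_hahn_banach_closed_point hcv hA.isClosed hq
  have hf : ∀ p : ℝ × ℝ, f p = f (1, 0) * p.1 + f (0, 1) * p.2 := by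
    intro p
    have : p = p.1 • ((1 : ℝ), (0 : ℝ)) + p.2 • ((0 : ℝ), (1 : ℝ)) := by ext <;> simp
    conv_lhs => rw [this]
    rw [map_add, map_smul, map_smul]; simp only [smul_eq_mul]; ring
  refine ⟨f (1, 0), f (0, 1), Hs_lt hA hne ?_⟩
  intro p hp
  rw [← hf, ← hf]; exact (h1 p hp).trans h2

theorem sep_pair {A A' : Set (ℝ × ℝ)} (hA : IsCompact A) (hcv : Convex ℝ A) (hA' : IsCompact A')
    (hcv' : Convex ℝ A') (hd : Disjoint A A') :
    ∃ s t : ℝ, ∀ p ∈ A, ∀ q ∈ A', s * p.1 + t * p.2 < s * q.1 + t * q.2 := by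
  obtain ⟨f, u, v, h1, h2, h3⟩ := geometric_hahn_banach_compact_closed hcv hA hcv' hA'.isClosed hd
  have hf : ∀ p : ℝ × ℝ, f p = f (1, 0) * p.1 + f (0, 1) * p.2 := by
    intro p
    have : p = p.1 • ((1 : ℝ), (0 : ℝ)) + p.2 • ((0 : ℝ), (1 : ℝ)) := by ext <;> simp
    conv_lhs => rw [this]
    rw [map_add, map_smul, map_smul]; simp only [smul_eq_mul]; ring
  refine ⟨f (1, 0), f (0, 1), ?_⟩
  intro p hp q hq
  rw [← hf, ← hf]; exact ((h1 p hp).trans h2).trans (h3 q hq)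

theorem Hs_smul {A : Set (ℝ × ℝ)} (hA : IsCompact A) (hne : A.Nonempty) {r : ℝ} (hr : 0 < r) (s t : ℝ) :
    Hs A (r * s) (r * t) = r * Hs A s t := by
  obtain ⟨p, hp, e⟩ := Hs_att hA hne (r * s) (r * t)
  obtain ⟨q, hq, e'⟩ := Hs_att hA hne s t
  have h1 := Hs_le hA (r * s) (r * t) hq
  have h2 := mul_le_mul_of_nonneg_left (Hs_le hA s t hp) hr.le
  rw [e'] at h2 ⊢
  rw [e] at h1 ⊢
  linarith

theorem exists_dir_s7 {α : Type*} {A : Set (ℝ × ℝ)} (hA : IsCompact A) (hcv : Convex ℝ A)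
    {y : ℝ} (hy : ((0 : ℝ), y) ∈ A) (T : Finset α) (z : α → ℝ) (σ : ℝ) (hσ : σ ≠ 0)
    (hT : ∀ i ∈ T, σ * y < σ * z i ∧ ((0 : ℝ), z i) ∉ A) (hne : T.Nonempty) :
    ∃ θ, (0 < σ → 0 < θ ∧ θ < Real.pi) ∧ (σ < 0 → -Real.pi < θ ∧ θ < 0) ∧
      ∀ i ∈ T, Ha A θ < Real.sin θ * z i := by
  obtain ⟨i0, hi0, hmin⟩ := T.exists_min_image (fun i => σ * z i) hne
  obtain ⟨h1, h2⟩ := hT i0 hi0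
  obtain ⟨s, t, hst⟩ := sep_point hA ⟨_, hy⟩ hcv h2
  have h3 := Hs_le hA s t hy
  simp only at h3 hst
  have h4 : 0 < t * (z i0 - y) := by nlinarith
  have h5 : 0 < σ * (z i0 - y) := by nlinarith
  have h6 : 0 < t * σ := by
    by_contra hcon
    push Not at hcon
    nlinarith [mul_pos h4 h5, sq_nonneg (z i0 - y)]
  have ht : t ≠ 0 := by rintro rfl; simp at h6
  obtain ⟨r, hr, θ, e1, e2, k1, k2⟩ := exists_angle s t ht
  refine ⟨θ, fun h => k1 (by nlinarith), fun h => k2 (by nlinarith), ?_⟩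
  intro i hi
  have h7 := hmin i hi
  have h8 : t * z i0 ≤ t * z i := by
    have : 0 ≤ σ * (z i - z i0) := by linarith
    by_contra hcon
    push Not at hcon
    have h9 : 0 < t * (z i0 - z i) := by linarith
    nlinarith [mul_nonneg h9.le this, mul_pos h6 (show 0 < (z i0 - z i)^2 by
      apply sq_pos_of_ne_zero; rintro h; rw [h] at h9; simp at h9)]
  have h10 : Hs A s t < t * z i := by linarith
  rw [e1, e2, Hs_smul hA ⟨_, hy⟩ hr, mul_assoc] at h10
  exact lt_of_mul_lt_mul_left h10 hr.le

theorem exists_angle_any (s t : ℝ) (h : s ≠ 0 ∨ t ≠ 0) :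
    ∃ r > 0, ∃ θ, s = r * Real.cos θ ∧ t = r * Real.sin θ := by
  set z : ℂ := ⟨s, t⟩
  have hz : z ≠ 0 := by
    intro e
    have h1 : s = 0 := by simpa [z] using congrArg Complex.re e
    have h2 : t = 0 := by simpa [z] using congrArg Complex.im e
    tauto
  exact ⟨‖z‖, norm_pos_iff.2 hz, z.arg, (Complex.norm_mul_cos_arg z).symm,
    (Complex.norm_mul_sin_arg z).symm⟩

theorem Hs_zero {A : Set (ℝ × ℝ)} (hA : IsCompact A) (hne : A.Nonempty) : Hs A 0 0 = 0 := by
  obtain ⟨p, hp, e⟩ := Hs_att hA hne 0 0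
  simpa using e

theorem core2 {α : Type*} [DecidableEq α] (S : Finset α) (B : α → Set (ℝ × ℝ))
    (hcomp : ∀ i ∈ S, IsCompact (B i)) (hconv : ∀ i ∈ S, Convex ℝ (B i))
    (hdis : ∀ i ∈ S, ∀ j ∈ S, i ≠ j → Disjoint (B i) (B j))
    (hax : ∀ i ∈ S, ∃ y : ℝ, ((0 : ℝ), y) ∈ B i)
    (gp : ∀ i ∈ S, ∀ j ∈ S, ∀ k ∈ S, i ≠ j → i ≠ k → j ≠ k →
      ∃ s t, Hs (B j) s t < Hs (B i) s t ∧ Hs (B k) s t < Hs (B i) s t)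
    (p : ℕ) (hc : Nat.choose (p + p) p < S.card) :
    ∃ G ⊆ S, G.card = p + 2 ∧ ∀ i ∈ G, ∃ s t, ∀ j ∈ G, j ≠ i → Hs (B j) s t < Hs (B i) s t := by
  have pp := Real.pi_pos
  choose! y hy using hax
  have hnem : ∀ i ∈ S, (B i).Nonempty := fun i hi => ⟨_, hy i hi⟩
  have hnot : ∀ i ∈ S, ∀ j ∈ S, i ≠ j → ((0 : ℝ), y j) ∉ B i := by
    intro i hi j hj hij hm
    exact Set.disjoint_left.1 (hdis i hi j hj hij) hm (hy j hj)
  have hn : ∀ i ∈ S, ∃ θ, 0 < θ ∧ θ < Real.pi ∧ ∀ j ∈ S, y i < y j → Ha (B i) θ < Ha (B j) θ := by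
    intro i hi
    by_cases hT : (S.filter (fun j => y i < y j)).Nonempty
    · obtain ⟨θ, h1, -, h3⟩ := exists_dir_s7 (hcomp i hi) (hconv i hi) (hy i hi)
        (S.filter (fun j => y i < y j)) y 1 one_ne_zero (by
          intro j hj
          rw [Finset.mem_filter] at hj
          refine ⟨by linarith [hj.2], hnot i hi j hj.1 ?_⟩
          rintro rfl; exact lt_irrefl _ hj.2) hT
      obtain ⟨h1, h2⟩ := h1 one_pos
      refine ⟨θ, h1, h2, fun j hj hij => ?_⟩
      have h4 := h3 j (by simp [hj, hij])
      have h5 := Hs_le (hcomp j hj) (Real.cos θ) (Real.sin θ) (hy j hj)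
      simp only [mul_zero, zero_add] at h5
      exact h4.trans_le h5
    · refine ⟨Real.pi / 2, by linarith, by linarith, fun j hj hij => ?_⟩
      exact absurd ⟨j, by simp [hj, hij]⟩ hT
  have hm : ∀ i ∈ S, ∃ θ, -Real.pi < θ ∧ θ < 0 ∧ ∀ j ∈ S, y j < y i → Ha (B i) θ < Ha (B j) θ := by
    intro i hi
    by_cases hT : (S.filter (fun j => y j < y i)).Nonempty
    · obtain ⟨θ, -, h1, h3⟩ := exists_dir_s7 (hcomp i hi) (hconv i hi) (hy i hi)
        (S.filter (fun j => y j < y i)) y (-1) (by norm_num) (by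
          intro j hj
          rw [Finset.mem_filter] at hj
          refine ⟨by linarith [hj.2], hnot i hi j hj.1 ?_⟩
          rintro rfl; exact lt_irrefl _ hj.2) hT
      obtain ⟨h1, h2⟩ := h1 (by norm_num)
      refine ⟨θ, h1, h2, fun j hj hij => ?_⟩
      have h4 := h3 j (by simp [hj, hij])
      have h5 := Hs_le (hcomp j hj) (Real.cos θ) (Real.sin θ) (hy j hj)
      simp only [mul_zero, zero_add] at h5
      exact h4.trans_le h5
    · refine ⟨-(Real.pi / 2), by linarith, by linarith, fun j hj hij => ?_⟩
      exact absurd ⟨j, by simp [hj, hij]⟩ hT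
  choose! n n0 n1 n2 using hn
  choose! m m0 m1 m2 using hm
  have hab : ∀ i j, ∃ a b, i ∈ S → j ∈ S → y i < y j → Crs (Ha (B i)) (Ha (B j)) a b ∧
      ∃ w, 0 < w ∧ w < Real.pi ∧ w - 2 * Real.pi < a ∧ a < w - Real.pi ∧ w - Real.pi < b ∧ b < w := by
    intro i j
    by_cases hh : i ∈ S ∧ j ∈ S ∧ y i < y j
    · obtain ⟨hi, hj, hij⟩ := hh
      have hne : i ≠ j := by rintro rfl; exact lt_irrefl _ hij
      obtain ⟨s, t, hst⟩ := sep_pair (hcomp i hi) (hconv i hi) (hcomp j hj) (hconv j hj) (hdis i hi j hj hne)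
      have h0 := hst _ (hy i hi) _ (hy j hj)
      simp only [mul_zero, zero_add] at h0
      have ht : 0 < t := by
        by_contra hcon
        push Not at hcon
        nlinarith
      obtain ⟨r, hr, w, e1, e2, hw, -⟩ := exists_angle s t ht.ne'
      obtain ⟨w0, w1⟩ := hw ht
      obtain ⟨a, b, k1, k2, k3, k4, k5⟩ := crs_exists (w := w) (hcomp i hi) (hnem i hi) (hcomp j hj) (hnem j hj) (by
        intro p hp q hq
        have := hst p hp q hq
        rw [e1, e2] at this
        have h2 : r * (Real.cos w * p.1 + Real.sin w * p.2) < r * (Real.cos w * q.1 + Real.sin w * q.2) := by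
          linarith
        exact lt_of_mul_lt_mul_left h2 hr.le)
      exact ⟨a, b, fun _ _ _ => ⟨k5, w, w0, w1, k1, k2, k3, k4⟩⟩
    · exact ⟨0, 0, fun hi hj hij => absurd ⟨hi, hj, hij⟩ hh⟩
  choose a b hab using hab
  have hsys : TSys y S (fun i => Ha (B i)) a b m n := by
    refine ⟨?_, fun i _ θ => Ha_per _ θ, fun i hi j hj hij => (hab i j hi hj hij).1, ?_, ?_, ?_, ?_, ?_, ?_, ?_⟩
    · intro i hi j hj e
      by_contra hne
      apply hnot i hi j hj hne
      rw [← show y i = y j from e]; exact hy i hi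
    · intro i hi j hj hij
      obtain ⟨⟨c1, c2, c3, c4, c5, c6⟩, w, w0, w1, k1, k2, k3, k4⟩ := hab i j hi hj hij
      have d := m2 j hj i hi hij
      have e0 := m0 j hj
      by_contra hcon
      push Not at hcon
      rcases hcon.lt_or_eq with hlt | heq
      · have := c6 (m j + 2 * Real.pi) (by linarith) (by linarith)
        rw [Ha_per, Ha_per] at this
        linarith
      · rw [heq] at d; linarith
    · intro i hi j hj hij
      obtain ⟨⟨c1, c2, c3, c4, c5, c6⟩, w, w0, w1, k1, k2, k3, k4⟩ := hab i j hi hj hij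
      have d := m2 j hj i hi hij
      have e0 := m1 j hj
      by_contra hcon
      push Not at hcon
      rcases hcon.lt_or_eq with hlt | heq
      · have := c6 (m j) (by linarith) (by linarith)
        linarith
      · rw [← heq] at d; linarith
    · intro i hi j hj hij
      obtain ⟨⟨c1, c2, c3, c4, c5, c6⟩, w, w0, w1, k1, k2, k3, k4⟩ := hab i j hi hj hij
      have d := n2 i hi j hj hij
      have e0 := n0 i hi
      by_contra hcon
      push Not at hcon
      rcases hcon.lt_or_eq with hlt | heq
      · have := c5 (n i) (by linarith) (by linarith)
        linarith
      · rw [heq] at d; linarith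
    · intro i hi j hj hij
      obtain ⟨⟨c1, c2, c3, c4, c5, c6⟩, w, w0, w1, k1, k2, k3, k4⟩ := hab i j hi hj hij
      have d := n2 i hi j hj hij
      have e0 := n1 i hi
      by_contra hcon
      push Not at hcon
      rw [show n i = (n i - 2 * Real.pi) + 2 * Real.pi by ring, Ha_per, Ha_per] at d
      rcases hcon.lt_or_eq with hlt | heq
      · have := c5 (n i - 2 * Real.pi) (by linarith) (by linarith)
        linarith
      · rw [← heq] at d
        simp only [add_sub_cancel_right] at d
        linarith
    · intro i hi j hj
      exact (m1 j hj).trans (n0 i hi)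
    · intro i hi j hj
      linarith [m0 j hj, n1 i hi]
    · intro i hi j hj k hk h1 h2 h3
      obtain ⟨s, t, g1, g2⟩ := gp i hi j hj k hk h1 h2 h3
      have hne : s ≠ 0 ∨ t ≠ 0 := by
        by_contra hcon
        push Not at hcon
        obtain ⟨rfl, rfl⟩ := hcon
        rw [Hs_zero (hcomp i hi) (hnem i hi), Hs_zero (hcomp j hj) (hnem j hj)] at g1
        exact lt_irrefl _ g1
      obtain ⟨r, hr, θ, e1, e2⟩ := exists_angle_any s t hne
      rw [e1, e2, Hs_smul (hcomp i hi) (hnem i hi) hr, Hs_smul (hcomp j hj) (hnem j hj) hr] at g1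
      rw [e1, e2, Hs_smul (hcomp i hi) (hnem i hi) hr, Hs_smul (hcomp k hk) (hnem k hk) hr] at g2
      exact ⟨θ, lt_of_mul_lt_mul_left g1 hr.le, lt_of_mul_lt_mul_left g2 hr.le⟩
  obtain ⟨G, hG, hcard, htop⟩ := hsys.main p hc
  refine ⟨G, hG, hcard, fun i hi => ?_⟩
  obtain ⟨θ, hθ⟩ := htop i hi
  exact ⟨Real.cos θ, Real.sin θ, hθ⟩

/-- The middle function exceeds the two others somewhere. -/
def PRel {α : Type*} (f : α → ℝ → ℝ) (i j k : α) : Prop := ∃ x, f i x < f j x ∧ f k x < f j x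

/-- Abstract pseudoline systems. -/
structure PSys {α : Type*} (key : α → ℝ) (S : Finset α) (f : α → ℝ → ℝ) : Prop where
  inj : Set.InjOn key S
  mono : ∀ i ∈ S, ∀ j ∈ S, key i < key j → ∀ x y, x < y → f i x ≤ f j x → f i y < f j y
  lo : ∀ i ∈ S, ∀ j ∈ S, key i < key j → ∃ x, f j x < f i x
  hi : ∀ i ∈ S, ∀ j ∈ S, key i < key j → ∃ x, f i x < f j x

namespace PSys
variable {α : Type*} {key : α → ℝ} {S : Finset α} {f : α → ℝ → ℝ}

theorem up (h : PSys key S f) {i j : α} (hi : i ∈ S) (hj : j ∈ S) (hij : key i < key j) {x y : ℝ}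
    (hxy : x ≤ y) (hf : f i x < f j x) : f i y < f j y := by
  rcases hxy.lt_or_eq with h1 | h1
  · exact h.mono i hi j hj hij x y h1 hf.le
  · rw [← h1]; exact hf

theorem down (h : PSys key S f) {i j : α} (hi : i ∈ S) (hj : j ∈ S) (hij : key i < key j) {x y : ℝ}
    (hxy : x ≤ y) (hf : f j y < f i y) : f j x < f i x := by
  by_contra hcon
  push Not at hcon
  rcases hxy.lt_or_eq with h1 | h1
  · exact lt_asymm hf (h.mono i hi j hj hij x y h1 hcon)
  · rw [h1] at hcon; linarith

theorem trn (h : PSys key S f) : Trn key (PRel f) S := by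
  rintro x hx y hy z hz w hw xy yz zw ⟨a, a1, a2⟩ ⟨b, b1, b2⟩
  have hab : a ≤ b := by
    by_contra hcon
    push Not at hcon
    exact lt_asymm a2 (h.up hy hz yz hcon.le b1)
  refine ⟨⟨a, a1, (h.down hz hw zw hab b2).trans a2⟩, ⟨b, (h.up hx hy xy hab a1).trans b1, b2⟩⟩

theorem dom (h : PSys key S f) {G : Finset α} (hG : G ⊆ S) (hc : Clq key (PRel f) G) {j : α} (hj : j ∈ G)
    {x : ℝ}
    (hs : (∀ k ∈ G, key k ≤ key j) ∨ ∃ k0 ∈ G, key j < key k0 ∧ (∀ k ∈ G, key j < key k → key k0 ≤ key k) ∧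
      f k0 x < f j x)
    (hp : (∀ k ∈ G, key j ≤ key k) ∨ ∃ k0 ∈ G, key k0 < key j ∧ (∀ k ∈ G, key k < key j → key k ≤ key k0) ∧
      f k0 x < f j x) :
    ∀ k ∈ G, k ≠ j → f k x < f j x := by
  intro k hk hkj
  have hne : key k ≠ key j := fun e => hkj (h.inj (hG hk) (hG hj) e)
  rcases hne.lt_or_gt with hlt | hlt
  · rcases hp with hp | ⟨k0, hk0, h1, h2, h3⟩
    · exact absurd (hp k hk) (not_le.2 hlt)
    · rcases (h2 k hk hlt).lt_or_eq with h4 | h4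
      · obtain ⟨b, b1, b2⟩ := hc k hk k0 hk0 j hj h4 h1
        have hbx : b ≤ x := by
          by_contra hcon
          push Not at hcon
          exact lt_asymm b2 (h.up (hG hk0) (hG hj) h1 hcon.le h3)
        exact (h.up (hG hk) (hG hk0) h4 hbx b1).trans h3
      · rw [h.inj (hG hk) (hG hk0) h4]; exact h3
  · rcases hs with hs | ⟨k0, hk0, h1, h2, h3⟩
    · exact absurd (hs k hk) (not_le.2 hlt)
    · rcases (h2 k hk hlt).lt_or_eq with h4 | h4
      · obtain ⟨b, b1, b2⟩ := hc j hj k0 hk0 k hk h1 h4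
        have hbx : x ≤ b := by
          by_contra hcon
          push Not at hcon
          exact lt_asymm h3 (h.up (hG hj) (hG hk0) h1 hcon.le b1)
        exact (h.down (hG hk0) (hG hk) h4 hbx b2).trans h3
      · rw [← h.inj (hG hk0) (hG hk) h4]; exact h3

theorem _root_.exists_succ_key {α : Type*} (key : α → ℝ) (G : Finset α) (j : α) :
    (∀ k ∈ G, key k ≤ key j) ∨ ∃ k0 ∈ G, key j < key k0 ∧ (∀ k ∈ G, key j < key k → key k0 ≤ key k) := by
  by_cases hT : (G.filter (fun k => key j < key k)).Nonempty
  · obtain ⟨k0, h1, h2⟩ := (G.filter (fun k => key j < key k)).exists_min_image key hT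
    rw [Finset.mem_filter] at h1
    exact Or.inr ⟨k0, h1.1, h1.2, fun k hk hjk => h2 k (by simp [hk, hjk])⟩
  · left
    intro k hk
    by_contra hcon
    push Not at hcon
    exact hT ⟨k, by simp [hk, hcon]⟩

theorem _root_.exists_pred_key {α : Type*} (key : α → ℝ) (G : Finset α) (j : α) :
    (∀ k ∈ G, key j ≤ key k) ∨ ∃ k0 ∈ G, key k0 < key j ∧ (∀ k ∈ G, key k < key j → key k ≤ key k0) := by
  rcases exists_succ_key (fun k => - key k) G j with h | ⟨k0, h1, h2, h3⟩
  · exact Or.inl fun k hk => by linarith [h k hk]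
  · exact Or.inr ⟨k0, h1, by linarith, fun k hk hlt => by linarith [h3 k hk (by linarith)]⟩

theorem top (h : PSys key S f) {G : Finset α} (hG : G ⊆ S) (hc : Clq key (PRel f) G) {j : α} (hj : j ∈ G) :
    ∃ x, ∀ k ∈ G, k ≠ j → f k x < f j x := by
  rcases exists_succ_key key G j with hs | ⟨k0, a1, a2, a3⟩ <;>
    rcases exists_pred_key key G j with hp | ⟨k1, b1, b2, b3⟩
  · exact ⟨0, h.dom hG hc hj (Or.inl hs) (Or.inl hp)⟩
  · obtain ⟨x, hx⟩ := h.hi k1 (hG b1) j (hG hj) b2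
    exact ⟨x, h.dom hG hc hj (Or.inl hs) (Or.inr ⟨k1, b1, b2, b3, hx⟩)⟩
  · obtain ⟨x, hx⟩ := h.lo j (hG hj) k0 (hG a1) a2
    exact ⟨x, h.dom hG hc hj (Or.inr ⟨k0, a1, a2, a3, hx⟩) (Or.inl hp)⟩
  · obtain ⟨x, hx1, hx2⟩ := hc k1 b1 j hj k0 a1 b2 a2
    exact ⟨x, h.dom hG hc hj (Or.inr ⟨k0, a1, a2, a3, hx2⟩) (Or.inr ⟨k1, b1, b2, b3, hx1⟩)⟩

end PSys

theorem Hs_tilt {A A' : Set (ℝ × ℝ)} (hA : IsCompact A) (hne : A.Nonempty) (hA' : IsCompact A')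
    (hne' : A'.Nonempty) {u : ℝ} (e : ℝ) (hsep : ∀ p ∈ A, ∀ q ∈ A', u * p.1 < u * q.1) :
    ∃ x, Hs A x e < Hs A' x e := by
  have h0 : Hs A u 0 < Hs A' u 0 := Hs_sep_lt hA hne hA' hne' (by simpa using hsep)
  have ho : IsOpen {d : ℝ | Hs A u (d * e) < Hs A' u (d * e)} := by
    have hg : Continuous (fun d : ℝ => (u, d * e)) := by fun_prop
    exact isOpen_lt ((Hs_cont hA).comp hg) ((Hs_cont hA').comp hg)
  have hm : (0 : ℝ) ∈ {d : ℝ | Hs A u (d * e) < Hs A' u (d * e)} := by simpa using h0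
  obtain ⟨r, hr, hb⟩ := Metric.isOpen_iff.1 ho 0 hm
  have h1 : r / 2 ∈ Metric.ball (0 : ℝ) r := by
    rw [Metric.mem_ball, Real.dist_eq, sub_zero, abs_of_pos (by positivity)]; linarith
  have h2 : Hs A u (r / 2 * e) < Hs A' u (r / 2 * e) := hb h1
  refine ⟨u / (r / 2), ?_⟩
  have e1 : u = (r / 2) * (u / (r / 2)) := by field_simp
  rw [e1, Hs_smul hA hne (by positivity), Hs_smul hA' hne' (by positivity)] at h2
  exact lt_of_mul_lt_mul_left h2 (by positivity)

/-- The projective transformation used for separated families. -/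
noncomputable def pj (p : ℝ × ℝ) : ℝ × ℝ := (p.1 / p.2, 1 / p.2)

theorem pj_compact {A : Set (ℝ × ℝ)} (hA : IsCompact A) (hp : ∀ p ∈ A, 0 < p.2) : IsCompact (pj '' A) := by
  apply hA.image_of_continuousOn
  have h2 : ∀ p ∈ A, p.2 ≠ 0 := fun p h => (hp p h).ne'
  unfold pj
  fun_prop (disch := assumption)

theorem pj_psys {α : Type*} (S : Finset α) (B : α → Set (ℝ × ℝ)) (key : α → ℝ) (hinj : Set.InjOn key S)
    (hcomp : ∀ i ∈ S, IsCompact (B i)) (hne : ∀ i ∈ S, (B i).Nonempty)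
    (hpos : ∀ i ∈ S, ∀ p ∈ B i, 0 < p.2)
    (hord : ∀ i ∈ S, ∀ j ∈ S, key i < key j → ∀ p ∈ B i, ∀ q ∈ B j, p.1 / p.2 < q.1 / q.2) (e : ℝ) :
    PSys key S (fun i x => Hs (pj '' B i) x e) := by
  have hc : ∀ i ∈ S, IsCompact (pj '' B i) := fun i hi => pj_compact (hcomp i hi) (hpos i hi)
  have hn : ∀ i ∈ S, (pj '' B i).Nonempty := fun i hi => (hne i hi).image _
  have ho : ∀ i ∈ S, ∀ j ∈ S, key i < key j → ∀ p ∈ pj '' B i, ∀ q ∈ pj '' B j, p.1 < q.1 := by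
    rintro i hi j hj hij _ ⟨p, hp, rfl⟩ _ ⟨q, hq, rfl⟩
    exact hord i hi j hj hij p hp q hq
  refine ⟨hinj, ?_, ?_, ?_⟩
  · intro i hi j hj hij x y hxy hle
    have := Hs_star (hc i hi) (hn i hi) (hc j hj) (hn j hj) (u := 1) (v := 0)
      (by simpa using ho i hi j hj hij) hle zero_le_one (sub_pos.2 hxy)
    simpa using this
  · intro i hi j hj hij
    exact Hs_tilt (hc j hj) (hn j hj) (hc i hi) (hn i hi) (u := -1) e (by
      intro p hp q hq
      linarith [ho i hi j hj hij q hq p hp])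
  · intro i hi j hj hij
    exact Hs_tilt (hc i hi) (hn i hi) (hc j hj) (hn j hj) (u := 1) e (by
      intro p hp q hq
      linarith [ho i hi j hj hij p hp q hq])

theorem pj_lt {A : Set (ℝ × ℝ)} (hA : IsCompact A) (hne : A.Nonempty) (hp : ∀ p ∈ A, 0 < p.2) (s t c : ℝ) :
    Hs A s t < c ↔ Hs (pj '' A) s (-c) < -t := by
  have hc := pj_compact hA hp
  have key : ∀ p ∈ A, (s * p.1 + t * p.2 < c ↔ s * (pj p).1 + (-c) * (pj p).2 < -t) := by
    intro p h
    have h2 := hp p h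
    have e : s * (pj p).1 + (-c) * (pj p).2 = (s * p.1 - c) / p.2 := by
      simp only [pj]; field_simp; ring
    rw [e, div_lt_iff₀ h2]
    constructor <;> intro h <;> linarith
  constructor
  · intro h
    apply Hs_lt hc (hne.image _)
    rintro _ ⟨p, h1, rfl⟩
    exact (key p h1).1 ((Hs_le hA s t h1).trans_lt h)
  · intro h
    apply Hs_lt hA hne
    intro p h1
    exact (key p h1).2 ((Hs_le hc s (-c) ⟨p, h1, rfl⟩).trans_lt h)

theorem pj_le {A : Set (ℝ × ℝ)} (hA : IsCompact A) (hne : A.Nonempty) (hp : ∀ p ∈ A, 0 < p.2) (s t c : ℝ) :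
    Hs A s t ≤ c ↔ Hs (pj '' A) s (-c) ≤ -t := by
  have hc := pj_compact hA hp
  have key : ∀ p ∈ A, (s * p.1 + t * p.2 ≤ c ↔ s * (pj p).1 + (-c) * (pj p).2 ≤ -t) := by
    intro p h
    have h2 := hp p h
    have e : s * (pj p).1 + (-c) * (pj p).2 = (s * p.1 - c) / p.2 := by
      simp only [pj]; field_simp; ring
    rw [e, div_le_iff₀ h2]
    constructor <;> intro h <;> linarith
  constructor
  · intro h
    obtain ⟨_, ⟨p, h1, rfl⟩, e⟩ := Hs_att hc (hne.image pj) s (-c)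
    rw [e]
    exact (key p h1).1 ((Hs_le hA s t h1).trans h)
  · intro h
    obtain ⟨p, h1, e⟩ := Hs_att hA hne s t
    rw [e]
    exact (key p h1).2 ((Hs_le hc s (-c) ⟨p, h1, rfl⟩).trans h)

theorem pj_far {A A' : Set (ℝ × ℝ)} (hA : IsCompact A) (hne : A.Nonempty) (hp : ∀ p ∈ A, 0 < p.2)
    (hA' : IsCompact A') (hne' : A'.Nonempty) (hp' : ∀ p ∈ A', 0 < p.2) {s t : ℝ} (h : 0 < Hs A' s t) :
    Hs A s t < Hs A' s t ↔
      Hs (pj '' A) (s / Hs A' s t) (-1) < Hs (pj '' A') (s / Hs A' s t) (-1) := by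
  set c := Hs A' s t with hcdef
  have h1 : Hs (pj '' A') s (-c) = -t := by
    apply le_antisymm ((pj_le hA' hne' hp' s t c).1 le_rfl)
    by_contra hcon
    push Not at hcon
    exact lt_irrefl _ ((pj_lt hA' hne' hp' s t c).2 hcon)
  have e1 : s = c * (s / c) := by field_simp
  have e2 : -c = c * (-1) := by ring
  rw [pj_lt hA hne hp s t c, ← h1]
  conv_lhs => rw [e1, e2]
  rw [Hs_smul (pj_compact hA hp) (hne.image _) h, Hs_smul (pj_compact hA' hp') (hne'.image _) h]
  exact mul_lt_mul_iff_right₀ h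

theorem pj_dich {α : Type*} (B : α → Set (ℝ × ℝ)) {i j k : α}
    (hi : IsCompact (B i)) (hin : (B i).Nonempty) (hip : ∀ p ∈ B i, 0 < p.2)
    (hj : IsCompact (B j)) (hjn : (B j).Nonempty) (hjp : ∀ p ∈ B j, 0 < p.2)
    (hk : IsCompact (B k)) (hkn : (B k).Nonempty) (hkp : ∀ p ∈ B k, 0 < p.2)
    (h : ∃ s t, Hs (B i) s t < Hs (B j) s t ∧ Hs (B k) s t < Hs (B j) s t) :
    PRel (fun i x => Hs (pj '' B i) x 1) i j k ∨ PRel (fun i x => Hs (pj '' B i) x (-1)) i j k := by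
  obtain ⟨s, t, h1, h2⟩ := h
  obtain ⟨c, hc0, c1, c2, c3⟩ : ∃ c, c ≠ 0 ∧ Hs (B i) s t < c ∧ Hs (B k) s t < c ∧ c < Hs (B j) s t := by
    obtain ⟨c, c1, c2⟩ := exists_between (max_lt h1 h2)
    obtain ⟨d, d1, d2⟩ := exists_between c2
    have c3 := max_lt_iff.1 c1
    by_cases hc : c = 0
    · exact ⟨d, by rintro rfl; rw [hc] at d1; exact lt_irrefl _ d1, c3.1.trans d1, c3.2.trans d1, d2⟩
    · exact ⟨c, hc, c3.1, c3.2, c2⟩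
  have k1 := (pj_lt hi hin hip s t c).1 c1
  have k2 := (pj_lt hk hkn hkp s t c).1 c2
  have k3 : -t < Hs (pj '' B j) s (-c) := by
    by_contra hcon
    push Not at hcon
    exact absurd ((pj_le hj hjn hjp s t c).2 hcon) (not_le.2 c3)
  have g1 := k1.trans k3
  have g2 := k2.trans k3
  rcases hc0.lt_or_gt with hc | hc
  · left
    have e1 : s = (-c) * (s / (-c)) := by field_simp
    have e2 : -c = (-c) * 1 := by ring
    have hc' : 0 < -c := by linarith
    have e : ∀ A : Set (ℝ × ℝ), IsCompact A → A.Nonempty → Hs A s (-c) = (-c) * Hs A (s / (-c)) 1 := by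
      intro A hA hne
      rw [← Hs_smul hA hne hc', ← e1, mul_one]
    rw [e _ (pj_compact hi hip) (hin.image _), e _ (pj_compact hj hjp) (hjn.image _)] at g1
    rw [e _ (pj_compact hk hkp) (hkn.image _), e _ (pj_compact hj hjp) (hjn.image _)] at g2
    exact ⟨s / (-c), lt_of_mul_lt_mul_left g1 hc'.le, lt_of_mul_lt_mul_left g2 hc'.le⟩
  · right
    have e1 : s = c * (s / c) := by field_simp
    have e : ∀ A : Set (ℝ × ℝ), IsCompact A → A.Nonempty → Hs A s (-c) = c * Hs A (s / c) (-1) := by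
      intro A hA hne
      rw [← Hs_smul hA hne hc, ← e1, mul_neg_one]
    rw [e _ (pj_compact hi hip) (hin.image _), e _ (pj_compact hj hjp) (hjn.image _)] at g1
    rw [e _ (pj_compact hk hkp) (hkn.image _), e _ (pj_compact hj hjp) (hjn.image _)] at g2
    exact ⟨s / c, lt_of_mul_lt_mul_left g1 hc.le, lt_of_mul_lt_mul_left g2 hc.le⟩

theorem core1 {α : Type*} [DecidableEq α] (S : Finset α) (x : α) (hx : x ∉ S) (B : α → Set (ℝ × ℝ))
    (key : α → ℝ) (hinj : Set.InjOn key S)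
    (hcomp : ∀ i ∈ S, IsCompact (B i)) (hconv : ∀ i ∈ S, Convex ℝ (B i)) (hnem : ∀ i ∈ S, (B i).Nonempty)
    (hxc : IsCompact (B x)) (hxv : Convex ℝ (B x)) (hx0 : ((0 : ℝ), (0 : ℝ)) ∈ B x)
    (hdis : ∀ i ∈ S, Disjoint (B x) (B i))
    (hpos : ∀ i ∈ S, ∀ p ∈ B i, 0 < p.2)
    (hord : ∀ i ∈ S, ∀ j ∈ S, key i < key j → ∀ p ∈ B i, ∀ q ∈ B j, p.1 / p.2 < q.1 / q.2)
    (gp : ∀ i ∈ insert x S, ∀ j ∈ insert x S, ∀ k ∈ insert x S, i ≠ j → i ≠ k → j ≠ k →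
      ∃ s t, Hs (B j) s t < Hs (B i) s t ∧ Hs (B k) s t < Hs (B i) s t)
    (b : ℕ) (hc : Nat.choose (b + 1 + b) (b + 1) < S.card) :
    ∃ G ⊆ insert x S, G.card = b + 3 ∧
      ∀ i ∈ G, ∃ s t, ∀ j ∈ G, j ≠ i → Hs (B j) s t < Hs (B i) s t := by
  have P1 := pj_psys S B key hinj hcomp hnem hpos hord 1
  have P2 := pj_psys S B key hinj hcomp hnem hpos hord (-1)
  have hdich : ∀ i ∈ S, ∀ j ∈ S, ∀ k ∈ S, key i < key j → key j < key k →
      PRel (fun i x => Hs (pj '' B i) x 1) i j k ∨ PRel (fun i x => Hs (pj '' B i) x (-1)) i j k := by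
    intro i hi j hj k hk hij hjk
    apply pj_dich B (hcomp i hi) (hnem i hi) (hpos i hi) (hcomp j hj) (hnem j hj) (hpos j hj)
      (hcomp k hk) (hnem k hk) (hpos k hk)
    apply gp j (by simp [hj]) i (by simp [hi]) k (by simp [hk])
    · rintro rfl; exact lt_irrefl _ hij
    · rintro rfl; exact lt_irrefl _ hjk
    · rintro rfl; exact lt_asymm hij hjk
  rcases erdos_szekeres_triples key _ _ _ (b + 1) b rfl S hinj P1.trn P2.trn hdich hc with
    ⟨G, hG, hcard, hq⟩ | ⟨G, hG, hcard, hq⟩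
  · refine ⟨G, hG.trans (Finset.subset_insert _ _), by omega, fun i hi => ?_⟩
    obtain ⟨a, ha⟩ := P1.top hG hq hi
    refine ⟨a, -Hs (pj '' B i) a 1, fun j hj hji => ?_⟩
    have h1 := ha j hj hji
    have h2 : Hs (B j) a (-Hs (pj '' B i) a 1) < -1 := by
      rw [pj_lt (hcomp j (hG hj)) (hnem j (hG hj)) (hpos j (hG hj))]
      simpa using h1
    have h3 : ¬ Hs (B i) a (-Hs (pj '' B i) a 1) < -1 := by
      rw [pj_lt (hcomp i (hG hi)) (hnem i (hG hi)) (hpos i (hG hi))]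
      simp
    linarith
  · have hxG : x ∉ G := fun h => hx (hG h)
    refine ⟨insert x G, Finset.insert_subset_insert _ hG, by rw [Finset.card_insert_of_notMem hxG, hcard], ?_⟩
    intro i hi
    rcases Finset.mem_insert.1 hi with rfl | hiG
    · refine ⟨0, -1, fun j hj hji => ?_⟩
      have hj : j ∈ G := by
        rcases Finset.mem_insert.1 hj with h | h
        · exact absurd h hji
        · exact h
      have h1 := Hs_le hxc 0 (-1) hx0
      have h2 : Hs (B j) 0 (-1) < 0 := Hs_lt (hcomp j (hG hj)) (hnem j (hG hj)) (by
        intro p hp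
        linarith [hpos j (hG hj) p hp])
      simp only [mul_zero, add_zero] at h1
      linarith
    · have hi := hiG
      have hiS := hG hi
      have hix : i ≠ x := by rintro rfl; exact hxG hiG
      -- it suffices to dominate the neighbours
      have fin : ∀ s t, Hs (B x) s t < Hs (B i) s t →
          ((∀ k ∈ G, key k ≤ key i) ∨ ∃ k0 ∈ G, key i < key k0 ∧
            (∀ k ∈ G, key i < key k → key k0 ≤ key k) ∧ Hs (B k0) s t < Hs (B i) s t) →
          ((∀ k ∈ G, key i ≤ key k) ∨ ∃ k0 ∈ G, key k0 < key i ∧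
            (∀ k ∈ G, key k < key i → key k ≤ key k0) ∧ Hs (B k0) s t < Hs (B i) s t) →
          ∀ j ∈ insert x G, j ≠ i → Hs (B j) s t < Hs (B i) s t := by
        intro s t h1 hs hp j hj hji
        have hpos0 : 0 < Hs (B i) s t := by
          have := Hs_le hxc s t hx0
          simp only [mul_zero, add_zero] at this
          linarith
        have hiff : ∀ k ∈ G, _ := fun k hk => pj_far (hcomp k (hG hk)) (hnem k (hG hk)) (hpos k (hG hk))
          (hcomp i hiS) (hnem i hiS) (hpos i hiS) hpos0
        rcases Finset.mem_insert.1 hj with rfl | hj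
        · exact h1
        · rw [hiff j hj]
          refine P2.dom hG hq hi ?_ ?_ j hj hji
          · rcases hs with hs | ⟨k0, a1, a2, a3, a4⟩
            · exact Or.inl hs
            · exact Or.inr ⟨k0, a1, a2, a3, (hiff k0 a1).1 a4⟩
          · rcases hp with hs | ⟨k0, a1, a2, a3, a4⟩
            · exact Or.inl hs
            · exact Or.inr ⟨k0, a1, a2, a3, (hiff k0 a1).1 a4⟩
      have gpx : ∀ k ∈ G, k ≠ i → ∃ s t, Hs (B x) s t < Hs (B i) s t ∧ Hs (B k) s t < Hs (B i) s t := by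
        intro k hk hki
        exact gp i (by simp [hiS]) x (by simp) k (by simp [hG hk]) hix (Ne.symm hki)
          (by rintro rfl; exact hxG hk)
      rcases exists_succ_key key G i with hs | ⟨k0, a1, a2, a3⟩ <;>
        rcases exists_pred_key key G i with hp | ⟨k1, b1, b2, b3⟩
      · -- isolated element: impossible since there are at least two
        exfalso
        have : 1 < G.card := by omega
        obtain ⟨k, hk, hki⟩ := Finset.exists_mem_ne this i
        exact hki (hinj (hG hk) hiS (le_antisymm (hs k hk) (hp k hk)))
      · obtain ⟨s, t, g1, g2⟩ := gpx k1 b1 (by rintro rfl; exact lt_irrefl _ b2)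
        exact ⟨s, t, fin s t g1 (Or.inl hs) (Or.inr ⟨k1, b1, b2, b3, g2⟩)⟩
      · obtain ⟨s, t, g1, g2⟩ := gpx k0 a1 (by rintro rfl; exact lt_irrefl _ a2)
        exact ⟨s, t, fin s t g1 (Or.inr ⟨k0, a1, a2, a3, g2⟩) (Or.inl hp)⟩
      · obtain ⟨u, v, huv⟩ := sep_pair hxc hxv (hcomp i hiS) (hconv i hiS) (hdis i hiS)
        have hxn : (B x).Nonempty := ⟨_, hx0⟩
        have hst : StarConvex ℝ (u, v) {q : ℝ × ℝ | Hs (B x) q.1 q.2 < Hs (B i) q.1 q.2} := by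
          intro q hq a c ha hc hac
          rcases ha.lt_or_eq with h | h
          · have := Hs_star hxc hxn (hcomp i hiS) (hnem i hiS) huv (le_of_lt hq) hc h
            simp only [Set.mem_ofPred_eq, Prod.fst_add, Prod.snd_add, Prod.smul_fst, Prod.smul_snd, smul_eq_mul]
            rw [add_comm (a * u), add_comm (a * v)]
            exact this
          · have : c = 1 := by linarith
            subst this
            rw [← h]
            simpa using hq
        have hne : (u, v) ∈ {q : ℝ × ℝ | Hs (B x) q.1 q.2 < Hs (B i) q.1 q.2} :=
          Hs_sep_lt hxc hxn (hcomp i hiS) (hnem i hiS) huv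
        have hpre : IsPreconnected {q : ℝ × ℝ | Hs (B x) q.1 q.2 < Hs (B i) q.1 q.2} :=
          (hst.isPathConnected hne).isConnected.isPreconnected
        obtain ⟨q, q1, q2, q3⟩ := hpre {q : ℝ × ℝ | Hs (B k0) q.1 q.2 < Hs (B i) q.1 q.2}
          {q : ℝ × ℝ | Hs (B k1) q.1 q.2 < Hs (B i) q.1 q.2}
          (isOpen_lt (Hs_cont (hcomp k0 (hG a1))) (Hs_cont (hcomp i hiS)))
          (isOpen_lt (Hs_cont (hcomp k1 (hG b1))) (Hs_cont (hcomp i hiS)))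
          (by
            intro q hq1
            have hq1 : Hs (B x) q.1 q.2 < Hs (B i) q.1 q.2 := hq1
            have hpos0 : 0 < Hs (B i) q.1 q.2 := by
              have := Hs_le hxc q.1 q.2 hx0
              simp only [mul_zero, add_zero] at this
              linarith
            have hiff : ∀ k ∈ G, _ := fun k hk => pj_far (hcomp k (hG hk)) (hnem k (hG hk)) (hpos k (hG hk))
              (hcomp i hiS) (hnem i hiS) (hpos i hiS) hpos0
            obtain ⟨c, c1, c2⟩ := hq k1 b1 i hi k0 a1 b2 a2
            rcases le_total (q.1 / Hs (B i) q.1 q.2) c with h | h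
            · left
              exact (hiff k0 a1).2 (P2.down hiS (hG a1) a2 h c2)
            · right
              exact (hiff k1 b1).2 (P2.up (hG b1) hiS b2 h c1))
          (by
            obtain ⟨s, t, g1, g2⟩ := gpx k0 a1 (by rintro rfl; exact lt_irrefl _ a2)
            exact ⟨(s, t), g1, g2⟩)
          (by
            obtain ⟨s, t, g1, g2⟩ := gpx k1 b1 (by rintro rfl; exact lt_irrefl _ b2)
            exact ⟨(s, t), g1, g2⟩)
        exact ⟨q.1, q.2, fin q.1 q.2 q1 (Or.inr ⟨k0, a1, a2, a3, q2⟩) (Or.inr ⟨k1, b1, b2, b3, q3⟩)⟩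

theorem compact_hull_union {A B : Set Plane} (hA : ConvexBody2 A) (hB : ConvexBody2 B) :
    IsCompact (convexHull ℝ (A ∪ B)) := by
  obtain ⟨a1, a2, a3⟩ := hA
  obtain ⟨b1, b2, b3⟩ := hB
  rw [convexHull_union a1 b1, a3.convexHull_eq, b3.convexHull_eq]
  have : convexJoin ℝ A B =
      (fun z : (Plane × Plane) × ℝ => (1 - z.2) • z.1.1 + z.2 • z.1.2) '' ((A ×ˢ B) ×ˢ Set.Icc (0 : ℝ) 1) := by
    ext x
    rw [mem_convexJoin]
    constructor
    · rintro ⟨a, ha, b, hb, hx⟩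
      rw [segment_eq_image] at hx
      obtain ⟨t, ht, rfl⟩ := hx
      exact ⟨((a, b), t), ⟨⟨ha, hb⟩, ht⟩, rfl⟩
    · rintro ⟨⟨⟨a, b⟩, t⟩, ⟨⟨ha, hb⟩, ht⟩, rfl⟩
      refine ⟨a, ha, b, hb, ?_⟩
      rw [segment_eq_image]
      exact ⟨t, ht, rfl⟩
  rw [this]
  apply ((a2.prod b2).prod isCompact_Icc).image
  fun_prop

theorem genpos_fun {F : Set (Set Plane)} (hb : ∀ A ∈ F, ConvexBody2 A) (hg : GenPos F)
    {A B C : Set Plane} (hA : A ∈ F) (hB : B ∈ F) (hC : C ∈ F) (hAB : A ≠ B) (hAC : A ≠ C) (hBC : B ≠ C) :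
    ∃ s t : ℝ, ∃ p ∈ A, ∀ q ∈ B ∪ C, s * q 0 + t * q 1 < s * p 0 + t * p 1 := by
  have h1 : ConvexPos {A, B, C} := by
    apply hg
    · intro X hX
      rcases hX with rfl | rfl | rfl <;> assumption
    · exact Set.ncard_eq_three.2 ⟨A, B, C, hAB, hAC, hBC, rfl⟩
  have h2 := h1 A (by simp)
  have e1 : ⋃₀ ({A, B, C} : Set (Set Plane)) = A ∪ (B ∪ C) := by simp
  have e2 : ⋃₀ (({A, B, C} : Set (Set Plane)) \ {A}) = B ∪ C := by
    have : ({A, B, C} : Set (Set Plane)) \ {A} = {B, C} := by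
      ext X
      simp only [Set.mem_sdiff, Set.mem_insert_iff, Set.mem_singleton_iff]
      constructor
      · tauto
      · rintro (rfl | rfl)
        · exact ⟨by tauto, fun h => hAB h.symm⟩
        · exact ⟨by tauto, fun h => hAC h.symm⟩
    rw [this]; simp
  rw [e1, e2] at h2
  have h3 : ¬ A ⊆ convexHull ℝ (B ∪ C) := by
    intro h
    apply h2
    apply le_antisymm
    · exact convexHull_min (Set.union_subset h (subset_convexHull ℝ _)) (convex_convexHull ℝ _)
    · exact convexHull_mono Set.subset_union_right
  obtain ⟨p, hp, hpn⟩ := Set.not_subset.1 h3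
  obtain ⟨f, u, f1, f2⟩ := geometric_hahn_banach_closed_point (convex_convexHull ℝ (B ∪ C))
    (compact_hull_union (hb B hB) (hb C hC)).isClosed hpn
  have hf : ∀ q : Plane, f q = f (!₂[1, 0]) * q 0 + f (!₂[0, 1]) * q 1 := by
    intro q
    have : q = q 0 • (!₂[(1 : ℝ), 0] : Plane) + q 1 • (!₂[(0 : ℝ), 1] : Plane) := by
      ext i; fin_cases i <;> simp
    conv_lhs => rw [this]
    rw [map_add, map_smul, map_smul]; simp only [smul_eq_mul]; ring
  refine ⟨f (!₂[1, 0]), f (!₂[0, 1]), p, hp, fun q hq => ?_⟩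
  rw [← hf, ← hf]
  exact (f1 q (subset_convexHull ℝ _ hq)).trans f2

theorem convexpos_of_top {G : Set (Set Plane)}
    (h : ∀ A ∈ G, ∃ s t : ℝ, ∃ p ∈ A, ∀ B ∈ G, B ≠ A → ∀ q ∈ B, s * q 0 + t * q 1 < s * p 0 + t * p 1) :
    ConvexPos G := by
  intro A hA e
  obtain ⟨s, t, p, hp, hh⟩ := h A hA
  have h1 : p ∈ convexHull ℝ (⋃₀ G) := subset_convexHull ℝ _ ⟨A, hA, hp⟩
  rw [e] at h1
  have h2 : convexHull ℝ (⋃₀ (G \ {A})) ⊆ {q : Plane | s * q 0 + t * q 1 < s * p 0 + t * p 1} := by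
    apply convexHull_min
    · rintro q ⟨B, ⟨hB, hBA⟩, hq⟩
      exact hh B hB hBA q hq
    · apply convex_halfSpace_lt
      constructor
      · intro x y; simp; ring
      · intro c x; simp; ring
  have h3 : s * p 0 + t * p 1 < s * p 0 + t * p 1 := h2 h1
  exact lt_irrefl _ h3

/-- Affine map from the plane to pairs. -/
def aff (a b e c d h : ℝ) (q : Plane) : ℝ × ℝ := (a * q 0 + b * q 1 + e, c * q 0 + d * q 1 + h)

theorem aff_cont (a b e c d h : ℝ) : Continuous (aff a b e c d h) := by
  unfold aff
  fun_prop

theorem aff_convex (a b e c d h : ℝ) {A : Set Plane} (hA : Convex ℝ A) : Convex ℝ (aff a b e c d h '' A) := by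
  rintro _ ⟨p, hp, rfl⟩ _ ⟨q, hq, rfl⟩ x y hx hy hxy
  refine ⟨x • p + y • q, hA hp hq hx hy hxy, ?_⟩
  have : y = 1 - x := by linarith
  subst this
  ext <;> simp [aff] <;> ring

theorem aff_disj {a b e c d h : ℝ} (hD : a * d - b * c ≠ 0) {A B : Set Plane} (hAB : Disjoint A B) :
    Disjoint (aff a b e c d h '' A) (aff a b e c d h '' B) := by
  apply Set.disjoint_image_of_injective _ hAB
  intro p q hpq
  simp only [aff, Prod.mk.injEq] at hpq
  obtain ⟨h1, h2⟩ := hpq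
  have k0 : (a * d - b * c) * (p 0 - q 0) = 0 := by linear_combination d * h1 - b * h2
  have k1 : (a * d - b * c) * (p 1 - q 1) = 0 := by linear_combination a * h2 - c * h1
  have l0 := (mul_eq_zero.1 k0).resolve_left hD
  have l1 := (mul_eq_zero.1 k1).resolve_left hD
  ext i
  fin_cases i
  · exact sub_eq_zero.1 l0
  · exact sub_eq_zero.1 l1

theorem aff_gp {a b e c d h : ℝ} (hD : a * d - b * c ≠ 0)
    {F : Set (Set Plane)} (hb : ∀ A ∈ F, ConvexBody2 A) (hg : GenPos F)
    {A B C : Set Plane} (hA : A ∈ F) (hB : B ∈ F) (hC : C ∈ F) (hAB : A ≠ B) (hAC : A ≠ C) (hBC : B ≠ C) :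
    ∃ s t : ℝ, Hs (aff a b e c d h '' B) s t < Hs (aff a b e c d h '' A) s t ∧
      Hs (aff a b e c d h '' C) s t < Hs (aff a b e c d h '' A) s t := by
  obtain ⟨s, t, p, hp, hh⟩ := genpos_fun hb hg hA hB hC hAB hAC hBC
  have hcomp : ∀ X ∈ F, IsCompact (aff a b e c d h '' X) := fun X hX => (hb X hX).2.1.image (aff_cont _ _ _ _ _ _)
  have key : ∀ q : Plane, (s * d - t * c) / (a * d - b * c) * (aff a b e c d h q).1 +
      (t * a - s * b) / (a * d - b * c) * (aff a b e c d h q).2 = s * q 0 + t * q 1 +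
      ((s * d - t * c) / (a * d - b * c) * e + (t * a - s * b) / (a * d - b * c) * h) := by
    intro q
    have hr := mul_inv_cancel₀ hD
    simp only [aff, div_eq_mul_inv]
    linear_combination (s * q 0 + t * q 1) * hr
  have hle := Hs_le (hcomp A hA) ((s * d - t * c) / (a * d - b * c)) ((t * a - s * b) / (a * d - b * c))
    (Set.mem_image_of_mem (aff a b e c d h) hp)
  refine ⟨(s * d - t * c) / (a * d - b * c), (t * a - s * b) / (a * d - b * c), ?_, ?_⟩
  · refine lt_of_lt_of_le (Hs_lt (hcomp B hB) ((hb B hB).1.image _) ?_) hle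
    rintro _ ⟨q, hq, rfl⟩
    rw [key, key]
    have := hh q (Or.inl hq)
    linarith
  · refine lt_of_lt_of_le (Hs_lt (hcomp C hC) ((hb C hC).1.image _) ?_) hle
    rintro _ ⟨q, hq, rfl⟩
    rw [key, key]
    have := hh q (Or.inr hq)
    linarith

theorem aff_back {a b e c d h : ℝ} {F : Set (Set Plane)} (hb : ∀ A ∈ F, ConvexBody2 A)
    {G : Finset (Set Plane)} (hG : ∀ A ∈ G, A ∈ F)
    (ht : ∀ i ∈ G, ∃ s t, ∀ j ∈ G, j ≠ i →
      Hs (aff a b e c d h '' j) s t < Hs (aff a b e c d h '' i) s t) : ConvexPos (G : Set (Set Plane)) := by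
  have hcomp : ∀ X ∈ F, IsCompact (aff a b e c d h '' X) := fun X hX => (hb X hX).2.1.image (aff_cont _ _ _ _ _ _)
  apply convexpos_of_top
  intro A hA
  obtain ⟨s, t, hst⟩ := ht A hA
  obtain ⟨_, ⟨p, hp, rfl⟩, he⟩ := Hs_att (hcomp A (hG A hA)) ((hb A (hG A hA)).1.image _) s t
  refine ⟨s * a + t * c, s * b + t * d, p, hp, fun B hB hBA q hq => ?_⟩
  have h1 := hst B hB hBA
  have h2 := Hs_le (hcomp B (hG B hB)) s t (Set.mem_image_of_mem (aff a b e c d h) hq)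
  rw [he] at h1
  simp only [aff] at h1 h2
  linarith

theorem erdos_szekeres_aux (m : ℕ) (F : Set (Set Plane)) (hF : F.Finite)
    (hcard : (Nat.choose (m + 1 + m) (m + 1) + 1) * Nat.choose (m + 1 + (m + 1)) (m + 1) + 1 ≤ F.ncard)
    (hb : ∀ A ∈ F, ConvexBody2 A) (hd : F.Pairwise Disjoint) (hg : GenPos F) :
    ∃ G ⊆ F, G.ncard = m + 3 ∧ ConvexPos G := by
  classical
  set K := Nat.choose (m + 1 + m) (m + 1) with hK
  set L := Nat.choose (m + 1 + (m + 1)) (m + 1) with hL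
  have hLpos : 0 < L := Nat.choose_pos (by omega)
  have hFpos : 0 < F.ncard := by omega
  obtain ⟨Y0, hY0⟩ := (Set.ncard_pos hF).1 hFpos
  have hUc : IsCompact (⋃₀ F) := hF.isCompact_sUnion fun A hA => (hb A hA).2.1
  have hUn : (⋃₀ F).Nonempty := by
    obtain ⟨y, hy⟩ := (hb Y0 hY0).1
    exact ⟨y, Y0, hY0, hy⟩
  obtain ⟨x0, ⟨X, hX, hxX⟩, hmax⟩ := hUc.exists_isMaxOn hUn
    (f := fun q : Plane => q 0 ^ 2 + q 1 ^ 2) (by fun_prop)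
  set S : Finset (Set Plane) := hF.toFinset.erase X with hS
  have hSF : ∀ A ∈ S, A ∈ F ∧ A ≠ X := by
    intro A hA
    rw [hS, Finset.mem_erase, Set.Finite.mem_toFinset] at hA
    exact ⟨hA.2, hA.1⟩
  have hScard : K * L < S.card := by
    have h1 : S.card = F.ncard - 1 := by
      rw [hS, Finset.card_erase_of_mem (by simpa using hX), Set.ncard_eq_toFinset_card F hF]
    have h2 : (K + 1) * L = K * L + L := by ring
    omega
  set u := x0 0 with hu
  set v := x0 1 with hv
  set U : Plane → ℝ := fun q => -v * q 0 + u * q 1 with hUdef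
  set V : Plane → ℝ := fun q => -u * q 0 + -v * q 1 + (u ^ 2 + v ^ 2) with hVdef
  have hV : ∀ A ∈ S, ∀ q ∈ A, 0 < V q := by
    intro A hA q hq
    obtain ⟨hAF, hAX⟩ := hSF A hA
    have h1 : q 0 ^ 2 + q 1 ^ 2 ≤ u ^ 2 + v ^ 2 := hmax ⟨A, hAF, hq⟩
    have hne : ¬ (q 0 = u ∧ q 1 = v) := by
      rintro ⟨e0, e1⟩
      have : q = x0 := by
        ext i; fin_cases i
        · exact e0
        · exact e1
      rw [this] at hq
      exact Set.disjoint_left.1 (hd hAF hX hAX) hq hxX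
    have h2 : 0 < (q 0 - u) ^ 2 + (q 1 - v) ^ 2 := by
      by_contra hcon
      apply hne
      constructor <;> nlinarith [sq_nonneg (q 0 - u), sq_nonneg (q 1 - v)]
    simp only [hVdef]
    nlinarith
  have hSne : S.Nonempty := Finset.card_pos.1 (by omega)
  have hD : 0 < u ^ 2 + v ^ 2 := by
    obtain ⟨A, hA⟩ := hSne
    obtain ⟨q, hq⟩ := (hb A (hSF A hA).1).1
    have h1 := hV A hA q hq
    by_contra hcon
    have hu0 : u = 0 := by nlinarith [sq_nonneg u, sq_nonneg v]
    have hv0 : v = 0 := by nlinarith [sq_nonneg u, sq_nonneg v]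
    simp [hVdef, hu0, hv0] at h1
  have hτ : ∀ A ∈ S, ContinuousOn (fun q => U q / V q) A := by
    intro A hA
    apply ContinuousOn.div
    · simp only [hUdef]; fun_prop
    · simp only [hVdef]; fun_prop
    · intro q hq; exact (hV A hA q hq).ne'
  have hlr : ∀ A ∈ S, ∃ p ∈ A, ∃ p' ∈ A, ∀ q ∈ A, U p / V p ≤ U q / V q ∧ U q / V q ≤ U p' / V p' := by
    intro A hA
    obtain ⟨A1, A2, A3⟩ := hb A (hSF A hA).1
    obtain ⟨p, hp, hpm⟩ := A2.exists_isMinOn A1 (hτ A hA)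
    obtain ⟨p', hp', hpm'⟩ := A2.exists_isMaxOn A1 (hτ A hA)
    exact ⟨p, hp, p', hp', fun q hq => ⟨hpm hq, hpm' hq⟩⟩
  choose! p hp p' hp' hlr using hlr
  rcases interval_dilworth (fun A => U (p A) / V (p A)) (fun A => U (p' A) / V (p' A)) L K S
    (fun A hA => (hlr A hA _ (hp A hA)).2) hScard with ⟨T, hTS, hTc, hT⟩ | ⟨T, hTS, hTc, c0, hT⟩
  · have hDet : (-v) * (-v) - u * (-u) ≠ 0 := by nlinarith
    have hXT : X ∉ T := fun h => (hSF X (hTS h)).2 rfl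
    have hTF : ∀ A ∈ insert X T, A ∈ F := by
      intro A hA
      rcases Finset.mem_insert.1 hA with rfl | h
      · exact hX
      · exact (hSF A (hTS h)).1
    obtain ⟨G, hG, hGc, hGt⟩ := core1 T X hXT (fun A => aff (-v) u 0 (-u) (-v) (u ^ 2 + v ^ 2) '' A)
      (fun A => U (p A) / V (p A)) (by
        intro i hi j hj hij
        by_contra hne
        have hij : U (p i) / V (p i) = U (p j) / V (p j) := hij
        have k1 := (hlr i (hTS hi) _ (hp i (hTS hi))).2
        have k2 := (hlr j (hTS hj) _ (hp j (hTS hj))).2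
        rcases hT i hi j hj hne with h | h <;> linarith)
      (fun A hA => (hb A (hSF A (hTS hA)).1).2.1.image (aff_cont _ _ _ _ _ _))
      (fun A hA => aff_convex _ _ _ _ _ _ (hb A (hSF A (hTS hA)).1).2.2)
      (fun A hA => (hb A (hSF A (hTS hA)).1).1.image _)
      ((hb X hX).2.1.image (aff_cont _ _ _ _ _ _))
      (aff_convex _ _ _ _ _ _ (hb X hX).2.2)
      ⟨x0, hxX, by simp only [aff, ← hu, ← hv]; ext <;> ring⟩
      (fun A hA => aff_disj hDet (hd hX (hSF A (hTS hA)).1 (Ne.symm (hSF A (hTS hA)).2)))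
      (by
        rintro A hA _ ⟨q, hq, rfl⟩
        exact hV A (hTS hA) q hq)
      (by
        rintro i hi j hj hij _ ⟨q, hq, rfl⟩ _ ⟨q', hq', rfl⟩
        have hij : U (p i) / V (p i) < U (p j) / V (p j) := hij
        have k1 := (hlr i (hTS hi) q hq).2
        have k2 := (hlr j (hTS hj) q' hq').1
        have k3 := (hlr j (hTS hj) _ (hp j (hTS hj))).2
        have e1 : U q / V q = (aff (-v) u 0 (-u) (-v) (u ^ 2 + v ^ 2) q).1 /
          (aff (-v) u 0 (-u) (-v) (u ^ 2 + v ^ 2) q).2 := by simp only [aff, hUdef, hVdef, add_zero]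
        have e2 : U q' / V q' = (aff (-v) u 0 (-u) (-v) (u ^ 2 + v ^ 2) q').1 /
          (aff (-v) u 0 (-u) (-v) (u ^ 2 + v ^ 2) q').2 := by simp only [aff, hUdef, hVdef, add_zero]
        rw [← e1, ← e2]
        have hne : i ≠ j := by rintro rfl; exact lt_irrefl _ hij
        rcases hT i hi j hj hne with h | h <;> linarith)
      (fun i hi j hj k hk hij hik hjk => aff_gp hDet hb hg (hTF i hi) (hTF j hj) (hTF k hk) hij hik hjk)
      m (by omega)
    refine ⟨G, fun A hA => hTF A (hG hA), ?_, aff_back hb (fun A hA => hTF A (hG hA)) hGt⟩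
    rw [Set.ncard_coe_finset, hGc]
  · have hDet : (-v + c0 * u) * (-v) - (u + c0 * v) * (-u) ≠ 0 := by nlinarith
    have hTF : ∀ A ∈ T, A ∈ F := fun A hA => (hSF A (hTS hA)).1
    obtain ⟨G, hG, hGc, hGt⟩ := core2 T
      (fun A => aff (-v + c0 * u) (u + c0 * v) (-c0 * (u ^ 2 + v ^ 2)) (-u) (-v) (u ^ 2 + v ^ 2) '' A)
      (fun A hA => (hb A (hTF A hA)).2.1.image (aff_cont _ _ _ _ _ _))
      (fun A hA => aff_convex _ _ _ _ _ _ (hb A (hTF A hA)).2.2)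
      (fun A hA B hB hAB => aff_disj hDet (hd (hTF A hA) (hTF B hB) hAB))
      (by
        intro A hA
        have hA' := hTS hA
        obtain ⟨q, hq, hqe⟩ := (hb A (hTF A hA)).2.2.isPreconnected.intermediate_value
          (hp A hA') (hp' A hA') (hτ A hA') (show c0 ∈ Set.Icc _ _ from hT A hA)
        have hVq := hV A hA' q hq
        have hqe : U q / V q = c0 := hqe
        rw [div_eq_iff hVq.ne'] at hqe
        refine ⟨V q, q, hq, ?_⟩
        simp only [hUdef, hVdef] at hqe
        simp only [aff, hVdef, Prod.mk.injEq, and_true]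
        linarith)
      (fun i hi j hj k hk hij hik hjk => aff_gp hDet hb hg (hTF i hi) (hTF j hj) (hTF k hk) hij hik hjk)
      (m + 1) (by omega)
    refine ⟨G, fun A hA => hTF A (hG hA), ?_, aff_back hb (fun A hA => hTF A (hG hA)) hGt⟩
    rw [Set.ncard_coe_finset, hGc]

/-- Quantitative Erdős–Szekeres for disjoint convex bodies. -/
theorem erdos_szekeres_disjoint_bodies_bound :
    ∀ n : ℕ, 3 ≤ n → ∀ F : Set (Set Plane), F.Finite →
      (Nat.choose (2 * n - 5) (n - 2) + 1) * Nat.choose (2 * n - 4) (n - 2) + 1 ≤ F.ncard →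
      (∀ A ∈ F, ConvexBody2 A) → F.Pairwise Disjoint → GenPos F →
      ∃ G ⊆ F, G.ncard = n ∧ ConvexPos G := by
  intro n hn F hF hcard hb hd hg
  obtain ⟨m, rfl⟩ : ∃ m, n = m + 3 := ⟨n - 3, by omega⟩
  apply erdos_szekeres_aux m F hF _ hb hd hg
  have e1 : 2 * (m + 3) - 5 = m + 1 + m := by omega
  have e2 : 2 * (m + 3) - 4 = m + 1 + (m + 1) := by omega
  have e3 : m + 3 - 2 = m + 1 := by omega
  rw [e1, e2, e3] at hcard
  exact hcard
end
end

section
/- Let k, l be natural numbers and let N = C(k+l+4, l+2) + 1, where C(a, b) is the binomial coefficient. Let χ be a function from the 3-element subsets of Fin N to Bool such that for all indices i < j < m < p, if χ{i, j, m} = χ{j, m, p} then χ{i, m, p} = χ{i, j, p} = χ{i, j, m}. Then there exists either a subset S of Fin N with |S| = l + 1 such that χ assigns the value false to every 3-element subset of S, or a subset T of Fin N with |T| = k + 1 such that χ assigns the value true to every 3-element subset of T. -/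
open Set

noncomputable section

/-- All increasing triples of `S` have colour `c`. -/
def MonoES {α : Type*} [LinearOrder α] (g : α → α → α → Bool) (c : Bool) (S : Finset α) : Prop :=
  ∀ x ∈ S, ∀ y ∈ S, ∀ z ∈ S, x < y → y < z → g x y z = c

/-- The transitivity condition. -/
def TransES {α : Type*} [LinearOrder α] (g : α → α → α → Bool) : Prop :=
  ∀ i j m p : α, i < j → j < m → m < p → g i j m = g j m p →
    g i m p = g i j m ∧ g i j p = g i j m

lemma top_two_ES {α : Type*} [LinearOrder α] (S : Finset α) (h : 2 ≤ S.card) (e : α)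
    (he : e ∈ S) (hmax : ∀ x ∈ S, x ≤ e) :
    ∃ f ∈ S, f < e ∧ ∀ x ∈ S, x = e ∨ x ≤ f := by
  have hne : (S.erase e).Nonempty := by
    rw [← Finset.card_pos, Finset.card_erase_of_mem he]; omega
  have hm := Finset.max'_mem _ hne
  refine ⟨(S.erase e).max' hne, Finset.mem_of_mem_erase hm,
    lt_of_le_of_ne (hmax _ (Finset.mem_of_mem_erase hm)) (Finset.ne_of_mem_erase hm), ?_⟩
  intro x hx
  by_cases hxe : x = e
  · exact Or.inl hxe
  · exact Or.inr (Finset.le_max' _ _ (Finset.mem_erase.2 ⟨hxe, hx⟩))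

lemma bot_two_ES {α : Type*} [LinearOrder α] (S : Finset α) (h : 2 ≤ S.card) (e : α)
    (he : e ∈ S) (hmin : ∀ x ∈ S, e ≤ x) :
    ∃ f ∈ S, e < f ∧ ∀ x ∈ S, x = e ∨ f ≤ x :=
  top_two_ES (α := αᵒᵈ) S h e he hmin

lemma extend_right_ES {α : Type*} [LinearOrder α] (g : α → α → α → Bool) (hg : TransES g)
    (c : Bool) (S : Finset α) (hS : MonoES g c S) (e f t : α) (he : e ∈ S) (hf : f ∈ S)
    (hfe : f < e) (htop : ∀ x ∈ S, x = e ∨ x ≤ f) (het : e < t) (hc : g f e t = c) :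
    MonoES g c (insert t S) := by
  have hlt : ∀ x ∈ S, x < t := by
    intro x hx
    rcases htop x hx with h | h
    · exact h ▸ het
    · exact (h.trans_lt hfe).trans het
  have h1 : ∀ x ∈ S, x < f → g x e t = c ∧ g x f t = c := by
    intro x hx hxf
    have hxfe := hS x hx f hf e he hxf hfe
    have := hg x f e t hxf hfe het (by rw [hxfe, hc])
    rwa [hxfe] at this
  have h2 : ∀ x ∈ S, ∀ y ∈ S, x < y → g x y t = c := by
    intro x hx y hy hxy
    rcases htop y hy with rfl | hyf
    · rcases htop x hx with rfl | hxf
      · exact absurd hxy (lt_irrefl _)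
      · rcases hxf.eq_or_lt with rfl | hxf
        · exact hc
        · exact (h1 x hx hxf).1
    · rcases hyf.eq_or_lt with rfl | hyf
      · exact (h1 x hx hxy).2
      · have ha := hS x hx y hy f hf hxy hyf
        have hb := (h1 y hy hyf).2
        have := (hg x y f t hxy hyf (hfe.trans het) (by rw [ha, hb])).2
        rw [this, ha]
  intro x hx y hy z hz hxy hyz
  rw [Finset.mem_insert] at hx hy hz
  rcases hz with rfl | hz
  · have hx' : x ∈ S := hx.resolve_left (hxy.trans hyz).ne
    have hy' : y ∈ S := hy.resolve_left hyz.ne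
    exact h2 x hx' y hy' hxy
  · have hzt := hlt z hz
    have hy' : y ∈ S := hy.resolve_left (hyz.trans hzt).ne
    have hx' : x ∈ S := hx.resolve_left (hxy.trans (hyz.trans hzt)).ne
    exact hS x hx' y hy' z hz hxy hyz

lemma extend_left_ES {α : Type*} [LinearOrder α] (g : α → α → α → Bool) (hg : TransES g)
    (c : Bool) (S : Finset α) (hS : MonoES g c S) (e f t : α) (he : e ∈ S) (hf : f ∈ S)
    (hfe : e < f) (htop : ∀ x ∈ S, x = e ∨ f ≤ x) (het : t < e) (hc : g t e f = c) :
    MonoES g c (insert t S) := by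
  have key := extend_right_ES (α := αᵒᵈ) (fun x y z => g z y x) (by
    intro i j m p hij hjm hmp h
    have := hg p m j i hmp hjm hij h.symm
    refine ⟨this.2.trans h.symm, this.1.trans h.symm⟩)
    c S (fun x hx y hy z hz hxy hyz => hS z hz y hy x hx hyz hxy) e f t he hf hfe htop het hc
  exact fun x hx y hy z hz hxy hyz => key z hz y hy x hx hyz hxy

lemma mono_small_ES {α : Type*} [LinearOrder α] (g : α → α → α → Bool) (c : Bool)
    (S : Finset α) (h : S.card = 2) : MonoES g c S := by
  intro x hx y hy z hz hxy hyz
  exfalso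
  obtain ⟨a, b, hab, rfl⟩ := Finset.card_eq_two.1 h
  simp only [Finset.mem_insert, Finset.mem_singleton] at hx hy hz
  have := hxy.ne
  have := hyz.ne
  have := (hxy.trans hyz).ne
  grind

lemma main_ES {α : Type*} [LinearOrder α] (g : α → α → α → Bool) (hg : TransES g) (n : ℕ) :
    ∀ a b : ℕ, a + b = n → ∀ A : Finset α, Nat.choose (a + b) a < A.card →
    (∃ S ⊆ A, S.card = a + 2 ∧ MonoES g false S) ∨
    (∃ S ⊆ A, S.card = b + 2 ∧ MonoES g true S) := by
  classical
  induction n with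
  | zero =>
    intro a b hab A hA
    obtain rfl : a = 0 := by omega
    obtain rfl : b = 0 := by omega
    simp at hA
    obtain ⟨S, hS, hc⟩ := Finset.exists_subset_card_eq (s := A) (n := 2) hA
    exact Or.inl ⟨S, hS, hc, mono_small_ES _ _ _ hc⟩
  | succ n ih =>
    intro a b hab A hA
    rcases a with _ | a
    · simp at hA
      obtain ⟨S, hS, hc⟩ := Finset.exists_subset_card_eq (s := A) (n := 2) hA
      exact Or.inl ⟨S, hS, hc, mono_small_ES _ _ _ hc⟩
    rcases b with _ | b
    · simp at hA
      obtain ⟨S, hS, hc⟩ := Finset.exists_subset_card_eq (s := A) (n := 2) hA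
      exact Or.inr ⟨S, hS, hc, mono_small_ES _ _ _ hc⟩
    let P : α → Prop := fun e => ∃ S ⊆ A, S.card = a + 2 ∧ MonoES g false S ∧ e ∈ S ∧
      ∀ x ∈ S, x ≤ e
    have hsplit := Finset.card_filter_add_card_filter_not (s := A) P
    have hch : Nat.choose (a + 1 + (b + 1)) (a + 1) =
        Nat.choose (a + (b + 1)) a + Nat.choose (a + 1 + b) (a + 1) := by
      have h1 : a + 1 + (b + 1) = (a + b + 1) + 1 := by ring
      have h2 : a + (b + 1) = a + b + 1 := by ring
      have h3 : a + 1 + b = a + b + 1 := by ring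
      rw [h1, h2, h3, Nat.choose_succ_succ]
    by_cases hE : Nat.choose (a + 1 + b) (a + 1) < (A.filter P).card
    · rcases ih (a + 1) b (by omega) _ hE with ⟨S, hS, hc, hm⟩ | ⟨T, hT, hTc, hTm⟩
      · exact Or.inl ⟨S, hS.trans (Finset.filter_subset _ _), hc, hm⟩
      · have hTne : T.Nonempty := Finset.card_pos.1 (by omega)
        have he := Finset.min'_mem T hTne
        have hmin : ∀ x ∈ T, T.min' hTne ≤ x := fun x hx => Finset.min'_le _ _ hx
        generalize T.min' hTne = e at he hmin
        obtain ⟨S, hSA, hSc, hSm, heS, hmax⟩ := (Finset.mem_filter.1 (hT he)).2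
        have hTA : T ⊆ A := hT.trans (Finset.filter_subset _ _)
        obtain ⟨f, hf, hfe, hftop⟩ := top_two_ES S (by omega) e heS hmax
        obtain ⟨t, ht, het, htbot⟩ := bot_two_ES T (by omega) e he hmin
        cases hcol : g f e t with
        | false =>
          refine Or.inl ⟨insert t S, Finset.insert_subset (hTA ht) hSA, ?_,
            extend_right_ES g hg false S hSm e f t heS hf hfe hftop het hcol⟩
          rw [Finset.card_insert_of_notMem (fun h => absurd (hmax t h) (not_le.2 het)), hSc]
        | true =>
          refine Or.inr ⟨insert f T, Finset.insert_subset (hSA hf) hTA, ?_,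
            extend_left_ES g hg true T hTm e t f he ht het htbot hfe hcol⟩
          rw [Finset.card_insert_of_notMem (fun h => absurd (hmin f h) (not_le.2 hfe)), hTc]
    · have hE' : Nat.choose (a + (b + 1)) a < (A.filter (fun x => ¬ P x)).card := by omega
      rcases ih a (b + 1) (by omega) _ hE' with ⟨S, hS, hc, hm⟩ | ⟨T, hT, hTc, hTm⟩
      · exfalso
        have hne : S.Nonempty := Finset.card_pos.1 (by omega)
        have hmem := Finset.max'_mem S hne
        exact (Finset.mem_filter.1 (hS hmem)).2 ⟨S, hS.trans (Finset.filter_subset _ _), hc, hm,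
          hmem, fun x hx => Finset.le_max' _ _ hx⟩
      · exact Or.inr ⟨T, hT.trans (Finset.filter_subset _ _), hTc, hTm⟩

lemma triple_ES {α : Type*} [LinearOrder α] (T : Finset α) (h : T.card = 3) :
    ∃ x y z, x < y ∧ y < z ∧ T = {x, y, z} := by
  refine ⟨T.orderEmbOfFin h 0, T.orderEmbOfFin h 1, T.orderEmbOfFin h 2, ?_, ?_, ?_⟩
  · simp
  · simp
  · symm
    apply Finset.eq_of_subset_of_card_le
    · intro x hx
      simp only [Finset.mem_insert, Finset.mem_singleton] at hx
      rcases hx with rfl | rfl | rfl <;> exact Finset.orderEmbOfFin_mem _ _ _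
    · rw [h, Finset.card_eq_three.2 ⟨_, _, _, ?_, ?_, ?_, rfl⟩] <;> simp

lemma finish_ES {α : Type*} [LinearOrder α] (χ : Finset α → Bool) (c : Bool) (S : Finset α)
    (n : ℕ) (hn : n ≤ S.card) (hS : MonoES (fun x y z => χ {x, y, z}) c S) :
    ∃ S : Finset α, S.card = n ∧ ∀ T ⊆ S, T.card = 3 → χ T = c := by
  obtain ⟨S', hS', hc⟩ := Finset.exists_subset_card_eq hn
  refine ⟨S', hc, fun T hT h3 => ?_⟩
  obtain ⟨x, y, z, hxy, hyz, rfl⟩ := triple_ES T h3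
  have hT' := hT.trans hS'
  exact hS x (hT' (by simp)) y (hT' (by simp)) z (hT' (by simp)) hxy hyz

/-- Erdős–Szekeres cup-cap lemma, hypergraph version. -/
theorem erdos_szekeres_hypergraph (k l : ℕ)
    (N : ℕ) (hN : N = Nat.choose (k + l + 4) (l + 2) + 1)
    (χ : Finset (Fin N) → Bool)
    (hχ : ∀ i j m p : Fin N, i < j → j < m → m < p →
      χ {i, j, m} = χ {j, m, p} →
      χ {i, m, p} = χ {i, j, m} ∧ χ {i, j, p} = χ {i, j, m}) :
    (∃ S : Finset (Fin N), S.card = l + 1 ∧ ∀ T ⊆ S, T.card = 3 → χ T = false) ∨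
    (∃ T : Finset (Fin N), T.card = k + 1 ∧ ∀ U ⊆ T, U.card = 3 → χ U = true) := by
  rcases main_ES (fun x y z => χ {x, y, z}) hχ _ (l + 2) (k + 2) rfl Finset.univ (by
    rw [Finset.card_univ, Fintype.card_fin, hN, show l + 2 + (k + 2) = k + l + 4 by ring]
    exact Nat.lt_succ_self _) with ⟨S, -, hc, hm⟩ | ⟨S, -, hc, hm⟩
  · exact Or.inl (finish_ES χ false S _ (by omega) hm)
  · exact Or.inr (finish_ES χ true S _ (by omega) hm)
end
end

section
/- For every n ≥ 3, if F is a family of C(2n−4, n−2) + 1 pairwise disjoint nonempty compact convex subsets of ℝ² in general position that admits a common transversal line, then F contains a subfamily of n sets in convex position (C(a, b) is the binomial coefficient). -/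
open Set

noncomputable section

/-! ### Abstract part: support functions on the circle -/

structure SupSys {ι : Type} [LinearOrder ι] (h : ι → ℝ → ℝ) (u s t : ι → ι → ℝ) : Prop where
  per : ∀ i, Function.Periodic (h i) (2 * Real.pi)
  u1 : ∀ i j, i < j → -(Real.pi / 2) < u i j
  u2 : ∀ i j, i < j → u i j < Real.pi / 2
  s1 : ∀ i j, i < j → u i j - Real.pi < s i j
  s2 : ∀ i j, i < j → s i j < u i j
  t1 : ∀ i j, i < j → u i j < t i j
  t2 : ∀ i j, i < j → t i j < u i j + Real.pi
  up : ∀ i j, i < j → ∀ x, s i j < x → x < t i j → h i x < h j x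
  dn : ∀ i j, i < j → ∀ x, t i j < x → x < s i j + 2 * Real.pi → h j x < h i x
  es : ∀ i j, i < j → h i (s i j) = h j (s i j)
  et : ∀ i j, i < j → h i (t i j) = h j (t i j)
  yr : ∀ i j k, i < j → i < k → ∀ x, -(Real.pi / 2) < x → x < Real.pi / 2 →
    h j x ≤ h i x → h k x ≤ h i x → u i j < x → x < u i k → False
  yl : ∀ i j k, i < k → j < k → ∀ x, Real.pi / 2 < x → x < 3 * Real.pi / 2 →
    h i x ≤ h k x → h j x ≤ h k x → u i k + Real.pi < x → x < u j k + Real.pi → False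
  gp : ∀ i j k, i ≠ j → i ≠ k → j ≠ k → ∃ x, h j x < h i x ∧ h k x < h i x

namespace SupSys
variable {ι : Type} [LinearOrder ι] {h : ι → ℝ → ℝ} {u s t : ι → ι → ℝ}

theorem flip (H : SupSys h u s t) :
    SupSys (fun i x => h i (-x)) (fun i j => - u i j) (fun i j => - t i j) (fun i j => - s i j) where
  per := by
    intro i x
    have := H.per i (-(x + 2 * Real.pi))
    simp only
    rw [← this]; congr 1; ring
  u1 i j hij := by have := H.u2 i j hij; linarith
  u2 i j hij := by have := H.u1 i j hij; linarith
  s1 i j hij := by have := H.t2 i j hij; linarith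
  s2 i j hij := by have := H.t1 i j hij; linarith
  t1 i j hij := by have := H.s2 i j hij; linarith
  t2 i j hij := by have := H.s1 i j hij; linarith
  up i j hij x h1 h2 := H.up i j hij _ (by linarith) (by linarith)
  dn i j hij x h1 h2 := by
    have := H.dn i j hij (-x + 2 * Real.pi) (by linarith) (by linarith)
    rwa [H.per, H.per] at this
  es i j hij := by simpa using H.et i j hij
  et i j hij := by simpa using H.es i j hij
  yr i j k hij hik x h1 h2 h3 h4 h5 h6 :=
    H.yr i k j hik hij (-x) (by linarith) (by linarith) h4 h3 (by linarith) (by linarith)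
  yl i j k hij hik x h1 h2 h3 h4 h5 h6 := by
    refine H.yl j i k hik hij (-x + 2 * Real.pi) (by linarith) (by linarith) ?_ ?_
      (by linarith) (by linarith)
    · rw [H.per, H.per]; exact h4
    · rw [H.per, H.per]; exact h3
  gp i j k h1 h2 h3 := by
    obtain ⟨x, hx⟩ := H.gp i j k h1 h2 h3
    exact ⟨-x, by simpa using hx⟩

theorem per' (H : SupSys h u s t) (i : ι) (x : ℝ) (m : ℤ) :
    h i (x + m * (2 * Real.pi)) = h i x := (H.per i).int_mul m x

theorem ex_up (H : SupSys h u s t) {i j : ι} (hij : i < j) {x : ℝ} (hx : h i x < h j x) :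
    ∃ m : ℤ, s i j < x + m * (2 * Real.pi) ∧ x + m * (2 * Real.pi) < t i j := by
  obtain ⟨m, ⟨h1, h2⟩, -⟩ := existsUnique_add_zsmul_mem_Ico Real.two_pi_pos x (s i j)
  rw [zsmul_eq_mul] at h1 h2
  rw [← H.per' i x m, ← H.per' j x m] at hx
  refine ⟨m, lt_of_le_of_ne h1 ?_, ?_⟩
  · intro e
    rw [← e, H.es i j hij] at hx
    exact lt_irrefl _ hx
  · by_contra hc
    rcases eq_or_lt_of_le (not_lt.mp hc) with e | e
    · rw [← e, H.et i j hij] at hx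
      exact lt_irrefl _ hx
    · exact lt_asymm hx (H.dn i j hij _ e h2)

theorem ex_dn (H : SupSys h u s t) {i j : ι} (hij : i < j) {x : ℝ} (hx : h j x < h i x) :
    ∃ m : ℤ, t i j < x + m * (2 * Real.pi) ∧ x + m * (2 * Real.pi) < s i j + 2 * Real.pi := by
  obtain ⟨m, ⟨h1, h2⟩, -⟩ := existsUnique_add_zsmul_mem_Ico Real.two_pi_pos x (s i j)
  rw [zsmul_eq_mul] at h1 h2
  rw [← H.per' i x m, ← H.per' j x m] at hx
  refine ⟨m, ?_, h2⟩
  by_contra hc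
  rcases eq_or_lt_of_le (not_lt.mp hc) with e | e
  · rw [e, H.et i j hij] at hx
    exact lt_irrefl _ hx
  rcases eq_or_lt_of_le h1 with e' | e'
  · rw [← e', H.es i j hij] at hx
    exact lt_irrefl _ hx
  · exact lt_asymm hx (H.up i j hij _ e' e)

theorem int_le {m : ℤ} {k : ℤ} (hm : (m : ℝ) * (2 * Real.pi) < (k + 1) * (2 * Real.pi)) :
    m ≤ k := by
  have := lt_of_mul_lt_mul_right hm Real.two_pi_pos.le
  have h2 : m < k + 1 := by exact_mod_cast this
  lia

theorem le_int {m : ℤ} {k : ℤ} (hm : (k - 1) * (2 * Real.pi) < (m : ℝ) * (2 * Real.pi)) :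
    k ≤ m := by
  have := lt_of_mul_lt_mul_right hm Real.two_pi_pos.le
  have h2 : k - 1 < m := by exact_mod_cast this
  lia

theorem cap_or_cup (H : SupSys h u s t) {i j k : ι} (hij : i < j) (hjk : j < k) :
    t j k < t i j ∨ s i j < s j k := by
  obtain ⟨x, h1, h2⟩ := H.gp j i k hij.ne' hjk.ne (hij.trans hjk).ne
  obtain ⟨m, a1, a2⟩ := H.ex_up hij h1
  obtain ⟨m', b1, b2⟩ := H.ex_dn hjk h2
  have := H.u1 i j hij
  have := H.u2 i j hij
  have := H.s1 i j hij
  have := H.s2 i j hij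
  have := H.t1 i j hij
  have := H.t2 i j hij
  have := H.u1 j k hjk
  have := H.u2 j k hjk
  have := H.s1 j k hjk
  have := H.s2 j k hjk
  have := H.t1 j k hjk
  have := H.t2 j k hjk
  have c1 : m' - m ≤ 1 := int_le (by push_cast; linarith)
  have c2 : 0 ≤ m' - m := le_int (by push_cast; linarith)
  have : m' = m ∨ m' = m + 1 := by lia
  rcases this with rfl | rfl
  · left; linarith
  · right; push_cast at b1 b2; linarith

theorem V2 (H : SupSys h u s t) {i j k : ι} (hij : i < j) (hik : i < k) :
    t i j < s i k + 2 * Real.pi := by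
  have := H.u1 i j hij
  have := H.u2 i j hij
  have := H.s1 i j hij
  have := H.s2 i j hij
  have := H.t1 i j hij
  have := H.t2 i j hij
  have := H.u1 i k hik
  have := H.u2 i k hik
  have := H.s1 i k hik
  have := H.s2 i k hik
  have := H.t1 i k hik
  have := H.t2 i k hik
  rcases eq_or_ne j k with rfl | hjk
  · linarith
  obtain ⟨x, h1, h2⟩ := H.gp i j k hij.ne hik.ne hjk
  obtain ⟨m, a1, a2⟩ := H.ex_dn hij h1
  obtain ⟨m', b1, b2⟩ := H.ex_dn hik h2
  have c1 : m' - m ≤ 1 := int_le (by push_cast; linarith)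
  have c2 : -1 ≤ m' - m := le_int (by push_cast; linarith)
  have : m' = m ∨ m' = m + 1 ∨ m' = m - 1 := by lia
  rcases this with rfl | rfl | rfl
  · linarith
  · push_cast at b1 b2; linarith
  · exfalso
    rw [← H.per' i x (m - 1), ← H.per' j x (m-1)] at h1
    rw [← H.per' i x (m - 1), ← H.per' k x (m-1)] at h2
    have e : x + ((m - 1 : ℤ) : ℝ) * (2 * Real.pi) = x + m * (2 * Real.pi) - 2 * Real.pi := by
      push_cast; ring
    exact H.yr i k j hik hij _ (by linarith) (by linarith) h2.le h1.le (by linarith) (by linarith)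

theorem V1 (H : SupSys h u s t) {i j k : ι} (hik : i < k) (hjk : j < k) :
    s i k < t j k := by
  have := H.u1 i k hik
  have := H.u2 i k hik
  have := H.s1 i k hik
  have := H.s2 i k hik
  have := H.t1 i k hik
  have := H.t2 i k hik
  have := H.u1 j k hjk
  have := H.u2 j k hjk
  have := H.s1 j k hjk
  have := H.s2 j k hjk
  have := H.t1 j k hjk
  have := H.t2 j k hjk
  rcases eq_or_ne i j with rfl | hij
  · linarith
  obtain ⟨x, h1, h2⟩ := H.gp k i j hik.ne' hjk.ne' hij
  obtain ⟨m, a1, a2⟩ := H.ex_up hik h1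
  obtain ⟨m', b1, b2⟩ := H.ex_up hjk h2
  have c1 : m' - m ≤ 1 := int_le (by push_cast; linarith)
  have c2 : -1 ≤ m' - m := le_int (by push_cast; linarith)
  have : m' = m ∨ m' = m + 1 ∨ m' = m - 1 := by lia
  rcases this with rfl | rfl | rfl
  · linarith
  · push_cast at b1 b2; linarith
  · exfalso
    rw [← H.per' i x m, ← H.per' k x m] at h1
    rw [← H.per' j x m, ← H.per' k x m] at h2
    push_cast at b1 b2
    exact H.yl j i k hjk hik _ (by linarith) (by linarith) h2.le h1.le (by linarith) (by linarith)

theorem btw (H : SupSys h u s t) {i j k : ι} (hij : i < j) (hjk : j < k) (hc : t j k < t i j) :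
    t j k ≤ t i k ∧ t i k ≤ t i j := by
  have hik := hij.trans hjk
  have := H.u1 i j hij
  have := H.u2 i j hij
  have := H.s1 i j hij
  have := H.s2 i j hij
  have := H.t1 i j hij
  have := H.t2 i j hij
  have := H.u1 i k hik
  have := H.u2 i k hik
  have := H.s1 i k hik
  have := H.s2 i k hik
  have := H.t1 i k hik
  have := H.t2 i k hik
  have := H.u1 j k hjk
  have := H.u2 j k hjk
  have := H.s1 j k hjk
  have := H.s2 j k hjk
  have := H.t1 j k hjk
  have := H.t2 j k hjk
  have e := H.et i k hik
  constructor
  · by_contra hlt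
    push Not at hlt
    have v := H.V1 hjk hik
    have a := H.up j k hjk _ v hlt
    rcases lt_or_ge (s i j) (t i k) with c | c
    · have b := H.up i j hij _ c (by linarith)
      linarith
    · have b : h j (t i k) ≤ h i (t i k) := by linarith
      exact H.yr i k j hik hij (t i k) (by linarith) (by linarith) e.ge b (by linarith)
        (by linarith)
  · by_contra hlt
    push Not at hlt
    have v := H.V2 hik hij
    have a := H.dn i j hij _ hlt v
    rcases lt_or_ge (t i k) (s j k + 2 * Real.pi) with c | c
    · have b := H.dn j k hjk _ (by linarith) c
      linarith
    · have b : h j (t i k) ≤ h k (t i k) := by linarith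
      exact H.yl j i k hjk hik (t i k) (by linarith) (by linarith) b e.le (by linarith)
        (by linarith)

theorem chain (H : SupSys h u s t) (n : ℕ) (f : ℕ → ι) (hf : ∀ i, i + 1 < n → f i < f (i + 1))
    (hcap : ∀ i, i + 2 < n → t (f (i + 1)) (f (i + 2)) < t (f i) (f (i + 1))) :
    ∀ j < n, ∃ x, ∀ i < n, i ≠ j → h (f i) x < h (f j) x := by
  have mono : ∀ j, j < n → ∀ i, i < j → f i < f j := by
    intro j
    induction j with
    | zero => intro _ i hi; lia
    | succ j ih =>
      intro hj i hi
      rcases Nat.lt_succ_iff_lt_or_eq.mp hi with h' | rfl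
      · exact (ih (by lia) i h').trans (hf j hj)
      · exact hf _ hj
  have low : ∀ j, j + 1 < n → ∀ i, i < j + 1 → t (f j) (f (j + 1)) ≤ t (f i) (f (j + 1)) := by
    intro j
    induction j with
    | zero => intro _ i hi; obtain rfl : i = 0 := by lia
              exact le_rfl
    | succ j ih =>
      intro hj i hi
      rcases Nat.lt_succ_iff_lt_or_eq.mp hi with h' | rfl
      · exact (H.btw (mono (j+1) (by lia) i h') (hf (j+1) hj)
          ((hcap j hj).trans_le (ih (by lia) i h'))).1
      · exact le_rfl
  have dec : ∀ j, j + 2 < n → ∀ i, i < j + 1 → t (f i) (f (j + 2)) ≤ t (f i) (f (j + 1)) := by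
    intro j hj i h'
    exact (H.btw (mono (j+1) (by lia) i h') (hf (j+1) hj)
          ((hcap j hj).trans_le (low j (by lia) i h'))).2
  have dec' : ∀ i k, i + 1 + k < n → t (f i) (f (i + 1 + k)) ≤ t (f i) (f (i + 1)) := by
    intro i k
    induction k with
    | zero => intro _; exact le_rfl
    | succ k ih =>
      intro hk
      have := dec (i + k) (by lia) i (by lia)
      have e1 : i + k + 2 = i + 1 + (k + 1) := by lia
      have e2 : i + k + 1 = i + 1 + k := by lia
      rw [e1, e2] at this
      exact this.trans (ih (by lia))
  have cap : ∀ i j k, i < j → j < k → k < n → t (f j) (f k) < t (f i) (f j) := by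
    intro i j k hij hjk hk
    obtain ⟨d, rfl⟩ : ∃ d, k = j + 1 + d := ⟨k - j - 1, by lia⟩
    obtain ⟨j, rfl⟩ : ∃ j', j = j' + 1 := ⟨j - 1, by lia⟩
    exact ((dec' _ _ hk).trans_lt (hcap j (by lia))).trans_le (low j (by lia) i hij)
  intro j hj
  let lo : Finset ℝ := (Finset.range j).image (fun i => s (f i) (f j)) ∪
    (Finset.Ioo j n).image (fun k => t (f j) (f k))
  let hi : Finset ℝ := (Finset.range j).image (fun i => t (f i) (f j)) ∪
    (Finset.Ioo j n).image (fun k => s (f j) (f k) + 2 * Real.pi)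
  obtain ⟨x, hx1, hx2⟩ : ∃ x, (∀ a ∈ lo, a < x) ∧ ∀ b ∈ hi, x < b := by
    apply Order.exists_between_finsets
    intro a ha b hb
    simp only [lo, hi, Finset.mem_union, Finset.mem_image, Finset.mem_range, Finset.mem_Ioo]
      at ha hb
    rcases ha with ⟨i, hi, rfl⟩ | ⟨k, ⟨hk, hk'⟩, rfl⟩ <;>
    rcases hb with ⟨i', hi', rfl⟩ | ⟨k', ⟨hk2, hk2'⟩, rfl⟩
    · exact H.V1 (mono _ hj _ hi) (mono _ hj _ hi')
    · have h1 := mono _ hj _ hi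
      have h2 := mono _ hk2' _ hk2
      have := H.u1 _ _ h2
      have := H.u2 _ _ h1
      have := H.s1 _ _ h2
      have := H.s2 _ _ h1
      linarith
    · exact cap _ _ _ hi' hk hk'
    · exact H.V2 (mono _ hk' _ hk) (mono _ hk2' _ hk2)
  refine ⟨x, fun i hi' hne => ?_⟩
  rcases lt_or_gt_of_ne hne with c | c
  · refine H.up _ _ (mono _ hj _ c) x (hx1 _ ?_) (hx2 _ ?_)
    · exact Finset.mem_union_left _ (Finset.mem_image.mpr ⟨i, Finset.mem_range.mpr c, rfl⟩)
    · exact Finset.mem_union_left _ (Finset.mem_image.mpr ⟨i, Finset.mem_range.mpr c, rfl⟩)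
  · refine H.dn _ _ (mono _ hi' _ c) x (hx1 _ ?_) (hx2 _ ?_)
    · exact Finset.mem_union_right _ (Finset.mem_image.mpr ⟨i, Finset.mem_Ioo.mpr ⟨c, hi'⟩, rfl⟩)
    · exact Finset.mem_union_right _ (Finset.mem_image.mpr ⟨i, Finset.mem_Ioo.mpr ⟨c, hi'⟩, rfl⟩)

end SupSys

/-! ### Cups and caps -/

def IsChn {ι : Type} [LinearOrder ι] (P : ι → ι → ι → Prop) (S : Finset ι) (m : ℕ) (f : ℕ → ι) :
    Prop :=
  (∀ i < m, f i ∈ S) ∧ (∀ i, i + 1 < m → f i < f (i + 1)) ∧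
    ∀ i, i + 2 < m → P (f i) (f (i + 1)) (f (i + 2))

theorem IsChn.mono {ι : Type} [LinearOrder ι] {P : ι → ι → ι → Prop} {S T : Finset ι} {m : ℕ}
    {f : ℕ → ι} (h : IsChn P S m f) (hST : S ⊆ T) : IsChn P T m f :=
  ⟨fun i hi => hST (h.1 i hi), h.2⟩

theorem two_chn {ι : Type} [LinearOrder ι] (P : ι → ι → ι → Prop) (S : Finset ι)
    (hS : 1 < S.card) : ∃ f, IsChn P S 2 f := by
  obtain ⟨a, ha, b, hb, hab⟩ := Finset.one_lt_card.mp hS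
  wlog hlt : a < b generalizing a b
  · exact this b hb a ha hab.symm (lt_of_le_of_ne (not_lt.mp hlt) hab.symm)
  refine ⟨fun i => if i = 0 then a else b, ?_, ?_, ?_⟩
  · intro i _; dsimp only; split_ifs <;> assumption
  · intro i hi; obtain rfl : i = 0 := by lia
    simpa using hlt
  · intro i hi; lia

theorem cups_caps {ι : Type} [LinearOrder ι] (P Q : ι → ι → ι → Prop)
    (hPQ : ∀ i j k, i < j → j < k → P i j k ∨ Q i j k) :
    ∀ (N a b : ℕ), a + b = N → ∀ S : Finset ι, Nat.choose (a + b) a < S.card →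
      (∃ f, IsChn P S (a + 2) f) ∨ (∃ f, IsChn Q S (b + 2) f) := by
  classical
  intro N
  induction N with
  | zero =>
    intro a b hab S hS
    obtain rfl : a = 0 := by lia
    obtain rfl : b = 0 := by lia
    exact Or.inl (two_chn P S (by simpa using hS))
  | succ N ih =>
    intro a b hab S hS
    rcases a with _ | a
    · exact Or.inl (two_chn P S (by simpa using hS))
    rcases b with _ | b
    · exact Or.inr (two_chn Q S (by simpa using hS))
    let Y := S.filter (fun y => ∃ f, IsChn P S (a + 2) f ∧ f (a + 1) = y)
    have hcard := Finset.card_sdiff_add_card_eq_card (Finset.filter_subset _ _ : Y ⊆ S)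
    have hch : Nat.choose (a + 1 + (b + 1)) (a + 1) =
        Nat.choose (a + (b + 1)) a + Nat.choose (a + 1 + b) (a + 1) := by
      have e1 : a + 1 + (b + 1) = (a + b + 1) + 1 := by lia
      have e2 : a + (b + 1) = a + b + 1 := by lia
      have e3 : a + 1 + b = a + b + 1 := by lia
      rw [e1, e2, e3, Nat.choose_succ_succ]
    rcases lt_or_ge (Nat.choose (a + (b + 1)) a) (S \ Y).card with c | c
    · rcases ih a (b + 1) (by lia) (S \ Y) c with ⟨f, hf⟩ | ⟨f, hf⟩
      · exfalso
        have h1 := hf.1 (a + 1) (by lia)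
        rw [Finset.mem_sdiff] at h1
        exact h1.2 (Finset.mem_filter.mpr ⟨h1.1, f, hf.mono Finset.sdiff_subset, rfl⟩)
      · exact Or.inr ⟨f, hf.mono Finset.sdiff_subset⟩
    · rcases ih (a + 1) b (by lia) Y (by lia) with ⟨f, hf⟩ | ⟨g, hg⟩
      · exact Or.inl ⟨f, hf.mono (Finset.filter_subset _ _)⟩
      · have h0 := hg.1 0 (by lia)
        obtain ⟨hy, f, hf, hfy⟩ := Finset.mem_filter.mp h0
        have hg' := hg.mono (Finset.filter_subset _ _ : Y ⊆ S)
        have l1 : f a < f (a + 1) := hf.2.1 a (by lia)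
        have l2 : g 0 < g 1 := hg.2.1 0 (by lia)
        rcases hPQ (f a) (g 0) (g 1) (hfy ▸ l1) l2 with hp | hq
        · left
          refine ⟨fun i => if i = a + 2 then g 1 else f i, ?_, ?_, ?_⟩
          · intro i hi
            dsimp only
            split_ifs with h'
            · exact hg'.1 1 (by lia)
            · exact hf.1 i (by lia)
          · intro i hi
            rcases eq_or_ne i (a + 1) with rfl | hne
            · simpa [hfy] using l2
            · have h1 : i ≠ a + 2 := by lia
              have h2 : i + 1 ≠ a + 2 := by lia
              simp only [h1, h2, if_false]
              exact hf.2.1 i (by lia)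
          · intro i hi
            rcases eq_or_ne i a with rfl | hne
            · simpa [hfy] using hp
            · have h1 : i ≠ a + 2 := by lia
              have h2 : i + 1 ≠ a + 2 := by lia
              have h3 : i + 2 ≠ a + 2 := by lia
              simp only [h1, h2, h3, if_false]
              exact hf.2.2 i (by lia)
        · right
          refine ⟨fun i => Nat.casesOn i (f a) g, ?_, ?_, ?_⟩
          · intro i hi
            rcases i with _ | i
            · exact hf.1 a (by lia)
            · exact hg'.1 i (by lia)
          · intro i hi
            rcases i with _ | i
            · show f a < g 0
              exact hfy ▸ l1
            · exact hg'.2.1 i (by lia)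
          · intro i hi
            rcases i with _ | i
            · exact hq
            · exact hg'.2.2 i (by lia)

theorem SupSys.main {ι : Type} [LinearOrder ι] [Fintype ι] {h : ι → ℝ → ℝ} {u s t : ι → ι → ℝ}
    (H : SupSys h u s t) (n : ℕ) (hn : 3 ≤ n)
    (hc : Fintype.card ι = Nat.choose (2 * n - 4) (n - 2) + 1) :
    ∃ f : ℕ → ι, (∀ i, i + 1 < n → f i < f (i + 1)) ∧
      ∀ j < n, ∃ x, ∀ i < n, i ≠ j → h (f i) x < h (f j) x := by
  have e : n - 2 + (n - 2) = 2 * n - 4 := by lia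
  have e2 : n - 2 + 2 = n := by lia
  have := cups_caps (fun i j k => t j k < t i j) (fun i j k => s i j < s j k)
    (fun i j k => H.cap_or_cup) _ (n - 2) (n - 2) rfl Finset.univ
    (by rw [e, Finset.card_univ, hc]; lia)
  rw [e2] at this
  rcases this with ⟨f, -, h1, h2⟩ | ⟨f, -, h1, h2⟩
  · exact ⟨f, h1, H.chain n f h1 h2⟩
  · refine ⟨f, h1, ?_⟩
    intro j hj
    obtain ⟨x, hx⟩ := H.flip.chain n f h1 (fun i hi => neg_lt_neg (h2 i hi)) j hj
    exact ⟨-x, hx⟩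

/-! ### Support functions -/

def sp (X Y : Plane → ℝ) (A : Set Plane) (θ : ℝ) : ℝ :=
  sSup ((fun x => Real.cos θ * X x + Real.sin θ * Y x) '' A)

section sp
variable {X Y : Plane → ℝ} {A B : Set Plane}

theorem sp_cont (hX : Continuous X) (hY : Continuous Y) (hA : IsCompact A) :
    Continuous (sp X Y A) := by
  apply IsCompact.continuous_sSup hA
  simp only [Function.HasUncurry.uncurry]
  fun_prop

theorem sp_le (hX : Continuous X) (hY : Continuous Y) (hA : IsCompact A) (θ : ℝ) {x : Plane}
    (hx : x ∈ A) : Real.cos θ * X x + Real.sin θ * Y x ≤ sp X Y A θ := by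
  apply le_csSup
  · exact (hA.image (f := fun x => Real.cos θ * X x + Real.sin θ * Y x) (by fun_prop)).bddAbove
  · exact ⟨x, hx, rfl⟩

theorem sp_ex (hX : Continuous X) (hY : Continuous Y) (hA : IsCompact A) (hne : A.Nonempty)
    (θ : ℝ) : ∃ x ∈ A, Real.cos θ * X x + Real.sin θ * Y x = sp X Y A θ :=
  (hA.image (f := fun x => Real.cos θ * X x + Real.sin θ * Y x) (by fun_prop)).sSup_mem
    (hne.image _)

theorem sp_per : Function.Periodic (sp X Y A) (2 * Real.pi) := by
  intro θ
  simp [sp]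

theorem sp_neg (θ : ℝ) : sp X (fun x => - Y x) A θ = sp X Y A (-θ) := by
  simp [sp]

theorem sp_mono (hX : Continuous X) (hY : Continuous Y) (hA : IsCompact A) (hB : IsCompact B)
    (hA' : A.Nonempty) (hB' : B.Nonempty) {u c : ℝ}
    (h1 : ∀ a ∈ A, Real.cos u * X a + Real.sin u * Y a < c)
    (h2 : ∀ b ∈ B, c < Real.cos u * X b + Real.sin u * Y b)
    {x x' : ℝ} (hx : u < x) (hx' : x < x') (hx2 : x' < u + Real.pi)
    (hle : sp X Y B x ≤ sp X Y A x) : sp X Y B x' < sp X Y A x' := by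
  obtain ⟨a, ha, ea⟩ := sp_ex hX hY hA hA' x
  obtain ⟨b, hb, eb⟩ := sp_ex hX hY hB hB' x'
  have hP : 0 < Real.sin (x - u) := Real.sin_pos_of_pos_of_lt_pi (by linarith) (by linarith)
  have hQ : 0 < Real.sin (x' - u) := Real.sin_pos_of_pos_of_lt_pi (by linarith) (by linarith)
  have hR : 0 < Real.sin (x' - x) := Real.sin_pos_of_pos_of_lt_pi (by linarith) (by linarith)
  have i1 : Real.sin (x - u) * Real.cos x' =
      Real.sin (x' - u) * Real.cos x - Real.sin (x' - x) * Real.cos u := by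
    simp only [Real.sin_sub]; ring
  have i2 : Real.sin (x - u) * Real.sin x' =
      Real.sin (x' - u) * Real.sin x - Real.sin (x' - x) * Real.sin u := by
    simp only [Real.sin_sub]; ring
  have key : ∀ y : Plane, Real.sin (x - u) * (Real.cos x' * X y + Real.sin x' * Y y) =
      Real.sin (x' - u) * (Real.cos x * X y + Real.sin x * Y y) -
      Real.sin (x' - x) * (Real.cos u * X y + Real.sin u * Y y) := by
    intro y
    linear_combination X y * i1 + Y y * i2
  have ka := key a
  have kb := key b
  rw [eb] at kb
  rw [ea] at ka
  have a1 := mul_lt_mul_of_pos_left (h1 a ha) hR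
  have b1 := mul_lt_mul_of_pos_left (h2 b hb) hR
  have a2 := mul_le_mul_of_nonneg_left (sp_le hX hY hA x' ha) hP.le
  have b2 := mul_le_mul_of_nonneg_left (sp_le hX hY hB x hb) hQ.le
  have m := mul_le_mul_of_nonneg_left hle hQ.le
  refine lt_of_mul_lt_mul_left (a := Real.sin (x - u)) ?_ hP.le
  linarith

theorem sp_half (hX : Continuous X) (hY : Continuous Y) (hA : IsCompact A) (hB : IsCompact B)
    (hA' : A.Nonempty) (hB' : B.Nonempty) {u c : ℝ}
    (h1 : ∀ a ∈ A, Real.cos u * X a + Real.sin u * Y a < c)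
    (h2 : ∀ b ∈ B, c < Real.cos u * X b + Real.sin u * Y b) :
    ∃ t, u < t ∧ t < u + Real.pi ∧ sp X Y A t = sp X Y B t ∧
      (∀ x, u ≤ x → x < t → sp X Y A x < sp X Y B x) ∧
      (∀ x, t < x → x ≤ u + Real.pi → sp X Y B x < sp X Y A x) := by
  have hu : sp X Y A u < sp X Y B u := by
    obtain ⟨a, ha, ea⟩ := sp_ex hX hY hA hA' u
    obtain ⟨b, hb⟩ := hB'
    have := sp_le hX hY hB u hb
    have := h1 a ha
    have := h2 b hb
    linarith
  have hu' : sp X Y B (u + Real.pi) < sp X Y A (u + Real.pi) := by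
    obtain ⟨b, hb, eb⟩ := sp_ex hX hY hB hB' (u + Real.pi)
    obtain ⟨a, ha⟩ := hA'
    have := sp_le hX hY hA (u + Real.pi) ha
    have := h1 a ha
    have := h2 b hb
    simp only [Real.cos_add_pi, Real.sin_add_pi] at *
    linarith
  have hpi := Real.pi_pos
  have hc : ContinuousOn (fun x => sp X Y A x - sp X Y B x) (Icc u (u + Real.pi)) :=
    ((sp_cont hX hY hA).sub (sp_cont hX hY hB)).continuousOn
  obtain ⟨t, ⟨ht1, ht2⟩, ht⟩ := intermediate_value_Ioo (by linarith) hc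
    (show (0 : ℝ) ∈ Ioo _ _ from ⟨by linarith, by linarith⟩)
  have ht' : sp X Y A t = sp X Y B t := by simpa [sub_eq_zero] using ht
  refine ⟨t, ht1, ht2, ht', ?_, ?_⟩
  · intro x hx hxt
    rcases eq_or_lt_of_le hx with rfl | hx
    · exact hu
    by_contra hcon
    have := sp_mono hX hY hA hB hA' hB' h1 h2 hx hxt ht2 (not_lt.mp hcon)
    linarith
  · intro x hx hxt
    rcases eq_or_lt_of_le hxt with rfl | hxt
    · exact hu'
    exact sp_mono hX hY hA hB hA' hB' h1 h2 ht1 hx hxt ht'.ge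

theorem sp_pair (hX : Continuous X) (hY : Continuous Y) (hA : IsCompact A) (hB : IsCompact B)
    (hA' : A.Nonempty) (hB' : B.Nonempty) {u c : ℝ}
    (h1 : ∀ a ∈ A, Real.cos u * X a + Real.sin u * Y a < c)
    (h2 : ∀ b ∈ B, c < Real.cos u * X b + Real.sin u * Y b) :
    ∃ s t, u - Real.pi < s ∧ s < u ∧ u < t ∧ t < u + Real.pi ∧
      sp X Y A s = sp X Y B s ∧ sp X Y A t = sp X Y B t ∧
      (∀ x, s < x → x < t → sp X Y A x < sp X Y B x) ∧
      (∀ x, t < x → x < s + 2 * Real.pi → sp X Y B x < sp X Y A x) := by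
  obtain ⟨t, t1, t2, t3, t4, t5⟩ := sp_half hX hY hA hB hA' hB' h1 h2
  obtain ⟨s, s1, s2, s3, s4, s5⟩ := sp_half (u := -u) (c := c) (Y := fun x => - Y x)
    hX hY.neg hA hB hA' hB' (by simpa using h1) (by simpa using h2)
  simp only [sp_neg] at s3 s4 s5
  refine ⟨-s, t, by linarith, by linarith, t1, t2, s3, t3, ?_, ?_⟩
  · intro x hx hx'
    rcases le_or_gt u x with h | h
    · exact t4 x h hx'
    · have := s4 (-x) (by linarith) (by linarith)
      simpa using this
  · intro x hx hx'
    rcases le_or_gt x (u + Real.pi) with h | h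
    · exact t5 x hx h
    · have := s5 (-(x - 2 * Real.pi)) (by linarith) (by linarith)
      rw [neg_neg, sp_per.sub_eq, sp_per.sub_eq] at this
      exact this

end sp

theorem exists_sep {X Y : Plane →ₗ[ℝ] ℝ}
    (hXY : ∀ f : Plane →L[ℝ] ℝ, ∃ α β : ℝ, ∀ x, f x = α * X x + β * Y x)
    {A B : Set Plane} (hA : ConvexBody2 A) (hB : ConvexBody2 B) (hd : Disjoint A B)
    {p q : Plane} (hp : p ∈ A) (hq : q ∈ B) (hY : Y p = Y q) (hX : X p < X q) :
    ∃ u c : ℝ, -(Real.pi / 2) < u ∧ u < Real.pi / 2 ∧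
      (∀ a ∈ A, Real.cos u * X a + Real.sin u * Y a < c) ∧
      (∀ b ∈ B, c < Real.cos u * X b + Real.sin u * Y b) := by
  obtain ⟨f, v, w, h1, hvw, h2⟩ := geometric_hahn_banach_compact_closed hA.2.2 hA.2.1 hB.2.2
    hB.2.1.isClosed hd
  obtain ⟨α, β, hf⟩ := hXY f
  have hα : 0 < α := by
    have a1 := h1 p hp
    have a2 := h2 q hq
    rw [hf] at a1 a2
    rw [hY] at a1
    have : 0 < α * (X q - X p) := by linarith
    exact pos_of_mul_pos_left this (by linarith)
  set u := Real.arctan (β / α) with hu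
  have hc : 0 < Real.cos u := Real.cos_arctan_pos _
  have hs : Real.sin u * α = Real.cos u * β := by
    have := Real.tan_arctan (β / α)
    rw [← hu, Real.tan_eq_sin_div_cos, div_eq_div_iff hc.ne' hα.ne'] at this
    linarith
  have key : ∀ x, Real.cos u * X x + Real.sin u * Y x = Real.cos u / α * f x := by
    intro x
    rw [hf]
    field_simp
    linear_combination Y x * hs
  have hk : 0 < Real.cos u / α := div_pos hc hα
  refine ⟨u, Real.cos u / α * v, Real.neg_pi_div_two_lt_arctan _, Real.arctan_lt_pi_div_two _,
    ?_, ?_⟩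
  · intro a ha
    rw [key]
    exact mul_lt_mul_of_pos_left (h1 a ha) hk
  · intro b hb
    rw [key]
    exact mul_lt_mul_of_pos_left (hvw.trans (h2 b hb)) hk

theorem exists_dir_s9 {X Y : Plane →ₗ[ℝ] ℝ}
    (hXY : ∀ f : Plane →L[ℝ] ℝ, ∃ α β : ℝ, ∀ x, f x = α * X x + β * Y x)
    (hXc : Continuous X) (hYc : Continuous Y)
    {A B C : Set Plane} (hA : ConvexBody2 A) (hB : ConvexBody2 B) (hC : ConvexBody2 C)
    (hAB : A ≠ B) (hAC : A ≠ C) (h : ConvexPos {A, B, C}) :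
    ∃ x, sp X Y B x < sp X Y A x ∧ sp X Y C x < sp X Y A x := by
  have h0 := h A (by simp)
  have e1 : ({A, B, C} : Set (Set Plane)) \ {A} = {B, C} := by
    ext D
    simp only [mem_diff, mem_insert_iff, mem_singleton_iff]
    constructor
    · tauto
    · rintro (rfl | rfl)
      · exact ⟨by tauto, hAB.symm⟩
      · exact ⟨by tauto, hAC.symm⟩
  rw [e1, sUnion_insert, sUnion_insert, sUnion_singleton] at h0
  have hK : IsCompact (convexHull ℝ (B ∪ C)) := by
    rw [hB.2.2.convexHull_union hC.2.2 hB.1 hC.1]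
    have hI := ((hB.2.1.prod (hC.2.1.prod (isCompact_Icc (a := (0 : ℝ)) (b := 1)))).image
      (f := fun q : Plane × Plane × ℝ => (1 - q.2.2) • q.1 + q.2.2 • q.2.1) (by fun_prop))
    convert hI using 1
    ext z
    simp only [mem_convexJoin, segment_eq_image, mem_image, mem_prod, Prod.exists]
    constructor
    · rintro ⟨b, hb, c, hc, r, hr, rfl⟩
      exact ⟨b, c, r, ⟨hb, hc, hr⟩, rfl⟩
    · rintro ⟨b, c, r, ⟨hb, hc, hr⟩, rfl⟩
      exact ⟨b, hb, c, hc, r, hr, rfl⟩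
  obtain ⟨a, ha, haK⟩ : ∃ a ∈ A, a ∉ convexHull ℝ (B ∪ C) := by
    by_contra hcon
    push Not at hcon
    apply h0
    apply subset_antisymm
    · apply convexHull_min _ (convex_convexHull _ _)
      exact union_subset hcon (subset_convexHull _ _)
    · exact convexHull_mono subset_union_right
  obtain ⟨f, v, h1, h2⟩ := geometric_hahn_banach_closed_point (convex_convexHull ℝ _)
    hK.isClosed haK
  obtain ⟨α, β, hf⟩ := hXY f
  have hBC : ∀ x ∈ B ∪ C, f x < f a := fun x hx => (h1 x (subset_convexHull _ _ hx)).trans h2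
  set z : ℂ := ⟨α, β⟩ with hz
  have hre : ‖z‖ * Real.cos z.arg = α := Complex.norm_mul_cos_arg z
  have him : ‖z‖ * Real.sin z.arg = β := Complex.norm_mul_sin_arg z
  have key : ∀ x, f x = ‖z‖ * (Real.cos z.arg * X x + Real.sin z.arg * Y x) := by
    intro x
    rw [hf]
    linear_combination -X x * hre - Y x * him
  have fin : ∀ D : Set Plane, ConvexBody2 D → D ⊆ B ∪ C → sp X Y D z.arg < sp X Y A z.arg := by
    intro D hD hDs
    obtain ⟨d, hd, ed⟩ := sp_ex hXc hYc hD.2.1 hD.1 z.arg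
    have l := hBC d (hDs hd)
    rw [key, key] at l
    have l2 := lt_of_mul_lt_mul_left l (norm_nonneg _)
    have l3 := sp_le hXc hYc hA.2.1 z.arg ha
    linarith
  exact ⟨z.arg, fin B hB subset_union_left, fin C hC subset_union_right⟩

theorem sup_sys {ι : Type} [LinearOrder ι] {X Y : Plane →ₗ[ℝ] ℝ}
    (hXY : ∀ f : Plane →L[ℝ] ℝ, ∃ α β : ℝ, ∀ x, f x = α * X x + β * Y x)
    (hXc : Continuous X) (hYc : Continuous Y)
    (A : ι → Set Plane) (hA : ∀ i, ConvexBody2 (A i)) (hd : ∀ i j, i ≠ j → Disjoint (A i) (A j))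
    (p : ι → Plane) (hp : ∀ i, p i ∈ A i) (hYp : ∀ i j, Y (p i) = Y (p j))
    (hXp : ∀ i j, i < j → X (p i) < X (p j))
    (hgp : ∀ i j k, i ≠ j → i ≠ k → j ≠ k → ConvexPos {A i, A j, A k})
    (hinj : ∀ i j, i ≠ j → A i ≠ A j) :
    ∃ u s t, SupSys (fun i => sp X Y (A i)) u s t := by
  have H1 : ∀ i j, ∃ u c : ℝ, i < j → -(Real.pi / 2) < u ∧ u < Real.pi / 2 ∧
      (∀ a ∈ A i, Real.cos u * X a + Real.sin u * Y a < c) ∧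
      (∀ b ∈ A j, c < Real.cos u * X b + Real.sin u * Y b) := by
    intro i j
    by_cases hij : i < j
    · obtain ⟨u, c, h⟩ := exists_sep hXY (hA i) (hA j) (hd i j hij.ne) (hp i) (hp j) (hYp i j)
        (hXp i j hij)
      exact ⟨u, c, fun _ => h⟩
    · exact ⟨0, 0, fun h => absurd h hij⟩
  choose u c H1 using H1
  have H2 : ∀ i j, ∃ s t : ℝ, i < j → u i j - Real.pi < s ∧ s < u i j ∧ u i j < t ∧
      t < u i j + Real.pi ∧
      sp X Y (A i) s = sp X Y (A j) s ∧ sp X Y (A i) t = sp X Y (A j) t ∧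
      (∀ x, s < x → x < t → sp X Y (A i) x < sp X Y (A j) x) ∧
      (∀ x, t < x → x < s + 2 * Real.pi → sp X Y (A j) x < sp X Y (A i) x) := by
    intro i j
    by_cases hij : i < j
    · obtain ⟨s, t, h⟩ := sp_pair hXc hYc (hA i).2.1 (hA j).2.1 (hA i).1 (hA j).1
        (H1 i j hij).2.2.1 (H1 i j hij).2.2.2
      exact ⟨s, t, fun _ => h⟩
    · exact ⟨0, 0, fun h => absurd h hij⟩
  choose s t H2 using H2
  -- elementary sign computation
  have sgn : ∀ v w x y : ℝ, 0 < Real.cos v → 0 < Real.cos w → 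
      0 ≤ Real.cos w * x + Real.sin w * y → Real.cos v * x + Real.sin v * y < 0 →
      0 < y * Real.sin (w - v) := by
    intro v w x y hv hw h1 h2
    rw [Real.sin_sub]
    have := mul_nonneg hv.le h1
    have := mul_neg_of_pos_of_neg hw h2
    nlinarith
  refine ⟨u, s, t, ?_⟩
  constructor
  · exact fun i => sp_per
  · exact fun i j h => (H1 i j h).1
  · exact fun i j h => (H1 i j h).2.1
  · exact fun i j h => (H2 i j h).1
  · exact fun i j h => (H2 i j h).2.1
  · exact fun i j h => (H2 i j h).2.2.1
  · exact fun i j h => (H2 i j h).2.2.2.1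
  · exact fun i j h => (H2 i j h).2.2.2.2.2.2.1
  · exact fun i j h => (H2 i j h).2.2.2.2.2.2.2
  · exact fun i j h => (H2 i j h).2.2.2.2.1
  · exact fun i j h => (H2 i j h).2.2.2.2.2.1
  · intro i j k hij hik x hx1 hx2 hj hk hu1 hu2
    obtain ⟨a, ha, ea⟩ := sp_ex hXc hYc (hA i).2.1 (hA i).1 x
    obtain ⟨b1, b2, b3, b4⟩ := H1 i j hij
    obtain ⟨c1, c2, c3, c4⟩ := H1 i k hik
    have hcx : 0 < Real.cos x := Real.cos_pos_of_mem_Ioo ⟨hx1, hx2⟩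
    have l1 := sp_le hXc hYc (hA j).2.1 x (hp j)
    have l2 := sp_le hXc hYc (hA k).2.1 x (hp k)
    have m1 := b3 a ha
    have m1' := b4 _ (hp j)
    have m2 := c3 a ha
    have m2' := c4 _ (hp k)
    have r1 := sgn (u i j) x (X a - X (p j)) (Y a - Y (p j))
      (Real.cos_pos_of_mem_Ioo ⟨b1, b2⟩) hcx (by linarith) (by linarith)
    have r2 := sgn (u i k) x (X a - X (p k)) (Y a - Y (p k))
      (Real.cos_pos_of_mem_Ioo ⟨c1, c2⟩) hcx (by linarith) (by linarith)
    have p1 : 0 < Real.sin (x - u i j) :=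
      Real.sin_pos_of_pos_of_lt_pi (by linarith) (by linarith)
    have p2 : Real.sin (x - u i k) < 0 :=
      Real.sin_neg_of_neg_of_neg_pi_lt (by linarith) (by linarith)
    rw [hYp k j] at r2
    have y1 := pos_of_mul_pos_left r1 p1.le
    have y2 := mul_neg_of_pos_of_neg y1 p2
    linarith
  · intro i j k hik hjk x' hx1 hx2 hi hj hu1 hu2
    obtain ⟨x, rfl⟩ : ∃ x, x' = x + Real.pi := ⟨x' - Real.pi, by ring⟩
    obtain ⟨a, ha, ea⟩ := sp_ex hXc hYc (hA k).2.1 (hA k).1 (x + Real.pi)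
    obtain ⟨b1, b2, b3, b4⟩ := H1 i k hik
    obtain ⟨c1, c2, c3, c4⟩ := H1 j k hjk
    have hcx : 0 < Real.cos x := Real.cos_pos_of_mem_Ioo ⟨by linarith, by linarith⟩
    have l1 := sp_le hXc hYc (hA i).2.1 (x + Real.pi) (hp i)
    have l2 := sp_le hXc hYc (hA j).2.1 (x + Real.pi) (hp j)
    have m1 := b4 a ha
    have m1' := b3 _ (hp i)
    have m2 := c4 a ha
    have m2' := c3 _ (hp j)
    rw [Real.cos_add_pi, Real.sin_add_pi] at ea l1 l2
    have r1 := sgn (u i k) x (X (p i) - X a) (Y (p i) - Y a)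
      (Real.cos_pos_of_mem_Ioo ⟨b1, b2⟩) hcx (by linarith) (by linarith)
    have r2 := sgn (u j k) x (X (p j) - X a) (Y (p j) - Y a)
      (Real.cos_pos_of_mem_Ioo ⟨c1, c2⟩) hcx (by linarith) (by linarith)
    have p1 : 0 < Real.sin (x - u i k) :=
      Real.sin_pos_of_pos_of_lt_pi (by linarith) (by linarith)
    have p2 : Real.sin (x - u j k) < 0 :=
      Real.sin_neg_of_neg_of_neg_pi_lt (by linarith) (by linarith)
    rw [hYp j i] at r2
    have y1 := pos_of_mul_pos_left r1 p1.le
    have y2 := mul_neg_of_pos_of_neg y1 p2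
    linarith
  · intro i j k hij hik hjk
    exact exists_dir_s9 hXY hXc hYc (hA i) (hA j) (hA k) (hinj i j hij) (hinj i k hik)
      (hgp i j k hij hik hjk)

def coX (d : Plane) : Plane →ₗ[ℝ] ℝ where
  toFun x := d 0 * x 0 + d 1 * x 1
  map_add' x y := by simp; ring
  map_smul' r x := by simp; ring

def coY (d : Plane) : Plane →ₗ[ℝ] ℝ where
  toFun x := d 0 * x 1 - d 1 * x 0
  map_add' x y := by simp; ring
  map_smul' r x := by simp; ring

theorem co_pos {d : Plane} (hd : d ≠ 0) : 0 < d 0 * d 0 + d 1 * d 1 := by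
  by_contra hcon
  apply hd
  have h0 : d 0 = 0 := by nlinarith [mul_self_nonneg (d 0), mul_self_nonneg (d 1)]
  have h1 : d 1 = 0 := by nlinarith [mul_self_nonneg (d 0), mul_self_nonneg (d 1)]
  ext i
  fin_cases i
  · simpa using h0
  · simpa using h1

theorem co_repr {d : Plane} (hd : d ≠ 0) (f : Plane →L[ℝ] ℝ) :
    ∃ α β : ℝ, ∀ x, f x = α * coX d x + β * coY d x := by
  have hD := co_pos hd
  let e0 : Plane := !₂[1, 0]
  let e1 : Plane := !₂[0, 1]
  have hx : ∀ x : Plane, x = x 0 • e0 + x 1 • e1 := by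
    intro x
    ext i
    fin_cases i <;> simp [e0, e1]
  refine ⟨(f e0 * d 0 + f e1 * d 1) / (d 0 * d 0 + d 1 * d 1),
    (f e1 * d 0 - f e0 * d 1) / (d 0 * d 0 + d 1 * d 1), fun x => ?_⟩
  have : f x = x 0 * f e0 + x 1 * f e1 := by
    conv_lhs => rw [hx x]
    simp
  rw [this]
  simp only [coX, coY, LinearMap.coe_mk, AddHom.coe_mk]
  rw [div_mul_eq_mul_div, div_mul_eq_mul_div, ← add_div, eq_div_iff hD.ne']
  ring

theorem co_inj {d : Plane} (hd : d ≠ 0) {x y : Plane} (h1 : coX d x = coX d y)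
    (h2 : coY d x = coY d y) : x = y := by
  have hD := co_pos hd
  simp only [coX, coY, LinearMap.coe_mk, AddHom.coe_mk] at h1 h2
  have a0 : (d 0 * d 0 + d 1 * d 1) * x 0 = (d 0 * d 0 + d 1 * d 1) * y 0 := by
    linear_combination d 0 * h1 - d 1 * h2
  have a1 : (d 0 * d 0 + d 1 * d 1) * x 1 = (d 0 * d 0 + d 1 * d 1) * y 1 := by
    linear_combination d 1 * h1 + d 0 * h2
  ext i
  fin_cases i
  · exact mul_left_cancel₀ hD.ne' a0
  · exact mul_left_cancel₀ hD.ne' a1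

/-- Pach–Tóth: disjoint convex bodies with a common transversal line contain `n`
members in convex position. -/
theorem convex_position_of_transversal_line :
    ∀ n : ℕ, 3 ≤ n → ∀ F : Set (Set Plane), F.Finite →
      F.ncard = Nat.choose (2 * n - 4) (n - 2) + 1 →
      (∀ A ∈ F, ConvexBody2 A) → F.Pairwise Disjoint → GenPos F →
      (∃ L : AffineSubspace ℝ Plane, TransversalLine L F) →
      ∃ G ⊆ F, G.ncard = n ∧ ConvexPos G := by
  classical
  rintro n hn F hF hcard hbody hdisj hgen ⟨L, hL, hLF⟩
  obtain ⟨⟨d, hdL⟩, hd0, hdspan⟩ := finrank_eq_one_iff'.mp hL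
  have hd : d ≠ 0 := by
    intro h
    exact hd0 (Subtype.ext h)
  have hYL : ∀ x ∈ L, ∀ y ∈ L, coY d x = coY d y := by
    intro x hx y hy
    obtain ⟨c, hc⟩ := hdspan ⟨x -ᵥ y, AffineSubspace.vsub_mem_direction hx hy⟩
    have hc' : c • d = x - y := congrArg Subtype.val hc
    have : coY d (x - y) = 0 := by
      rw [← hc', map_smul]
      simp [coY]
      right; ring
    rw [map_sub] at this
    linarith
  have hXc : Continuous (coX d) := LinearMap.continuous_of_finiteDimensional _
  have hYc : Continuous (coY d) := LinearMap.continuous_of_finiteDimensional _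
  have hp : ∀ A : Set Plane, ∃ p : Plane, A ∈ F → p ∈ L ∧ p ∈ A := by
    intro A
    by_cases hA : A ∈ F
    · obtain ⟨p, h⟩ := hLF A hA
      exact ⟨p, fun _ => h⟩
    · exact ⟨0, fun h => absurd h hA⟩
  choose p hp using hp
  have hkey : Set.InjOn (fun A => coX d (p A)) F := by
    intro A hA B hB hAB
    by_contra hne
    have e := co_inj hd hAB (hYL _ (hp A hA).1 _ (hp B hB).1)
    exact Set.disjoint_left.mp (hdisj hA hB hne) (hp A hA).2 (e ▸ (hp B hB).2)
  let S : Finset ℝ := hF.toFinset.image (fun A => coX d (p A))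
  have hS : S.card = Nat.choose (2 * n - 4) (n - 2) + 1 := by
    rw [Finset.card_image_of_injOn (by simpa using hkey), ← hcard, Set.ncard_eq_toFinset_card F hF]
  have hA : ∀ i : Fin (Nat.choose (2 * n - 4) (n - 2) + 1), ∃ A ∈ F,
      coX d (p A) = S.orderEmbOfFin hS i := by
    intro i
    have := S.orderEmbOfFin_mem hS i
    obtain ⟨A, hA, e⟩ := Finset.mem_image.mp this
    exact ⟨A, hF.mem_toFinset.mp hA, e⟩
  choose A hAF hAe using hA
  have hinj : ∀ i j, i ≠ j → A i ≠ A j := by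
    intro i j hij h
    apply hij
    apply (S.orderEmbOfFin hS).injective
    rw [← hAe, ← hAe, h]
  obtain ⟨u, s, t, H⟩ := sup_sys (co_repr hd) hXc hYc A (fun i => hbody _ (hAF i))
    (fun i j hij => hdisj (hAF i) (hAF j) (hinj i j hij)) (fun i => p (A i))
    (fun i => (hp _ (hAF i)).2) (fun i j => hYL _ (hp _ (hAF i)).1 _ (hp _ (hAF j)).1)
    (fun i j hij => by
      simp only [hAe]
      exact (S.orderEmbOfFin hS).strictMono hij)
    (fun i j k hij hik hjk => hgen _
      (by
        rintro B (rfl | rfl | rfl)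
        · exact hAF _
        · exact hAF _
        · exact hAF _)
      (Set.ncard_eq_three.mpr ⟨_, _, _, hinj i j hij, hinj i k hik, hinj j k hjk, rfl⟩))
    hinj
  obtain ⟨f, hf1, hf2⟩ := H.main n hn (by simp)
  have hfne : ∀ i < n, ∀ j < n, i ≠ j → A (f i) ≠ A (f j) := by
    intro i hi j hj hij h
    obtain ⟨x, hx⟩ := hf2 j hj
    have := hx i hi hij
    rw [h] at this
    exact lt_irrefl _ this
  refine ⟨(fun i => A (f i)) '' (Finset.range n : Set ℕ), ?_, ?_, ?_⟩
  · rintro _ ⟨i, -, rfl⟩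
    exact hAF _
  · rw [Set.ncard_image_of_injOn, Set.ncard_coe_finset, Finset.card_range]
    intro i hi j hj h
    by_contra hij
    exact hfne i (by simpa using hi) j (by simpa using hj) hij h
  · rintro _ ⟨j, hj, rfl⟩ heq
    have hj : j < n := by simpa using hj
    obtain ⟨x, hx⟩ := hf2 j hj
    obtain ⟨a, ha, ea⟩ := sp_ex hXc hYc (hbody _ (hAF (f j))).2.1 (hbody _ (hAF (f j))).1 x
    have h1 : a ∈ convexHull ℝ (⋃₀ ((fun i => A (f i)) '' (Finset.range n : Set ℕ))) :=
      subset_convexHull _ _ ⟨A (f j), ⟨j, by simpa using hj, rfl⟩, ha⟩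
    rw [heq] at h1
    let g : Plane →ₗ[ℝ] ℝ := Real.cos x • coX d + Real.sin x • coY d
    have hg : ∀ y, g y = Real.cos x * coX d y + Real.sin x * coY d y := fun y => by simp [g]
    have hconv : Convex ℝ {y | g y < sp (coX d) (coY d) (A (f j)) x} :=
      convex_halfSpace_lt g.isLinear _
    have hsub := convexHull_min (𝕜 := ℝ)
      (s := ⋃₀ ((fun i => A (f i)) '' (Finset.range n : Set ℕ) \ {A (f j)})) ?_ hconv
    · have := hsub h1
      rw [mem_setOf_eq, hg, ea] at this
      exact lt_irrefl _ this
    · rintro y ⟨_, ⟨⟨i, hi, rfl⟩, hne⟩, hy⟩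
      have hij : i ≠ j := by
        rintro rfl
        exact hne rfl
      have l := hx i (by simpa using hi) hij
      rw [mem_setOf_eq, hg]
      exact (sp_le hXc hYc (hbody _ (hAF (f i))).2.1 x hy).trans_lt l
end
end
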